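/- arXiv:math/0605683 — 8 statements merged into one kernel-verified Lean document; each statement's English description precedes it below -/
import Mathlib

section
/- Let A be a nonzero commutative local ring and t ∈ A a nonzerodivisor lying in the maximal ideal, such that every finitely generated ideal of A containing some power of t is principal. Then 𝔓 := ⋂_{n ≥ 0} (t^n) (the intersection of the principal ideals generated by the powers of t) is a prime ideal of A. -/
/-!
An element outside `(t ^ n)` divides `t ^ n` (`dvd_pow_of_not_pow_dvd`). Hence if `a` and `b` both
lie outside `⋂ₙ (t ^ n)`, their product divides some `t ^ k`. Were `a * b` in the intersection, it
would be a multiple of `t ^ (k + 1)`, so `t ^ (k + 1) ∣ t ^ k`, making the regular element `t` a unit.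
-/

/-- The ideal `(a, t ^ n)` is generated by one element `d`, which is regular because it divides
`t ^ n`. Dividing by `d` turns a Bézout relation for `a` and `t ^ n` into one equal to `1`, so by
locality one of the cofactors is a unit. -/
theorem dvd_pow_of_not_pow_dvd {A : Type*} [CommRing A] [IsLocalRing A]
    {t : A} (ht_reg : t ∈ nonZeroDivisors A)
    (h_prin : ∀ J : Ideal A, J.FG → (∃ n : ℕ, t ^ n ∈ J) → J.IsPrincipal)
    {a : A} {n : ℕ} (ha : ¬ t ^ n ∣ a) : a ∣ t ^ n := by
  have ht : t ^ n ∈ Ideal.span {a, t ^ n} := Ideal.subset_span (by simp)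
  obtain ⟨d, hd⟩ := (h_prin (Ideal.span {a, t ^ n})
    (Submodule.fg_span (Set.toFinite _)) ⟨n, ht⟩).principal
  rw [Ideal.submodule_span_eq] at hd
  obtain ⟨a', ha'⟩ : d ∣ a := by
    rw [← Ideal.mem_span_singleton, ← hd]
    exact Ideal.subset_span (by simp)
  obtain ⟨s, hs⟩ : d ∣ t ^ n := by
    rwa [← Ideal.mem_span_singleton, ← hd]
  obtain ⟨x, y, hxy⟩ : ∃ x y, x * a + y * t ^ n = d := by
    rw [← Ideal.mem_span_pair, hd]
    exact Ideal.mem_span_singleton_self d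
  have hd_reg : d ∈ nonZeroDivisors A := by
    have h := pow_mem ht_reg n
    rw [hs] at h
    exact (mul_mem_nonZeroDivisors.mp h).1
  have h1 : x * a' + y * s = 1 := by
    rw [← mul_cancel_left_mem_nonZeroDivisors hd_reg]
    linear_combination hxy - x * ha' - y * hs
  rcases IsLocalRing.isUnit_or_isUnit_of_add_one h1 with h | h
  · rw [ha', hs, (isUnit_of_mul_isUnit_right h).mul_right_dvd]
    exact dvd_mul_right d s
  · refine absurd ?_ ha
    rw [ha', hs, (isUnit_of_mul_isUnit_right h).mul_right_dvd]
    exact dvd_mul_right d a'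


/-- Part (i) of Fujiwara's structure result (Proposition 3.7) for local `t`-valuative rings:
if `A` is a (nonzero) commutative local ring, `t` a nonzerodivisor in the maximal ideal,
and every finitely generated ideal containing a power of `t` is principal, then
`𝔓 = ⋂ₙ (tⁿ)` is a prime ideal. -/
theorem stmt_0 {A : Type*} [CommRing A] [IsLocalRing A]
    (t : A) (ht_mem : t ∈ IsLocalRing.maximalIdeal A) (ht_reg : t ∈ nonZeroDivisors A)
    (h_prin : ∀ J : Ideal A, J.FG → (∃ n : ℕ, t ^ n ∈ J) → J.IsPrincipal) :
    (⨅ n : ℕ, Ideal.span {t ^ n}).IsPrime := by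
  have ht : ¬ IsUnit t := (IsLocalRing.mem_maximalIdeal t).mp ht_mem
  have mem_iff (x : A) : x ∈ (⨅ n : ℕ, Ideal.span {t ^ n}) ↔ ∀ n : ℕ, t ^ n ∣ x := by
    simp [Submodule.mem_iInf, Ideal.mem_span_singleton]
  refine Ideal.isPrime_iff.mpr ⟨fun h => ?_, fun {a b} hab => ?_⟩
  · rw [Ideal.eq_top_iff_one, mem_iff] at h
    exact ht (isUnit_of_dvd_one (by simpa using h 1))
  · simp only [mem_iff] at hab ⊢
    by_contra! h
    obtain ⟨⟨n, hn⟩, ⟨m, hm⟩⟩ := h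
    have hdvd : a * b ∣ t ^ (n + m) := by
      rw [pow_add]
      exact mul_dvd_mul (dvd_pow_of_not_pow_dvd ht_reg h_prin hn)
        (dvd_pow_of_not_pow_dvd ht_reg h_prin hm)
    obtain ⟨c, hc⟩ := (hab (n + m + 1)).trans hdvd
    refine ht (IsUnit.of_mul_eq_one c ?_)
    rw [← mul_cancel_left_mem_nonZeroDivisors (pow_mem ht_reg (n + m))]
    linear_combination -hc
end

section
/- Let A be a nonzero commutative local ring and t ∈ A a nonzerodivisor lying in the maximal ideal, such that every finitely generated ideal of A containing some power of t is principal. Set 𝔓 := ⋂_{n ≥ 0} (t^n). Then the localization A[1/t] of A away from t is a local ring whose maximal ideal is the ideal generated by the image of 𝔓 in A[1/t]. -/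
/-!
The powers of `t` are comparable with every element of `A` for divisibility: a generator of
`(tⁿ, a)` is regular because it divides `tⁿ`, so in the local ring `A` one of `tⁿ`, `a` already
generates that ideal. Hence an element outside `𝔓 = ⋂ₙ (tⁿ)` divides some `tⁿ` and becomes
invertible in `A[1/t]`, so every element of `A[1/t]` outside `𝔓 A[1/t]` is a unit. This ideal is
proper, since a power of `t` in `𝔓` would force `t` to be a unit of `A`. A proper ideal whose
complement consists of units is the unique maximal ideal.
-/

/-- In a local ring, a regular element that generates a principal ideal together with `a` is
comparable with `a` for divisibility. -/
lemma dvd_or_dvd_of_isPrincipal_span_pair {A : Type*} [CommRing A] [IsLocalRing A] {s a : A}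
    (hs : s ∈ nonZeroDivisors A) (h : (Ideal.span {s, a}).IsPrincipal) : s ∣ a ∨ a ∣ s := by
  obtain ⟨d, hd⟩ := h
  change _ = Ideal.span {d} at hd
  obtain ⟨x, rfl⟩ : d ∣ s := by
    rw [← Ideal.mem_span_singleton, ← hd]; exact Ideal.subset_span (by simp)
  obtain ⟨y, rfl⟩ : d ∣ a := by
    rw [← Ideal.mem_span_singleton, ← hd]; exact Ideal.subset_span (by simp)
  have hmem : d ∈ Ideal.span {d * x, d * y} := by
    rw [hd]; exact Ideal.mem_span_singleton_self d
  obtain ⟨u, v, huv⟩ := Ideal.mem_span_pair.mp hmem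
  have hd_reg : d ∈ nonZeroDivisors A := (mul_mem_nonZeroDivisors.mp hs).1
  have hone : u * x + v * y = 1 := by
    rw [← mul_cancel_left_mem_nonZeroDivisors hd_reg]
    linear_combination huv
  rcases IsLocalRing.isUnit_or_isUnit_of_add_one hone with hx | hy
  · exact .inl (mul_dvd_mul_left d (isUnit_of_mul_isUnit_right hx).dvd)
  · exact .inr (mul_dvd_mul_left d (isUnit_of_mul_isUnit_right hy).dvd)

/-- A proper ideal whose complement consists of units is the maximal ideal of a local ring. -/
lemma exists_isLocalRing_of_isUnit_of_notMem {B : Type*} [CommRing B] {I : Ideal B}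
    (hI : I ≠ ⊤) (h : ∀ x, x ∉ I → IsUnit x) :
    ∃ _ : IsLocalRing B, IsLocalRing.maximalIdeal B = I := by
  have hmem : ∀ x, x ∈ nonunits B ↔ x ∈ I := fun x =>
    ⟨fun hx => by_contra fun hxI => hx (h x hxI),
      fun hx hu => hI (Ideal.eq_top_of_isUnit_mem I hx hu)⟩
  have : Nontrivial B := nontrivial_of_ne (1 : B) 0 fun h10 =>
    hI ((Ideal.eq_top_iff_one I).mpr (h10 ▸ I.zero_mem))
  have hloc : IsLocalRing B := IsLocalRing.of_nonunits_add fun a b ha hb => by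
    rw [hmem] at *; exact I.add_mem ha hb
  exact ⟨hloc, Ideal.ext fun x => (IsLocalRing.mem_maximalIdeal x).trans (hmem x)⟩

/-- Part (ii) of Fujiwara's structure result (Proposition 3.7) for local `t`-valuative rings:
with `𝔓 = ⋂ₙ (tⁿ)`, the localization `A[1/t]` is a local ring whose maximal ideal is generated
by the image of `𝔓`. -/
theorem stmt_1 {A : Type*} [CommRing A] [IsLocalRing A]
    (t : A) (ht_mem : t ∈ IsLocalRing.maximalIdeal A) (ht_reg : t ∈ nonZeroDivisors A)
    (h_prin : ∀ J : Ideal A, J.FG → (∃ n : ℕ, t ^ n ∈ J) → J.IsPrincipal) :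
    ∃ _ : IsLocalRing (Localization.Away t),
      IsLocalRing.maximalIdeal (Localization.Away t) =
        Ideal.map (algebraMap A (Localization.Away t)) (⨅ n : ℕ, Ideal.span {t ^ n}) := by
  apply exists_isLocalRing_of_isUnit_of_notMem
  · rw [IsLocalization.map_algebraMap_ne_top_iff_disjoint (Submonoid.powers t), Set.disjoint_left]
    rintro _ ⟨k, rfl⟩ hk
    obtain ⟨c, hc⟩ := Ideal.mem_span_singleton.mp ((Submodule.mem_iInf _).mp hk (k + 1))
    refine (IsLocalRing.mem_maximalIdeal t).mp ht_mem (IsUnit.of_mul_eq_one c ?_)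
    rw [← mul_cancel_left_mem_nonZeroDivisors (pow_mem ht_reg k)]
    linear_combination -hc
  · intro x hx
    obtain ⟨a, s, rfl⟩ := IsLocalization.exists_mk'_eq (Submonoid.powers t) x
    have ha : a ∉ ⨅ n : ℕ, Ideal.span {t ^ n} := fun ha =>
      hx (IsLocalization.mk'_mem_iff.mpr (Ideal.mem_map_of_mem _ ha))
    simp only [Submodule.mem_iInf, not_forall, Ideal.mem_span_singleton] at ha
    obtain ⟨n, hn⟩ := ha
    have hdvd : a ∣ t ^ n := (dvd_or_dvd_of_isPrincipal_span_pair (pow_mem ht_reg n)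
      (h_prin _ (Submodule.fg_span (Set.toFinite _)) ⟨n, Ideal.subset_span (by simp)⟩)).resolve_left hn
    have hu : IsUnit (algebraMap A (Localization.Away t) a) :=
      isUnit_of_dvd_unit (map_dvd _ hdvd)
        (IsLocalization.map_units _ (⟨t ^ n, n, rfl⟩ : Submonoid.powers t))
    rw [← IsLocalization.mk'_spec (Localization.Away t) a s] at hu
    exact isUnit_of_mul_isUnit_left hu
end

section
/- Let A be a nonzero commutative local ring and t ∈ A a nonzerodivisor lying in the maximal ideal, such that every finitely generated ideal of A containing some power of t is principal. Set 𝔓 := ⋂_{n ≥ 0} (t^n). Then the quotient A/𝔓 is a valuation ring (in particular an integral domain), and the localization of A/𝔓 away from the image of t is a field (so it is the fraction field of A/𝔓). -/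
/-!
Divisors of powers of `t` are regular, and a principal ideal `(a, b)` with regular generator in a
local ring forces `a ∣ b` or `b ∣ a`. Hence `a` and `b` are comparable under divisibility as soon
as `a` divides a power of `t`. Comparing `a` with `t ^ n` shows that the elements outside
`𝔓 = ⋂ₙ (tⁿ)` are exactly the divisors of powers of `t`: if `t ^ (n + 1) ∣ a ∣ t ^ n`, then
cancelling `t ^ n` would make `t` a unit. All claims follow: the divisors of powers of `t` are
closed under products, so `𝔓` is prime; any two elements of `A ⧸ 𝔓` are comparable; and every
nonzero element of `A ⧸ 𝔓` divides a power of `t`, hence is invertible once `t` is.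
-/

/-- The Bézout identity `d = u a + v b` with `a = d x`, `b = d y` gives `u x + v y = 1`, so `x` or
`y` is a unit. -/
theorem dvd_or_dvd_of_dvd_pow {A : Type*} [CommRing A] [IsLocalRing A]
    {t : A} (ht_reg : t ∈ nonZeroDivisors A)
    (h_prin : ∀ J : Ideal A, J.FG → (∃ n : ℕ, t ^ n ∈ J) → J.IsPrincipal)
    {a : A} (b : A) {n : ℕ} (h : a ∣ t ^ n) : a ∣ b ∨ b ∣ a := by
  obtain ⟨d, hd⟩ := h_prin (Ideal.span {a, b}) (Submodule.fg_span (Set.toFinite _))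
    ⟨n, Ideal.mem_of_dvd _ h (Ideal.subset_span (by simp))⟩
  have hd' : Ideal.span {a, b} = Ideal.span {d} := hd
  have ha : a ∈ Ideal.span {d} := hd' ▸ Ideal.subset_span (by simp)
  have hb : b ∈ Ideal.span {d} := hd' ▸ Ideal.subset_span (by simp)
  have hm : d ∈ Ideal.span {a, b} := hd' ▸ Ideal.mem_span_singleton_self d
  obtain ⟨x, hx⟩ := Ideal.mem_span_singleton.1 ha
  obtain ⟨y, hy⟩ := Ideal.mem_span_singleton.1 hb
  obtain ⟨u, v, huv⟩ := Ideal.mem_span_pair.1 hm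
  have hreg : d ∈ nonZeroDivisors A := by
    obtain ⟨c, hc⟩ := (Dvd.intro x hx.symm).trans h
    have := pow_mem ht_reg n
    rw [hc] at this
    exact (mul_mem_nonZeroDivisors.1 this).1
  have h1 : u * x + v * y = 1 := by
    rw [← mul_cancel_left_mem_nonZeroDivisors hreg, mul_one]
    nth_rw 2 [← huv]
    rw [hx, hy]; ring
  rcases IsLocalRing.isUnit_or_isUnit_of_add_one h1 with h2 | h2
  · left
    rw [hx, hy, (isUnit_of_mul_isUnit_right h2).mul_right_dvd]
    exact dvd_mul_right d y
  · right
    rw [hx, hy, (isUnit_of_mul_isUnit_right h2).mul_right_dvd]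
    exact dvd_mul_right d x

theorem exists_dvd_pow_of_notMem {A : Type*} [CommRing A] [IsLocalRing A]
    {t : A} (ht_reg : t ∈ nonZeroDivisors A)
    (h_prin : ∀ J : Ideal A, J.FG → (∃ n : ℕ, t ^ n ∈ J) → J.IsPrincipal)
    {a : A} (h : a ∉ ⨅ n : ℕ, Ideal.span {t ^ n}) : ∃ n : ℕ, a ∣ t ^ n := by
  simp only [Ideal.mem_iInf, Ideal.mem_span_singleton, not_forall] at h
  obtain ⟨n, hn⟩ := h
  exact ⟨n, (dvd_or_dvd_of_dvd_pow ht_reg h_prin a (dvd_refl (t ^ n))).resolve_left hn⟩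

theorem notMem_of_dvd_pow {A : Type*} [CommRing A] [IsLocalRing A]
    {t : A} (ht_mem : t ∈ IsLocalRing.maximalIdeal A) (ht_reg : t ∈ nonZeroDivisors A)
    {a : A} {n : ℕ} (h : a ∣ t ^ n) : a ∉ ⨅ n : ℕ, Ideal.span {t ^ n} := by
  intro ha
  simp only [Ideal.mem_iInf, Ideal.mem_span_singleton] at ha
  obtain ⟨c, hc⟩ := (ha (n + 1)).trans h
  refine (IsLocalRing.mem_maximalIdeal t).1 ht_mem (IsUnit.of_mul_eq_one c ?_)
  rw [← mul_cancel_left_mem_nonZeroDivisors (pow_mem ht_reg n), mul_one]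
  nth_rw 2 [hc]
  ring

/-- Part (iii) of Fujiwara's structure result (Proposition 3.7) for local `t`-valuative rings:
with `𝔓 = ⋂ₙ (tⁿ)`, the quotient `A/𝔓` is a valuation ring (in particular a domain), and its
localization away from the image of `t` is a field. -/
theorem stmt_2 {A : Type*} [CommRing A] [IsLocalRing A]
    (t : A) (ht_mem : t ∈ IsLocalRing.maximalIdeal A) (ht_reg : t ∈ nonZeroDivisors A)
    (h_prin : ∀ J : Ideal A, J.FG → (∃ n : ℕ, t ^ n ∈ J) → J.IsPrincipal) :
    ∃ _ : IsDomain (A ⧸ (⨅ n : ℕ, Ideal.span {t ^ n})),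
      ValuationRing (A ⧸ (⨅ n : ℕ, Ideal.span {t ^ n})) ∧
      IsField (Localization.Away (Ideal.Quotient.mk (⨅ n : ℕ, Ideal.span {t ^ n}) t)) := by
  have hex := fun a => exists_dvd_pow_of_notMem ht_reg h_prin (a := a)
  have hnot := fun a n => notMem_of_dvd_pow ht_mem ht_reg (a := a) (n := n)
  have htot := fun a b n => dvd_or_dvd_of_dvd_pow ht_reg h_prin (a := a) b (n := n)
  generalize (⨅ n : ℕ, Ideal.span {t ^ n}) = P at hex hnot ⊢
  have hP : P.IsPrime := by
    refine ⟨(Ideal.ne_top_iff_one P).2 (hnot 1 0 (one_dvd _)), fun {a b} hab => ?_⟩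
    by_contra! hcon
    obtain ⟨n, hn⟩ := hex a hcon.1
    obtain ⟨m, hm⟩ := hex b hcon.2
    exact hnot (a * b) (n + m) (pow_add t n m ▸ mul_dvd_mul hn hm) hab
  have hD : IsDomain (A ⧸ P) := Ideal.Quotient.isDomain P
  refine ⟨hD, ValuationRing.iff_dvd_total.2 ⟨fun x y => ?_⟩, ?_⟩
  · obtain ⟨a, rfl⟩ := Ideal.Quotient.mk_surjective x
    obtain ⟨b, rfl⟩ := Ideal.Quotient.mk_surjective y
    by_cases ha : a ∈ P
    · right
      rw [Ideal.Quotient.eq_zero_iff_mem.2 ha]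
      exact dvd_zero _
    · obtain ⟨n, hn⟩ := hex a ha
      exact (htot a b n hn).imp (map_dvd _) (map_dvd _)
  · have ht0 : Ideal.Quotient.mk P t ≠ 0 := fun h =>
      hnot t 1 (by simp) (Ideal.Quotient.eq_zero_iff_mem.1 h)
    have hL : IsDomain (Localization.Away (Ideal.Quotient.mk P t)) :=
      IsLocalization.isDomain_localization (powers_le_nonZeroDivisors_of_noZeroDivisors ht0)
    refine ⟨exists_pair_ne _, mul_comm, fun {z} hz => ?_⟩
    obtain ⟨x, s, rfl⟩ :=
      IsLocalization.exists_mk'_eq (Submonoid.powers (Ideal.Quotient.mk P t)) z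
    obtain ⟨a, rfl⟩ := Ideal.Quotient.mk_surjective x
    have ha : a ∉ P := fun h => hz (by
      rw [Ideal.Quotient.eq_zero_iff_mem.2 h, IsLocalization.mk'_zero])
    obtain ⟨n, hn⟩ := hex a ha
    have hu : IsUnit (algebraMap (A ⧸ P) (Localization.Away (Ideal.Quotient.mk P t))
        (Ideal.Quotient.mk P a)) := by
      refine isUnit_of_dvd_unit (map_dvd _ (map_dvd (Ideal.Quotient.mk P) hn)) ?_
      rw [map_pow, map_pow]
      exact (IsLocalization.Away.algebraMap_isUnit _).pow n
    rw [← IsLocalization.mk'_spec _ _ s] at hu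
    exact (isUnit_of_mul_isUnit_left hu).exists_right_inv
end

section
/- Let A be a commutative ring with π ∈ A such that A is π-adically complete and separated and π is a nonzerodivisor on A. Let M be an A-module which is π-adically complete and separated, such that M/πM is a finitely generated A/πA-module and such that for every k ≥ 1 the A/π^kA-module M/π^kM is projective. Then M is a projective A-module (in particular M is finitely presented over A). -/
/-!
Write `I = (π)`. Lifting generators of `M/IM` gives a map `p : Aⁿ → M` that is surjective modulo `I`,
hence surjective because `Aⁿ` is `I`-adically complete and `M` is `I`-adically separated. It then
suffices to split `p`, since `M` becomes a direct summand of `Aⁿ`.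

A splitting is built as a limit of compatible maps `s_k : M → F/IᵏF`, with `F = Aⁿ`, lifting the
projections `M → M/IᵏM`. Given `s_k` and the projection
`q : M → M/Iᵏ⁺¹M`, the map `s_{k+1}` is a lift of `(s_k, q)` along
`F/Iᵏ⁺¹F → F/IᵏF × M/Iᵏ⁺¹M`. The image of `(s_k, q)` lies in the range of that map: if `x ∈ F`
represents `s_k m`, then `p x - m ∈ IᵏM = p(IᵏF)`, so `x` can be corrected by an element of `IᵏF`
to map exactly to `m` (`exists_section_step`). The lift exists because `F/Iᵏ⁺¹F` is killed by `Iᵏ⁺¹`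
and `M/Iᵏ⁺¹M` is projective over `A/Iᵏ⁺¹` (`exists_lift_of_projective_quotient`). Completeness of
`F` yields the limit `s`, and separatedness of `M` gives `p ∘ s = id` (`exists_section`).

The lemmas are stated for an arbitrary ideal `I`.
-/

/-- If `M/JM` is projective over `A/J`, then `M` has the lifting property of a projective module
with respect to surjections out of modules killed by `J`. -/
theorem exists_lift_of_projective_quotient {A M N P : Type*} [CommRing A] [AddCommGroup M]
    [Module A M] [AddCommGroup N] [Module A N] [AddCommGroup P] [Module A P] (J : Ideal A)
    [hp : Module.Projective (A ⧸ J) (M ⧸ (J • (⊤ : Submodule A M)))]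
    (hN : Module.IsTorsionBySet A N J) (g : N →ₗ[A] P) (hg : Function.Surjective g)
    (f : M →ₗ[A] P) : ∃ h : M →ₗ[A] N, g ∘ₗ h = f := by
  have hP : Module.IsTorsionBySet A P J := by
    intro x a
    obtain ⟨y, rfl⟩ := hg x
    rw [← map_smul, hN, map_zero]
  let _ := hN.module
  let _ := hP.module
  have : IsScalarTower A (A ⧸ J) N := hN.isScalarTower
  have : IsScalarTower A (A ⧸ J) P := hP.isScalarTower
  have hs : Function.Surjective (algebraMap A (A ⧸ J)) := Ideal.Quotient.mk_surjective
  have hle : J • (⊤ : Submodule A M) ≤ LinearMap.ker f := by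
    rw [Submodule.smul_le]
    intro r hr m _
    rw [LinearMap.mem_ker, map_smul]
    exact @hP (f m) ⟨r, hr⟩
  obtain ⟨h, hh⟩ := Module.projective_lifting_property
    (g.extendScalarsOfSurjective hs)
    ((Submodule.liftQ _ f hle).extendScalarsOfSurjective hs) hg
  refine ⟨h.restrictScalars A ∘ₗ Submodule.mkQ _, ?_⟩
  ext m
  exact LinearMap.congr_fun hh (Submodule.Quotient.mk m)

theorem isAdicComplete_fin_fun {A : Type*} [CommRing A] (I : Ideal A) [IsAdicComplete I A]
    (n : ℕ) : IsAdicComplete I (Fin n → A) := by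
  rw [← AdicCompletion.of_bijective_iff,
    ← (AdicCompletion.piEquivFin I n).bijective.of_comp_iff']
  have h : (AdicCompletion.piEquivFin I n) ∘ (AdicCompletion.of I (Fin n → A)) =
      Pi.map fun _ => AdicCompletion.of I A := by
    ext x i k
    rfl
  rw [h]
  have hb := AdicCompletion.of_bijective I A
  exact ⟨.piMap fun _ => hb.1, .piMap fun _ => hb.2⟩

theorem exists_finite_free_surjection {A M : Type*} [CommRing A] [AddCommGroup M] [Module A M]
    (I : Ideal A) [IsAdicComplete I A] [IsAdicComplete I M]
    [hfg : Module.Finite (A ⧸ I) (M ⧸ (I • (⊤ : Submodule A M)))] :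
    ∃ (n : ℕ) (p : (Fin n → A) →ₗ[A] M), Function.Surjective p := by
  have : Module.Finite A (M ⧸ (I • (⊤ : Submodule A M))) := Module.Finite.trans (A ⧸ I) _
  obtain ⟨n, q, hq⟩ := Module.Finite.exists_fin' A (M ⧸ (I • (⊤ : Submodule A M)))
  obtain ⟨p, hp⟩ := Module.projective_lifting_property (Submodule.mkQ (I • (⊤ : Submodule A M))) q
    (Submodule.mkQ_surjective _)
  have := isAdicComplete_fin_fun I n
  refine ⟨n, p, surjective_of_mkQ_comp_surjective (I := I) ?_⟩
  rw [hp]; exact hq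

/-- The map `F ⧸ J F → M ⧸ J M` induced by a linear map `F → M`, regarded as linear over the base
ring `A` (Mathlib's `LinearMap.reduceModIdeal` is linear over `A ⧸ J`). -/
def reduceModLinear {A M F : Type*} [CommRing A] [AddCommGroup M] [Module A M] [AddCommGroup F]
    [Module A F] (p : F →ₗ[A] M) (J : Ideal A) :
    F ⧸ (J • (⊤ : Submodule A F)) →ₗ[A] M ⧸ (J • (⊤ : Submodule A M)) :=
  Submodule.mapQ _ _ p (by
    rw [← Submodule.map_le_iff_le_comap, Submodule.map_smul'']
    exact Submodule.smul_mono le_rfl le_top)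

open Submodule in
/-- A map `s : M → F/IᵏF` lifting `M → M/IᵏM` along the surjection `p` refines to a map
`M → F/Iᵏ⁺¹F` with the analogous property. -/
theorem exists_section_step {A M F : Type*} [CommRing A] [AddCommGroup M] [Module A M]
    [AddCommGroup F] [Module A F] (I : Ideal A) (p : F →ₗ[A] M) (hp : Function.Surjective p)
    (k : ℕ) [Module.Projective (A ⧸ I ^ (k + 1)) (M ⧸ (I ^ (k + 1) • (⊤ : Submodule A M)))]
    (s : M →ₗ[A] F ⧸ (I ^ k • (⊤ : Submodule A F)))
    (hs : reduceModLinear p (I ^ k) ∘ₗ s = mkQ _) :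
    ∃ t : M →ₗ[A] F ⧸ (I ^ (k + 1) • (⊤ : Submodule A F)),
      reduceModLinear p (I ^ (k + 1)) ∘ₗ t = mkQ _ ∧ factorPow I F k.le_succ ∘ₗ t = s := by
  let g := (factorPow I F k.le_succ).prod (reduceModLinear p (I ^ (k + 1)))
  let f := s.prod (mkQ (I ^ (k + 1) • (⊤ : Submodule A M)))
  have hf : ∀ m, f m ∈ LinearMap.range g := by
    intro m
    obtain ⟨x, hx⟩ := mkQ_surjective _ (s m)
    have hm : p x - m ∈ (I ^ k • (⊤ : Submodule A F)).map p := by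
      rw [map_smul'', Submodule.map_top, LinearMap.range_eq_top.2 hp, ← Submodule.Quotient.eq]
      have := LinearMap.congr_fun hs m
      rw [LinearMap.comp_apply, ← hx] at this
      exact this
    obtain ⟨y, hy, hyx⟩ := hm
    refine ⟨mkQ _ (x - y), Prod.ext ?_ ?_⟩
    · change Submodule.Quotient.mk (x - y) = s m
      rw [← hx, mkQ_apply, Submodule.Quotient.eq]
      simpa using hy
    · change Submodule.Quotient.mk (p (x - y)) = Submodule.Quotient.mk m
      rw [map_sub, hyx, sub_sub_cancel]
  obtain ⟨t, ht⟩ := exists_lift_of_projective_quotient (I ^ (k + 1))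
    (Module.isTorsionBySet_quotient_ideal_smul F (I ^ (k + 1))) g.rangeRestrict
    g.surjective_rangeRestrict (f.codRestrict _ hf)
  have ht' : ∀ m, g (t m) = f m := fun m => congrArg Subtype.val (LinearMap.congr_fun ht m)
  exact ⟨t, LinearMap.ext fun m => congrArg Prod.snd (ht' m),
    LinearMap.ext fun m => congrArg Prod.fst (ht' m)⟩

open Submodule in
/-- A surjection from an `I`-adically complete module onto an `I`-adically separated module `M` with
every `M/IᵏM` projective over `A/Iᵏ` splits. -/
theorem exists_section {A M F : Type*} [CommRing A] [AddCommGroup M] [Module A M]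
    [AddCommGroup F] [Module A F] (I : Ideal A) [IsAdicComplete I F] [IsHausdorff I M]
    (p : F →ₗ[A] M) (hp : Function.Surjective p)
    (hproj : ∀ k : ℕ, 1 ≤ k →
      Module.Projective (A ⧸ I ^ k) (M ⧸ (I ^ k • (⊤ : Submodule A M)))) :
    ∃ s : M →ₗ[A] F, p ∘ₗ s = LinearMap.id := by
  -- `S k` is the set of sections of `p` modulo `Iᵏ`, precomposed with `M → M/IᵏM`.
  let S (k : ℕ) := {s : M →ₗ[A] F ⧸ (I ^ k • (⊤ : Submodule A F)) //
    reduceModLinear p (I ^ k) ∘ₗ s = mkQ _}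
  have step (k : ℕ) (s : S k) : ∃ t : S (k + 1), factorPow I F k.le_succ ∘ₗ t.1 = s.1 := by
    have := hproj (k + 1) (by omega)
    obtain ⟨t, ht, hts⟩ := exists_section_step I p hp k s.1 s.2
    exact ⟨⟨t, ht⟩, hts⟩
  choose next hnext using step
  have zero : reduceModLinear p (I ^ 0) ∘ₗ 0 = mkQ (I ^ 0 • (⊤ : Submodule A M)) := by
    ext m
    have hm : m ∈ I ^ 0 • (⊤ : Submodule A M) := by
      rw [pow_zero, Ideal.one_eq_top, top_smul]
      trivial
    rw [LinearMap.comp_apply, LinearMap.zero_apply, map_zero]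
    exact ((Submodule.Quotient.mk_eq_zero _).2 hm).symm
  let s : ∀ k, S k := fun k => Nat.rec ⟨0, zero⟩ next k
  have hcompat : ∀ {m n : ℕ} (hle : m ≤ n), factorPow I F hle ∘ₗ (s n).1 = (s m).1 := by
    intro m n hle
    induction n, hle using Nat.le_induction with
    | base => simp
    | succ n hle ih =>
      rw [← ih, ← hnext n (s n), ← LinearMap.comp_assoc, factor_comp]
  refine ⟨IsAdicComplete.lift I (fun k => (s k).1) hcompat, LinearMap.ext fun m => ?_⟩
  rw [IsHausdorff.eq_iff_smodEq (I := I)]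
  intro k
  rw [SModEq.def]
  have h1 := IsAdicComplete.mk_lift I hcompat k m
  have h2 := LinearMap.congr_fun (s k).2 m
  rw [LinearMap.comp_apply, ← h1] at h2
  exact h2

/-- Lemma 4.3 of the paper: over a `π`-adically complete and separated ring `A` with `π` a
nonzerodivisor, a `π`-adically complete and separated module `M` with `M/πM` finitely generated
and with `M/πᵏM` projective over `A/πᵏA` for all `k ≥ 1` is a projective (in particular finitely
presented) `A`-module. -/
theorem stmt_3 {A : Type*} [CommRing A] (π : A)
    (hA : IsAdicComplete (Ideal.span {π}) A)
    (hreg : π ∈ nonZeroDivisors A)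
    {M : Type*} [AddCommGroup M] [Module A M]
    (hM : IsAdicComplete (Ideal.span {π}) M)
    (hfg : Module.Finite (A ⧸ Ideal.span {π})
      (M ⧸ (Ideal.span {π} • (⊤ : Submodule A M))))
    (hproj : ∀ k : ℕ, 1 ≤ k → Module.Projective (A ⧸ Ideal.span {π ^ k})
      (M ⧸ (Ideal.span {π ^ k} • (⊤ : Submodule A M)))) :
    Module.Projective A M ∧ Module.FinitePresentation A M := by
  have hproj' (k : ℕ) (hk : 1 ≤ k) : Module.Projective (A ⧸ Ideal.span {π} ^ k)
      (M ⧸ (Ideal.span {π} ^ k • (⊤ : Submodule A M))) := by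
    -- The module instances depend on the ideal, so the equality of ideals is substituted.
    have key : ∀ J : Ideal A, J = Ideal.span {π ^ k} →
        Module.Projective (A ⧸ J) (M ⧸ (J • (⊤ : Submodule A M))) := by
      rintro _ rfl
      exact hproj k hk
    exact key _ (Ideal.span_singleton_pow π k)
  obtain ⟨n, p, hp⟩ := exists_finite_free_surjection (M := M) (Ideal.span {π})
  have := isAdicComplete_fin_fun (Ideal.span {π}) n
  obtain ⟨s, hs⟩ := exists_section (Ideal.span {π}) p hp hproj'
  have : Module.Projective A M := .of_split s p hs
  have : Module.Finite A M := .of_surjective p hp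
  exact ⟨inferInstance, Module.finitePresentation_of_projective A M⟩
end

section
/- Let A be a commutative ring with π ∈ A such that A is π-adically complete and separated and π is a nonzerodivisor on A. Let M be an A-module which is π-adically complete and separated, such that M/πM is a finitely generated A/πA-module and such that for every k ≥ 1 the A/π^kA-module M/π^kM is free. Then M is a finitely generated free A-module. -/
/-!
A basis of `M/πM` lifts to a finite family in `M`, hence to a linear map `f : A^ι → M`. Since `A^ι`
is complete and `M` is separated, `f` is surjective because it is so modulo `π`.

Injectivity needs no comparison of ranks. Modulo `π` the map `f` is injective, so an element `x` of
its kernel has the form `πy`, and `π f(y) = 0`. As `M` has no `π`-torsion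
(`eq_zero_of_smul_eq_zero_of_free_quotients`), `y` lies in the kernel again. Iterating, `x` is
divisible by every power of `π`, so `x = 0` because `A` is separated.

Torsion-freeness is where freeness modulo all powers enters: the annihilator of `π` in `A/π^{k+1}`
is generated by `π^k` because `π` is a nonzerodivisor, so by freeness a `π`-torsion element of
`M/π^{k+1}M` is divisible by `π^k`; hence a `π`-torsion element of `M` lies in every `π^k M`.
-/

theorem mem_span_singleton_smul_top {A M : Type*} [CommRing A] [AddCommGroup M] [Module A M]
    (a : A) (x : M) :
    x ∈ Ideal.span {a} • (⊤ : Submodule A M) ↔ ∃ y : M, a • y = x := by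
  rw [Submodule.ideal_span_singleton_smul, Submodule.mem_smul_pointwise_iff_exists]
  simp

theorem eq_zero_of_forall_dvd {A M : Type*} [CommRing A] [AddCommGroup M] [Module A M]
    {a : A} (hM : IsHausdorff (Ideal.span {a}) M) {x : M}
    (hx : ∀ k : ℕ, ∃ y : M, a ^ k • y = x) : x = 0 := by
  refine hM.haus x fun k => ?_
  rw [SModEq.zero, Ideal.span_singleton_pow, mem_span_singleton_smul_top]
  exact hx k

theorem isPrecomplete_pi_of_span_singleton {A ι : Type*} [CommRing A] {a : A}
    (hA : IsPrecomplete (Ideal.span {a}) A) : IsPrecomplete (Ideal.span {a}) (ι → A) := by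
  refine ⟨fun f hf => ?_⟩
  simp only [SModEq.sub_mem, Ideal.span_singleton_pow, mem_span_singleton_smul_top] at hf ⊢
  have key : ∀ i, ∃ L : A, ∀ n, f n i ≡ L [SMOD (Ideal.span {a} ^ n • ⊤ : Submodule A A)] := by
    intro i
    refine hA.prec fun {m n} hmn => ?_
    rw [SModEq.sub_mem, Ideal.span_singleton_pow, mem_span_singleton_smul_top]
    obtain ⟨y, hy⟩ := hf hmn
    exact ⟨y i, congrFun hy i⟩
  simp only [SModEq.sub_mem, Ideal.span_singleton_pow, mem_span_singleton_smul_top] at key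
  choose L hL using key
  refine ⟨L, fun n => ?_⟩
  choose y hy using fun i => hL i n
  exact ⟨y, funext hy⟩

/-- The coordinates of the image of `m` in the free module `M/π^{k+1}M` are killed by `π`, hence
are multiples of `π^k`; so `m` lies in `π^k M + π^{k+1} M = π^k M`. -/
theorem exists_pow_smul_eq_of_smul_eq_zero {A M : Type*} [CommRing A] [AddCommGroup M]
    [Module A M] {π : A} (hreg : π ∈ nonZeroDivisors A) (k : ℕ)
    (hfree : Module.Free (A ⧸ Ideal.span {π ^ (k + 1)})
      (M ⧸ (Ideal.span {π ^ (k + 1)} • (⊤ : Submodule A M))))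
    {m : M} (hm : π • m = 0) : ∃ n : M, π ^ k • n = m := by
  set I := Ideal.span {π ^ (k + 1)} with hI
  let b := Module.Free.chooseBasis (A ⧸ I) (M ⧸ (I • (⊤ : Submodule A M)))
  let q : M →ₗ[A] M ⧸ (I • (⊤ : Submodule A M)) := Submodule.mkQ _
  have hcoord : ∀ i, ∃ d : A ⧸ I, b.repr (q m) i = Ideal.Quotient.mk I (π ^ k) * d := by
    intro i
    obtain ⟨c, hc⟩ := Ideal.Quotient.mk_surjective (b.repr (q m) i)
    have h1 : Ideal.Quotient.mk I π • q m = 0 := by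
      change q (π • m) = 0
      rw [hm, map_zero]
    have h2 : Ideal.Quotient.mk I (π * c) = 0 := by
      have := congrArg (fun z => b.repr z i) h1
      rw [map_mul, hc]
      simpa only [map_smul, Finsupp.smul_apply, smul_eq_mul, map_zero, Finsupp.zero_apply] using this
    rw [Ideal.Quotient.eq_zero_iff_mem, hI, Ideal.mem_span_singleton] at h2
    obtain ⟨d, hd⟩ := h2
    refine ⟨Ideal.Quotient.mk I d, ?_⟩
    rw [← hc, ← map_mul]
    congr 1
    apply (mul_cancel_left_mem_nonZeroDivisors hreg).1
    rw [hd]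
    ring
  have hmem : q m ∈ LinearMap.range
      (LinearMap.lsmul (A ⧸ I) (M ⧸ (I • (⊤ : Submodule A M))) (Ideal.Quotient.mk I (π ^ k))) := by
    rw [← b.linearCombination_repr (q m), Finsupp.linearCombination_apply]
    refine Submodule.sum_mem _ fun i _ => ?_
    obtain ⟨d, hd⟩ := hcoord i
    exact ⟨d • b i, by simp only [hd, mul_smul, LinearMap.lsmul_apply]⟩
  obtain ⟨n', hn'⟩ := hmem
  obtain ⟨n, rfl⟩ := Submodule.mkQ_surjective _ n'
  have h3 : q (π ^ k • n) = q m := hn'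
  have h4 := (Submodule.Quotient.eq _).1 h3.symm
  rw [hI, mem_span_singleton_smul_top] at h4
  obtain ⟨y, hy⟩ := h4
  refine ⟨n + π • y, ?_⟩
  rw [smul_add, ← mul_smul, ← pow_succ, hy]
  abel

theorem eq_zero_of_smul_eq_zero_of_free_quotients {A M : Type*} [CommRing A] [AddCommGroup M]
    [Module A M] {π : A} (hreg : π ∈ nonZeroDivisors A) (hM : IsHausdorff (Ideal.span {π}) M)
    (hfree : ∀ k : ℕ, 1 ≤ k → Module.Free (A ⧸ Ideal.span {π ^ k})
      (M ⧸ (Ideal.span {π ^ k} • (⊤ : Submodule A M))))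
    {m : M} (hm : π • m = 0) : m = 0 :=
  eq_zero_of_forall_dvd hM fun k =>
    exists_pow_smul_eq_of_smul_eq_zero hreg k (hfree (k + 1) (by omega)) hm

/-- Lemma 4.4 of the paper: over a `π`-adically complete and separated ring `A` with `π` a
nonzerodivisor, a `π`-adically complete and separated module `M` with `M/πM` finitely generated
and with `M/πᵏM` free over `A/πᵏA` for all `k ≥ 1` is a finitely generated free `A`-module. -/
theorem stmt_4 {A : Type*} [CommRing A] (π : A)
    (hA : IsAdicComplete (Ideal.span {π}) A)
    (hreg : π ∈ nonZeroDivisors A)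
    {M : Type*} [AddCommGroup M] [Module A M]
    (hM : IsAdicComplete (Ideal.span {π}) M)
    (hfg : Module.Finite (A ⧸ Ideal.span {π})
      (M ⧸ (Ideal.span {π} • (⊤ : Submodule A M))))
    (hfree : ∀ k : ℕ, 1 ≤ k → Module.Free (A ⧸ Ideal.span {π ^ k})
      (M ⧸ (Ideal.span {π ^ k} • (⊤ : Submodule A M)))) :
    Module.Free A M ∧ Module.Finite A M := by
  have hfree1 : Module.Free (A ⧸ Ideal.span {π})
      (M ⧸ (Ideal.span {π} • (⊤ : Submodule A M))) := by
    have h := hfree 1 le_rfl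
    rw [pow_one] at h
    exact h
  have htors : ∀ m : M, π • m = 0 → m = 0 := fun m hm =>
    eq_zero_of_smul_eq_zero_of_free_quotients hreg hM.toIsHausdorff hfree hm
  set I := Ideal.span {π} with hI
  let b := Module.Free.chooseBasis (A ⧸ I) (M ⧸ (I • (⊤ : Submodule A M)))
  let q : M →ₗ[A] M ⧸ (I • (⊤ : Submodule A M)) := Submodule.mkQ _
  choose v hv using fun i => Submodule.mkQ_surjective (I • (⊤ : Submodule A M)) (b i)
  let f := Fintype.linearCombination A v
  have hqf : ∀ x, q (f x) = ∑ i, Ideal.Quotient.mk I (x i) • b i := by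
    intro x
    simp only [f, Fintype.linearCombination_apply, map_sum]
    refine Finset.sum_congr rfl fun i _ => ?_
    rw [← hv i]
    rfl
  have hsurj : Function.Surjective f := by
    have : IsPrecomplete I (Module.Free.ChooseBasisIndex (A ⧸ I)
        (M ⧸ (I • (⊤ : Submodule A M))) → A) :=
      isPrecomplete_pi_of_span_singleton hA.toIsPrecomplete
    have := hM.toIsHausdorff
    refine surjective_of_mkQ_comp_surjective (I := I) fun z => ?_
    choose x hx using fun i => Ideal.Quotient.mk_surjective (b.repr z i)
    refine ⟨x, (hqf x).trans ?_⟩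
    simp only [hx]
    exact b.sum_repr z
  have hdiv : ∀ x, f x = 0 → ∃ y, f y = 0 ∧ π • y = x := by
    intro x hx
    have h0 : ∑ i, Ideal.Quotient.mk I (x i) • b i = 0 := by rw [← hqf, hx, map_zero]
    have h1 : ∀ i, ∃ c, π * c = x i := by
      intro i
      have h2 := Fintype.linearIndependent_iff.1 b.linearIndependent _ h0 i
      rw [Ideal.Quotient.eq_zero_iff_mem, hI, Ideal.mem_span_singleton] at h2
      exact h2.imp fun _ h => h.symm
    choose y hy using h1
    have hyx : π • y = x := funext hy
    exact ⟨y, htors _ (by rw [← map_smul, hyx, hx]), hyx⟩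
  have hpow : ∀ (k : ℕ) x, f x = 0 → ∃ y, f y = 0 ∧ π ^ k • y = x := by
    intro k
    induction k with
    | zero => exact fun x hx => ⟨x, hx, by simp⟩
    | succ k ih =>
      intro x hx
      obtain ⟨y, hy, rfl⟩ := ih x hx
      obtain ⟨z, hz, rfl⟩ := hdiv y hy
      exact ⟨z, hz, by rw [pow_succ, mul_smul]⟩
  have hinj : Function.Injective f := by
    refine (injective_iff_map_eq_zero f).2 fun x hx => funext fun i => ?_
    refine eq_zero_of_forall_dvd hA.toIsHausdorff fun k => ?_
    obtain ⟨y, -, hy⟩ := hpow k x hx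
    exact ⟨y i, congrFun hy i⟩
  let e := LinearEquiv.ofBijective f ⟨hinj, hsurj⟩
  exact ⟨Module.Free.of_equiv e, Module.Finite.equiv e⟩
end

section
/- Let A be a commutative ring and I an ideal of A such that (A, I) is a Henselian pair. Let Â denote the I-adic completion of A, and let M be a finitely generated projective Â-module. Then there exists a finitely generated projective A-module N and an isomorphism of Â-modules M ≅ Â ⊗_A N. -/
/-!
A finitely generated projective module over `Â` is the image of an idempotent matrix `e`. If `e₀` is
an idempotent matrix over `A` with the same reduction modulo `I` as `e`, then the image `N` of `e₀`
is the required descent: the composites `M → Â ^ n → Â ⊗ N` and `Â ⊗ N → Â ^ n → M` are mutually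
inverse modulo the kernel of `Â → A ⧸ I`. That kernel lies in the Jacobson radical of `Â`, even
when `I` is not finitely generated, so by Nakayama's lemma both are isomorphisms
(`nonempty_linearEquiv_of_inverse_mod`).

It remains to lift idempotent matrices from `A ⧸ I` to `A`
(`exists_isIdempotentElem_matrix_lift`). For a matrix `E` over `A` that is idempotent modulo `I`,
put `F = E ^ 2 - E`. By Cayley–Hamilton, `E` is a root of `h = χ_F (X ^ 2 - X)`, and
`h ≡ X ^ n * (X - 1) ^ n` modulo `I`. A lift of this coprime factorization to `A` produces the
idempotent as a polynomial in `E`.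

The definition of a Henselian pair only lifts simple roots of monic polynomials. Coprime monic
factorizations of `h` are points of an étale `A`-algebra that is a localization `B = C[1/Δ]` of a
finite, finitely presented `A`-algebra `C`, so it is enough to lift `A ⧸ I`-points of such algebras
(`exists_algHom_lift`). Since `B` is unramified, an `A ⧸ I`-point `σ` is cut out in `C ⧸ I C` by an
element `c` generating a summand of rank one. Multiplication by a lift of `c` satisfies a monic
equation congruent to `(X - 1) * X ^ m`; its simple root `1` lifts, and this turns `c` into an
idempotent `ε` of `C`. The ring `C ⧸ (1 - ε)` is a quotient `A ⧸ J` with `J` finitely generated and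
contained in `I`, formal smoothness of `B` gives `J = J ^ 2`, and therefore `J = 0`.
-/

open scoped TensorProduct

universe u v

namespace HenselianDescent

open Polynomial

theorem isUnit_of_isUnit_mk {A : Type*} [CommRing A] {I : Ideal A} [HenselianRing A I] {a : A}
    (h : IsUnit (Ideal.Quotient.mk I a)) : IsUnit a :=
  have := isLocalHom_of_le_jacobson_bot I HenselianRing.jac
  isUnit_of_map_unit (Ideal.Quotient.mk I) a h

theorem map_mem_smul_top {A P Q : Type*} [CommRing A] [AddCommGroup P] [Module A P]
    [AddCommGroup Q] [Module A Q] {I : Ideal A} (g : P →ₗ[A] Q) {x : P}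
    (hx : x ∈ (I • ⊤ : Submodule A P)) : g x ∈ (I • ⊤ : Submodule A Q) := by
  have := Submodule.mem_map_of_mem (f := g) hx
  rw [Submodule.map_smul''] at this
  exact Submodule.smul_mono le_rfl le_top this

theorem smul_top_mul_mem {A C : Type*} [CommRing A] [CommRing C] [Algebra A C] {I : Ideal A}
    {x : C} (y : C) (hx : x ∈ (I • ⊤ : Submodule A C)) : y * x ∈ (I • ⊤ : Submodule A C) :=
  map_mem_smul_top (LinearMap.mulLeft A y) hx

/-! ### Lifting rank-one idempotents of finite algebras -/

/-- If `c` is idempotent modulo `I` and `c C` is spanned by `c` modulo `I`, then `c` is a root of a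
monic polynomial congruent to `(X - 1) * X ^ m`: the characteristic polynomial of a matrix
representing multiplication by `c` on a generating family that starts with `c`. Modulo `I` only
the first row of that matrix survives. -/
theorem exists_monic_map_eq_of_rank_one_mod {A C : Type*} [CommRing A] [CommRing C] [Algebra A C]
    [Module.Finite A C] (I : Ideal A) (c : C)
    (hc : c * c - c ∈ (I • ⊤ : Submodule A C))
    (h : ∀ x, ∃ a : A, c * x - a • c ∈ (I • ⊤ : Submodule A C)) :
    ∃ (P : A[X]) (m : ℕ), P.Monic ∧ aeval c P = 0 ∧
      P.map (Ideal.Quotient.mk I) = (X - 1) * X ^ m := by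
  classical
  obtain ⟨s, hs⟩ := Module.Finite.fg_top (R := A) (M := C)
  let b : Unit ⊕ s → C := Sum.elim (fun _ ↦ c) (↑)
  have hb : Submodule.span A (Set.range b) = ⊤ := by
    rw [eq_top_iff, ← hs]
    exact Submodule.span_mono fun x hx ↦ ⟨.inr ⟨x, hx⟩, rfl⟩
  have h' : ∀ j, ∃ a : A, (j = .inl () → a = 1) ∧ c * b j - a • c ∈ (I • ⊤ : Submodule A C) := by
    rintro (j | j)
    · exact ⟨1, fun _ ↦ rfl, by simpa [b] using hc⟩
    · obtain ⟨a, ha⟩ := h (b (.inr j))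
      exact ⟨a, by simp, ha⟩
  -- The coefficient at the distinguished generator `c` is normalized to be exactly `1`.
  choose α hα1 hα using h'
  have hr : ∀ j, ∃ r : Unit ⊕ s → I, ∑ i, (r i : A) • b i = c * b j - α j • c := by
    intro j
    have := hα j
    rw [← hb, ← Ideal.range_finsuppTotal] at this
    obtain ⟨r, hr⟩ := this
    exact ⟨r, by rwa [Ideal.finsuppTotal_apply_eq_of_fintype] at hr⟩
  choose r hr using hr
  let B : Matrix (Unit ⊕ s) (Unit ⊕ s) A :=
    .of fun i j ↦ (if i = .inl () then α j else 0) + r j i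
  have hB : B.Represents b (LinearMap.mulLeft A c) := by
    rw [Matrix.represents_iff']
    intro j
    simp only [B, Matrix.of_apply, add_smul, Finset.sum_add_distrib, hr, ite_smul, zero_smul,
      Finset.sum_ite_eq', Finset.mem_univ, if_true, LinearMap.mulLeft_apply]
    simp [b]
  refine ⟨B.charpoly, Fintype.card s, B.charpoly_monic, ?_, ?_⟩
  · let B' : Matrix.isRepresentation A b := ⟨B, _, hB⟩
    have h1 : Matrix.isRepresentation.toEnd A b hb B' = LinearMap.mulLeft A c :=
      Matrix.isRepresentation.eq_toEnd_of_represents A b hb B' hB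
    have h2 : aeval (LinearMap.mulLeft A c) B.charpoly = 0 := by
      rw [← h1, aeval_algHom_apply, ← map_zero (Matrix.isRepresentation.toEnd A b hb)]
      congr 1
      ext1
      rw [aeval_subalgebra_coe, Matrix.aeval_self_charpoly, Subalgebra.coe_zero]
    have h3 : aeval (Algebra.lmul A C c) B.charpoly = 0 := h2
    rw [aeval_algHom_apply] at h3
    simpa using congr($h3 1)
  · rw [← Matrix.charpoly_map]
    have : B.map (Ideal.Quotient.mk I) = Matrix.fromBlocks (1 : Matrix Unit Unit (A ⧸ I))
        (Matrix.of fun _ j ↦ Ideal.Quotient.mk I (α (.inr j))) 0 (0 : Matrix s s (A ⧸ I)) := by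
      ext i j
      have hz : Ideal.Quotient.mk I (r j i : A) = 0 := Ideal.Quotient.eq_zero_iff_mem.mpr (r j i).2
      rcases i with i | i <;> rcases j with j | j <;> simp [B, hz, hα1]
    rw [this, Matrix.charpoly_fromBlocks_zero₂₁]
    simp [Matrix.charpoly_one, Matrix.charpoly_zero]


/-- Let `C` be finite over `A`, with an `A ⧸ I`-point `σ`, and let `c` satisfy `σ c = 1` and
`c * ker σ ⊆ I C`. Then such a `c` can be chosen to be an honest idempotent. The simple root `1` of
`(X - 1) * X ^ m` lifts to a root `a` of the polynomial `P = (X - a) * Q` annihilating `c`, and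
`Q(c) / Q(a)` is the required idempotent. -/
theorem exists_isIdempotentElem_of_rank_one_mod {A C : Type*} [CommRing A] [CommRing C]
    [Algebra A C] [Module.Finite A C] (I : Ideal A) [HenselianRing A I] (σ : C →ₐ[A] A ⧸ I) (c : C)
    (hc : σ c = 1) (h : ∀ x, σ x = 0 → c * x ∈ (I • ⊤ : Submodule A C)) :
    ∃ ε : C, IsIdempotentElem ε ∧ σ ε = 1 ∧
      ∀ x, σ x = 0 → ε * x ∈ (I • ⊤ : Submodule A C) := by
  obtain ⟨P, m, hP, hPc, hPm⟩ := exists_monic_map_eq_of_rank_one_mod I c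
    (by simpa [mul_sub] using h (c - 1) (by simp [hc]))
    (fun x ↦ by
      obtain ⟨a, ha⟩ := Ideal.Quotient.mk_surjective (σ x)
      refine ⟨a, ?_⟩
      have := h (x - algebraMap A C a) (by simp [← ha])
      simpa [mul_sub, Algebra.smul_def, mul_comm] using this)
  have hev (Q : A[X]) : Ideal.Quotient.mk I (Q.eval 1) = (Q.map (Ideal.Quotient.mk I)).eval 1 := by
    simp [eval_map, eval₂_at_one]
  obtain ⟨a, ha, ha1⟩ := HenselianRing.is_henselian P hP 1
    (by rw [← Ideal.Quotient.eq_zero_iff_mem (I := I), hev, hPm]; simp)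
    (by rw [hev, ← derivative_map, hPm]; simp)
  have ha1 : Ideal.Quotient.mk I a = 1 := by
    rw [← map_one (Ideal.Quotient.mk I)]; exact Ideal.Quotient.eq.mpr ha1
  obtain ⟨Q, rfl⟩ := dvd_iff_isRoot.mpr ha
  have hQmod : Ideal.Quotient.mk I (Q.eval a) = 1 := by
    have h1 : ((X - Polynomial.C a) * Q).derivative.eval a = Q.eval a := by simp
    rw [← h1, ← eval_map_apply, ← derivative_map, hPm, ha1]
    simp
  obtain ⟨q, hq⟩ := isUnit_of_isUnit_mk (hQmod ▸ isUnit_one)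
  have hca : (c - algebraMap A C a) * aeval c Q = 0 := by simpa using hPc
  have hQQ (p : A[X]) : aeval c p * aeval c Q = algebraMap A C (p.eval a) * aeval c Q := by
    obtain ⟨r, hr⟩ := X_sub_C_dvd_sub_C_eval (a := a) (p := p)
    have := congr(aeval c $hr)
    simp only [map_sub, map_mul, aeval_C, aeval_X] at this
    linear_combination this * aeval c Q + hca * aeval c r
  have hqq : algebraMap A C (↑q⁻¹ : A) * algebraMap A C (Q.eval a) = 1 := by
    rw [← map_mul, ← hq, Units.inv_mul, map_one]
  refine ⟨algebraMap A C (↑q⁻¹ : A) * aeval c Q, ?_, ?_, ?_⟩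
  · have := hQQ Q
    rw [IsIdempotentElem]
    linear_combination (algebraMap A C (↑q⁻¹ : A)) ^ 2 * this +
      hqq * algebraMap A C (↑q⁻¹ : A) * aeval c Q
  · have h1 : σ (aeval c Q) = Ideal.Quotient.mk I (Q.eval a) := by
      rw [← aeval_algHom_apply, hc, ← ha1, aeval_def, Ideal.Quotient.algebraMap_eq, eval₂_at_apply]
    have h2 := congr(σ $hqq)
    rw [map_mul, AlgHom.commutes σ (Q.eval a), map_one] at h2
    rw [map_mul, h1]
    exact h2
  · intro x hx
    obtain ⟨u, rfl⟩ := isUnit_of_isUnit_mk (ha1 ▸ isUnit_one)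
    have huu : algebraMap A C (↑u⁻¹ : A) * algebraMap A C u = 1 := by
      rw [← map_mul, Units.inv_mul, map_one]
    have := smul_top_mul_mem (algebraMap A C (↑q⁻¹ : A) * algebraMap A C (↑u⁻¹ : A) * aeval c Q)
      (h x hx)
    convert this using 1
    linear_combination (-algebraMap A C (↑q⁻¹ : A) * aeval c Q * x) * huu -
      (algebraMap A C (↑q⁻¹ : A) * algebraMap A C (↑u⁻¹ : A) * x) * hca

/-! ### Lifting points of étale algebras -/

theorem liftAlgHom_algebraMap {A C E T : Type*} [CommRing A] [CommRing C] [CommRing E] [CommRing T]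
    [Algebra A C] [Algebra A E] [Algebra C E] [Algebra A T] [IsScalarTower A C E] (Δ : C)
    [IsLocalization.Away Δ E] (f : C →ₐ[A] T) (h : IsUnit (f Δ)) (x : C) :
    (IsLocalization.Away.liftAlgHom Δ h : E →ₐ[A] T) (algebraMap C E x) = f x :=
  IsLocalization.Away.lift_eq (S := E) Δ (g := (f : C →+* T)) h x

/-- Let `E = C[1/Δ]` be unramified over `A`. The kernel `𝔫` of an `A ⧸ I`-point `σ` of `C` that
extends to `E` satisfies `𝔫 ⊆ 𝔫 ^ 2 + I C`: the quotient map to `C ⧸ (𝔫 ^ 2 + I C)` and the map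
through `σ` agree modulo the nilpotent ideal generated by `𝔫`, so they coincide. -/
theorem ker_le_sq_sup_map {A C E : Type*} [CommRing A] [CommRing C] [CommRing E] [Algebra A C]
    [Algebra A E] [Algebra C E] [IsScalarTower A C E] (Δ : C) [IsLocalization.Away Δ E]
    [Algebra.FormallyUnramified A E] (I : Ideal A) (σE : E →ₐ[A] A ⧸ I) (σ : C →ₐ[A] A ⧸ I)
    (hσ : ∀ x, σ x = σE (algebraMap C E x)) :
    RingHom.ker σ ≤ RingHom.ker σ ^ 2 ⊔ I.map (algebraMap A C) := by
  set D : Ideal C := RingHom.ker σ ^ 2 ⊔ I.map (algebraMap A C) with hD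
  let nT : Ideal (C ⧸ D) := (RingHom.ker σ).map (Ideal.Quotient.mk D)
  have hnil : IsNilpotent nT := by
    refine ⟨2, ?_⟩
    rw [← Ideal.map_pow, Ideal.zero_eq_bot, ← le_bot_iff, Ideal.map_le_iff_le_comap,
      ← RingHom.ker_eq_comap_bot, Ideal.mk_ker]
    exact le_sup_left
  let g : A ⧸ I →ₐ[A] C ⧸ D := Ideal.Quotient.liftₐ I (Algebra.ofId A (C ⧸ D)) (fun a ha ↦ by
    rw [Algebra.ofId_apply, IsScalarTower.algebraMap_apply A C (C ⧸ D),
      Ideal.Quotient.algebraMap_eq, Ideal.Quotient.eq_zero_iff_mem]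
    exact Ideal.mem_sup_right (Ideal.mem_map_of_mem _ ha))
  have key (x : C) : Ideal.Quotient.mk nT (Ideal.Quotient.mk D x) =
      Ideal.Quotient.mk nT (g (σ x)) := by
    obtain ⟨a, ha⟩ := Ideal.Quotient.mk_surjective (σ x)
    have h1 : g (σ x) = Ideal.Quotient.mk D (algebraMap A C a) := by rw [← ha]; rfl
    rw [h1, Ideal.Quotient.eq, ← map_sub]
    refine Ideal.mem_map_of_mem _ ?_
    rw [RingHom.mem_ker, map_sub, AlgHom.commutes, ← ha]
    exact sub_self _
  have hΔ : IsUnit (Ideal.Quotient.mkₐ A D Δ) := by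
    refine hnil.isUnit_quotient_mk_iff.mp ?_
    rw [Ideal.Quotient.mkₐ_eq_mk, key, hσ]
    exact (((IsLocalization.Away.algebraMap_isUnit Δ).map σE).map g).map _
  have heq : IsLocalization.Away.liftAlgHom Δ hΔ = g.comp σE := by
    refine Algebra.FormallyUnramified.lift_unique nT hnil _ _ ?_
    refine IsLocalization.algHom_ext (Submonoid.powers Δ) ?_
    ext x
    have := key x
    rw [hσ, ← Ideal.Quotient.mkₐ_eq_mk A D, ← liftAlgHom_algebraMap (E := E) Δ _ hΔ] at this
    exact this
  intro x hx
  have h1 := congr($heq (algebraMap C E x))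
  rw [← Ideal.Quotient.eq_zero_iff_mem]
  have h2 : σE (algebraMap C E x) = 0 := by rw [← hσ]; exact hx
  rw [liftAlgHom_algebraMap] at h1
  simpa [h2] using h1

/-- The hypothesis of `exists_isIdempotentElem_of_rank_one_mod` holds for an `A ⧸ I`-point of an
unramified localization `E = C[1/Δ]`. The kernel `𝔫` of the point is finitely generated modulo
`I C`, so Nakayama's lemma applies to `𝔫 ⊆ 𝔫 ^ 2 + I C`. -/
theorem exists_rank_one_mod {A C E : Type*} [CommRing A] [CommRing C] [CommRing E] [Algebra A C]
    [Algebra A E] [Algebra C E] [IsScalarTower A C E] (Δ : C) [IsLocalization.Away Δ E]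
    [Module.Finite A C]
    [Algebra.FormallyUnramified A E] (I : Ideal A) (σE : E →ₐ[A] A ⧸ I) (σ : C →ₐ[A] A ⧸ I)
    (hσ : ∀ x, σ x = σE (algebraMap C E x)) :
    ∃ c, σ c = 1 ∧ ∀ x, σ x = 0 → c * x ∈ (I • ⊤ : Submodule A C) := by
  have hle := ker_le_sq_sup_map Δ I σE σ hσ
  set n := RingHom.ker σ with hn
  obtain ⟨s, hs⟩ := Module.Finite.fg_top (R := A) (M := C)
  have hmk (x : C) : ∃ a : A, σ x = Ideal.Quotient.mk I a :=
    (Ideal.Quotient.mk_surjective (σ x)).imp fun _ h ↦ h.symm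
  choose α hα using hmk
  have hαn (x : C) : x - algebraMap A C (α x) ∈ n := by
    rw [hn, RingHom.mem_ker, map_sub, AlgHom.commutes, hα]
    exact sub_self _
  let N' : Ideal C := Ideal.span ((fun x ↦ x - algebraMap A C (α x)) '' s)
  have hN'n : N' ≤ n := Ideal.span_le.mpr (by rintro _ ⟨x, -, rfl⟩; exact hαn x)
  have hIn : I.map (algebraMap A C) ≤ n := by
    rw [Ideal.map_le_iff_le_comap]
    intro a ha
    rw [Ideal.mem_comap, hn, RingHom.mem_ker, AlgHom.commutes]
    exact Ideal.Quotient.eq_zero_iff_mem.mpr ha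
  have hex (x : C) : ∃ a : A, x - algebraMap A C a ∈ N' := by
    have : x ∈ Submodule.span A (s : Set C) := hs ▸ trivial
    induction this using Submodule.span_induction with
    | mem x hx => exact ⟨α x, Ideal.subset_span ⟨x, hx, rfl⟩⟩
    | zero => exact ⟨0, by simp⟩
    | add x y _ _ hx hy =>
      obtain ⟨a, ha⟩ := hx
      obtain ⟨b, hb⟩ := hy
      refine ⟨a + b, ?_⟩
      convert add_mem ha hb using 1
      rw [map_add]; ring
    | smul r x _ hx =>
      obtain ⟨a, ha⟩ := hx
      refine ⟨r * a, ?_⟩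
      convert N'.mul_mem_left (algebraMap A C r) ha using 1
      rw [map_mul, Algebra.smul_def]; ring
  have hnle : n ≤ I.map (algebraMap A C) ⊔ N' := by
    intro x hx
    obtain ⟨a, ha⟩ := hex x
    have haI : a ∈ I := by
      have := sub_mem hx (hN'n ha)
      rw [sub_sub_cancel, hn, RingHom.mem_ker, AlgHom.commutes] at this
      exact Ideal.Quotient.eq_zero_iff_mem.mp this
    rw [← add_sub_cancel (algebraMap A C a) x]
    exact Submodule.add_mem_sup (Ideal.mem_map_of_mem _ haI) ha
  obtain ⟨r, hr, hr'⟩ := Submodule.exists_sub_one_mem_and_smul_le_of_fg_of_le_sup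
    (I := n) (N := I.map (algebraMap A C)) (N' := N') (P := n)
    (Submodule.fg_span (s.finite_toSet.image _)) hN'n (by
      refine hle.trans (sup_le ?_ le_sup_left)
      rw [sq]
      refine (Ideal.mul_mono_right hnle).trans ?_
      rw [Ideal.mul_sup]
      exact sup_le_sup Ideal.mul_le_right le_rfl)
  refine ⟨r, ?_, fun x hx ↦ ?_⟩
  · rw [hn, RingHom.mem_ker, map_sub, map_one] at hr
    exact sub_eq_zero.mp hr
  · rw [Ideal.smul_top_eq_map]
    exact hr' (Submodule.smul_mem_pointwise_smul x r n hx)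

/-- Once the point `σ` of `C` is cut out modulo `I` by an honest idempotent `ε`, the quotient
`C ⧸ (1 - ε)` is `A` itself, and this gives the lift of the point to `A`. -/
theorem exists_algHom_lift_of_idempotent {A C E : Type*} [CommRing A] [CommRing C] [CommRing E]
    [Algebra A C] [Algebra A E] [Algebra C E] [IsScalarTower A C E] (Δ : C)
    [IsLocalization.Away Δ E] [Module.Finite A C] [Algebra.FinitePresentation A C]
    [Algebra.FormallySmooth A E] (I : Ideal A) [HenselianRing A I] (σE : E →ₐ[A] A ⧸ I)
    (σ : C →ₐ[A] A ⧸ I) (hσ : ∀ x, σ x = σE (algebraMap C E x)) (ε : C) (hε : IsIdempotentElem ε)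
    (hε1 : σ ε = 1) (h : ∀ x, σ x = 0 → ε * x ∈ (I • ⊤ : Submodule A C)) :
    ∃ τ : E →ₐ[A] A, ∀ y, Ideal.Quotient.mk I (τ y) = σE y := by
  let K : Ideal C := Ideal.span {1 - ε}
  have hKε : Ideal.Quotient.mk K ε = 1 := by
    rw [← map_one (Ideal.Quotient.mk K), eq_comm, Ideal.Quotient.eq]
    exact Ideal.subset_span rfl
  let σ' : C ⧸ K →ₐ[A] A ⧸ I := Ideal.Quotient.liftₐ K σ (fun a ha ↦ by
    obtain ⟨b, rfl⟩ := Ideal.mem_span_singleton'.mp ha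
    simp [hε1])
  have hσ' (x : C) : σ' (Ideal.Quotient.mk K x) = σ x := rfl
  have hσ'a (a : A) : σ' (algebraMap A _ a) = Ideal.Quotient.mk I a := σ'.commutes a
  -- Modulo `I`, the module `C ⧸ K` is generated by `1`; Nakayama's lemma lifts this to `A`.
  have hsurj : Function.Surjective (algebraMap A (C ⧸ K)) := by
    have : (⊤ : Submodule A (C ⧸ K)) ≤ LinearMap.range (Algebra.linearMap A (C ⧸ K)) := by
      refine Submodule.le_of_le_smul_of_le_jacobson_bot Module.Finite.fg_top
        (HenselianRing.jac (I := I)) ?_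
      rintro y -
      obtain ⟨x, rfl⟩ := Ideal.Quotient.mk_surjective y
      obtain ⟨a, ha⟩ := Ideal.Quotient.mk_surjective (σ x)
      have h1 := h (x - algebraMap A C a) (by
        rw [map_sub, AlgHom.commutes, ← ha]; exact sub_self _)
      have h3 := map_mem_smul_top (Ideal.Quotient.mkₐ A K).toLinearMap h1
      have h4 : (Ideal.Quotient.mkₐ A K).toLinearMap (ε * (x - algebraMap A C a)) =
          Ideal.Quotient.mk K x - algebraMap A (C ⧸ K) a := by
        rw [AlgHom.toLinearMap_apply, map_mul, Ideal.Quotient.mkₐ_eq_mk, hKε, one_mul, map_sub]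
        rfl
      rw [h4] at h3
      rw [← add_sub_cancel (algebraMap A (C ⧸ K) a) (Ideal.Quotient.mk K x)]
      exact Submodule.add_mem_sup ⟨a, rfl⟩ h3
    intro y
    exact this (Submodule.mem_top (x := y))
  let J : Ideal A := RingHom.ker (algebraMap A (C ⧸ K))
  have hJI : J ≤ I := fun a (ha : algebraMap A (C ⧸ K) a = 0) ↦ by
    rw [← Ideal.Quotient.eq_zero_iff_mem, ← hσ'a, ha, map_zero]
  have hJfg : J.FG := by
    have : Algebra.FinitePresentation A (C ⧸ K) :=
      Algebra.FinitePresentation.quotient (Submodule.fg_span (Set.finite_singleton _))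
    exact Algebra.FinitePresentation.ker_fG_of_surjective (Algebra.ofId A (C ⧸ K)) hsurj
  have hΔ : IsUnit (Ideal.Quotient.mkₐ A K Δ) := by
    obtain ⟨a, ha⟩ := hsurj (Ideal.Quotient.mkₐ A K Δ)
    rw [← ha]
    refine IsUnit.map _ (isUnit_of_isUnit_mk (I := I) ?_)
    rw [← hσ'a, ha, Ideal.Quotient.mkₐ_eq_mk, hσ', hσ]
    exact (IsLocalization.Away.algebraMap_isUnit Δ).map σE
  let φ : E →ₐ[A] C ⧸ K := IsLocalization.Away.liftAlgHom Δ hΔ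
  have hφ (x : C) : φ (algebraMap C E x) = Ideal.Quotient.mk K x :=
    liftAlgHom_algebraMap Δ _ hΔ x
  have hφσ : σ'.comp φ = σE := by
    refine IsLocalization.algHom_ext (Submonoid.powers Δ) ?_
    ext x
    exact (congrArg σ' (hφ x)).trans (hσ x)
  -- By formal smoothness `E → C ⧸ K = A ⧸ J` lifts to `A ⧸ J ^ 2`. The image of `1 - ε` there is a
  -- nilpotent idempotent, so the lift factors through `C ⧸ K` and splits `A ⧸ J ^ 2 → A ⧸ J`.
  have hJJ : J ≤ J • J := by
    let π : A ⧸ J ^ 2 →ₐ[A] C ⧸ K := Ideal.Quotient.liftₐ (J ^ 2) (Algebra.ofId A (C ⧸ K))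
      fun a ha ↦ Ideal.pow_le_self two_ne_zero ha
    have hπ : Function.Surjective π := fun y ↦ by
      obtain ⟨a, rfl⟩ := hsurj y
      exact ⟨Ideal.Quotient.mk _ a, rfl⟩
    have hπk : IsNilpotent (RingHom.ker (π : A ⧸ J ^ 2 →+* C ⧸ K)) := by
      refine ⟨2, ?_⟩
      have h1 : RingHom.ker (π : A ⧸ J ^ 2 →+* C ⧸ K) ≤ J.map (Ideal.Quotient.mk (J ^ 2)) := by
        intro y hy
        obtain ⟨a, rfl⟩ := Ideal.Quotient.mk_surjective y
        exact Ideal.mem_map_of_mem _ hy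
      rw [Ideal.zero_eq_bot, ← le_bot_iff]
      refine (Ideal.pow_right_mono h1 2).trans ?_
      rw [← Ideal.map_pow, Ideal.map_quotient_self]
    let ψ := Algebra.FormallySmooth.liftOfSurjective φ π hπ hπk
    have hψ (y : E) : π (ψ y) = φ y :=
      Algebra.FormallySmooth.liftOfSurjective_apply φ π hπ hπk y
    have hψε : ψ (algebraMap C E (1 - ε)) = 0 := by
      have h1 : IsIdempotentElem (ψ (algebraMap C E (1 - ε))) :=
        (hε.one_sub.map (algebraMap C E)).map ψ
      have h2 : ψ (algebraMap C E (1 - ε)) ∈ RingHom.ker (π : A ⧸ J ^ 2 →+* C ⧸ K) := by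
        rw [RingHom.mem_ker]
        refine (hψ _).trans ?_
        rw [hφ, map_sub, hKε, map_one, sub_self]
      obtain ⟨k, hk⟩ := hπk
      have h3 := Ideal.pow_mem_pow h2 k
      rw [hk] at h3
      rcases k with - | k
      · have : (1 : A ⧸ J ^ 2) ∈ (0 : Ideal (A ⧸ J ^ 2)) := by simpa using h3
        have h10 : (1 : A ⧸ J ^ 2) = 0 := this
        rw [← mul_one (ψ _), h10, mul_zero]
      · rw [h1.pow_succ_eq] at h3
        exact h3
    let χ : C ⧸ K →ₐ[A] A ⧸ J ^ 2 := Ideal.Quotient.liftₐ K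
      (ψ.comp (IsScalarTower.toAlgHom A C E)) (fun a ha ↦ by
        obtain ⟨b, rfl⟩ := Ideal.mem_span_singleton'.mp ha
        rw [map_mul]
        exact (congrArg _ hψε).trans (mul_zero _))
    intro a (ha : algebraMap A (C ⧸ K) a = 0)
    have h1 : Ideal.Quotient.mk (J ^ 2) a = 0 := by
      rw [← map_zero χ, ← ha, AlgHom.commutes]; rfl
    rw [Ideal.Quotient.eq_zero_iff_mem, sq] at h1
    exact h1
  have hJ : J = ⊥ := Submodule.eq_bot_of_le_smul_of_le_jacobson_bot J J hJfg hJJ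
    (hJI.trans HenselianRing.jac)
  let e : A ≃ₐ[A] C ⧸ K := AlgEquiv.ofBijective (Algebra.ofId A (C ⧸ K))
    ⟨(RingHom.injective_iff_ker_eq_bot _).mpr hJ, hsurj⟩
  refine ⟨(e.symm : C ⧸ K →ₐ[A] A).comp φ, fun y ↦ ?_⟩
  have h1 : algebraMap A (C ⧸ K) (e.symm (φ y)) = φ y := e.apply_symm_apply (φ y)
  rw [← hσ'a, ← hφσ]
  have h2 := congrArg σ' h1
  exact h2

/-- An `A ⧸ I`-point of an étale `A`-algebra lifts to an `A`-point when `(A, I)` is Henselian and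
the algebra is a principal localization of a finite, finitely presented `A`-algebra. -/
theorem exists_algHom_lift {A C E : Type*} [CommRing A] [CommRing C] [CommRing E]
    [Algebra A C] [Algebra A E] [Algebra C E] [IsScalarTower A C E] (Δ : C)
    [IsLocalization.Away Δ E] [Module.Finite A C] [Algebra.FinitePresentation A C]
    [Algebra.Etale A E] (I : Ideal A) [HenselianRing A I] (σE : E →ₐ[A] A ⧸ I) :
    ∃ τ : E →ₐ[A] A, ∀ y, Ideal.Quotient.mk I (τ y) = σE y := by
  let σ : C →ₐ[A] A ⧸ I := σE.comp (IsScalarTower.toAlgHom A C E)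
  have hσ (x : C) : σ x = σE (algebraMap C E x) := rfl
  obtain ⟨c, hc, h⟩ := exists_rank_one_mod Δ I σE σ hσ
  obtain ⟨ε, hε, hε1, hεI⟩ := exists_isIdempotentElem_of_rank_one_mod I σ c hc h
  exact exists_algHom_lift_of_idempotent Δ I σE σ hσ ε hε hε1 hεI

/-! ### Lifting factorizations and idempotent matrices -/

/-- Over a Henselian pair, a factorization modulo `I` of a monic polynomial into coprime monic
factors lifts to a factorization into coprime factors: such factorizations are the points of the
universal coprime factorization ring. -/
theorem exists_monic_coprime_factors {A : Type*} [CommRing A] (I : Ideal A) [HenselianRing A I]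
    (h : A[X]) (hh : h.Monic) (g k : (A ⧸ I)[X]) (hg : g.Monic) (hk : k.Monic)
    (hgk : IsCoprime g k) (hmul : g * k = h.map (Ideal.Quotient.mk I)) :
    ∃ g₁ g₂ : A[X], g₁ * g₂ = h ∧ IsCoprime g₁ g₂ ∧
      g₁.map (Ideal.Quotient.mk I) = g ∧ g₂.map (Ideal.Quotient.mk I) = k := by
  rcases subsingleton_or_nontrivial (A ⧸ I) with hI | hI
  · refine ⟨1, h, one_mul h, isCoprime_one_left, Subsingleton.elim _ _, Subsingleton.elim _ _⟩
  have hdeg : h.natDegree = g.natDegree + k.natDegree := by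
    rw [← hh.natDegree_map (Ideal.Quotient.mk I), ← hmul, hg.natDegree_mul hk]
  let p : MonicDegreeEq A h.natDegree := .mk h hh rfl
  let σE : UniversalCoprimeFactorizationRing g.natDegree k.natDegree hdeg p →ₐ[A] A ⧸ I :=
    (UniversalCoprimeFactorizationRing.homEquiv (A ⧸ I) _ _ hdeg p).symm
      ⟨(.mk g hg rfl, .mk k hk rfl), hmul, hgk⟩
  obtain ⟨τ, hτ⟩ := exists_algHom_lift
    (C := UniversalFactorizationRing g.natDegree k.natDegree hdeg p)
    (UniversalFactorizationRing.presentation g.natDegree k.natDegree hdeg p).jacobian I σE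
  have hτ' : (Ideal.Quotient.mkₐ A I).comp τ = σE := AlgHom.ext hτ
  let q := UniversalCoprimeFactorizationRing.homEquiv A _ _ hdeg p τ
  have h1 := UniversalCoprimeFactorizationRing.homEquiv_comp_fst _ _ _ hdeg p τ
    (Ideal.Quotient.mkₐ A I)
  have h2 := UniversalCoprimeFactorizationRing.homEquiv_comp_snd _ _ _ hdeg p τ
    (Ideal.Quotient.mkₐ A I)
  rw [hτ', Equiv.apply_symm_apply] at h1 h2
  refine ⟨q.1.1.1, q.1.2.1, ?_, q.2.2, ?_, ?_⟩
  · exact q.2.1.trans (Polynomial.map_id)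
  · exact congrArg Subtype.val h1.symm
  · exact congrArg Subtype.val h2.symm

/-- Over a Henselian pair, idempotent matrices lift. If `E` is any lift and `F = E ^ 2 - E`, then
`E` is a root of `h = χ_F (X ^ 2 - X)`, which is congruent to `X ^ n * (X - 1) ^ n`. Lifting this
coprime factorization to `h = g₁ * g₂` with `u * g₁ + v * g₂ = 1`, the matrix `(u * g₁)(E)` is an
idempotent congruent to `E`. -/
theorem exists_isIdempotentElem_matrix_lift {A ι : Type*} [CommRing A] [Fintype ι] [DecidableEq ι]
    (I : Ideal A) [HenselianRing A I] (E : Matrix ι ι A)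
    (hE : IsIdempotentElem ((Ideal.Quotient.mk I).mapMatrix E)) :
    ∃ e : Matrix ι ι A, IsIdempotentElem e ∧
      (Ideal.Quotient.mk I).mapMatrix e = (Ideal.Quotient.mk I).mapMatrix E := by
  nontriviality A
  rcases isEmpty_or_nonempty ι with hι | hι
  · exact ⟨0, Subsingleton.elim _ _, Subsingleton.elim _ _⟩
  obtain ⟨m, hm⟩ : ∃ m, Fintype.card ι = m + 1 :=
    ⟨_, (Nat.succ_pred_eq_of_pos Fintype.card_pos).symm⟩
  set F : Matrix ι ι A := E * (E - 1) with hF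
  have hFmod : F.map (Ideal.Quotient.mk I) = 0 := by
    change (Ideal.Quotient.mk I).mapMatrix F = 0
    rw [hF, map_mul, map_sub, map_one, mul_sub, mul_one, hE.eq, sub_self]
  let h : A[X] := F.charpoly.comp (X * (X - 1))
  have hX1 : (X - 1 : A[X]).Monic := by simpa using monic_X_sub_C (1 : A)
  have hh : h.Monic := by
    refine F.charpoly_monic.comp (monic_X.mul hX1) ?_
    rw [monic_X.natDegree_mul hX1, natDegree_X]
    omega
  have hhE : aeval E h = 0 := by
    have h1 : aeval E (X * (X - 1) : A[X]) = F := by simp [hF]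
    rw [aeval_comp, h1, Matrix.aeval_self_charpoly]
  obtain ⟨g₁, g₂, hmul, ⟨u, v, huv⟩, hg₁, hg₂⟩ := exists_monic_coprime_factors I h hh
    (X ^ (m + 1)) ((X - 1) ^ (m + 1)) (monic_X_pow _)
    (Monic.pow (by simpa using monic_X_sub_C (1 : A ⧸ I)) _)
    (IsCoprime.pow ⟨1, -1, by ring⟩) (by
      rw [map_comp, ← Matrix.charpoly_map, hFmod, Matrix.charpoly_zero, hm]
      simp [mul_pow])
  refine ⟨aeval E (u * g₁), ?_, ?_⟩
  · have h1 : (u * g₁) * (u * g₁) = u * g₁ - u * v * h := by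
      rw [← hmul]
      linear_combination (u * g₁) * huv
    rw [IsIdempotentElem, ← map_mul, h1, map_sub, map_mul _ (u * v), hhE, mul_zero, sub_zero]
  · set Eb := (Ideal.Quotient.mk I).mapMatrix E with hEb
    have h1 : (Ideal.Quotient.mk I).mapMatrix (aeval E (u * g₁)) =
        aeval Eb ((u * g₁).map (Ideal.Quotient.mk I)) := by
      rw [aeval_def, aeval_def, hom_eval₂, eval₂_map]
      congr 1
      ext a i j
      simp [Matrix.algebraMap_matrix_apply, apply_ite (Ideal.Quotient.mk I)]
    have huv' := congrArg (Polynomial.map (Ideal.Quotient.mk I)) huv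
    simp only [Polynomial.map_add, Polynomial.map_mul, hg₁, hg₂, Polynomial.map_one] at huv'
    have h2 : (u * g₁).map (Ideal.Quotient.mk I) = X - X * (X - 1) *
        (u.map (Ideal.Quotient.mk I) * X ^ m + v.map (Ideal.Quotient.mk I) * (X - 1) ^ m) := by
      rw [Polynomial.map_mul, hg₁]
      linear_combination X * huv'
    have h3 : aeval Eb (X * (X - 1) : (A ⧸ I)[X]) = 0 := by
      simp [mul_sub, hE.eq]
    rw [h1, h2, map_sub, map_mul _ (X * (X - 1)), h3, zero_mul, sub_zero, aeval_X]

/-! ### Isomorphisms modulo the kernel of the completion map -/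

/-- An element of the completion whose image in `A ⧸ I` is a unit is a unit. Each component in
`A ⧸ I ^ n` is the image of a unit of `A`, and the componentwise inverses are compatible. -/
theorem isUnit_of_isUnit_evalOneₐ {A : Type*} [CommRing A] {I : Ideal A} [HenselianRing A I]
    {z : AdicCompletion I A} (hz : IsUnit (AdicCompletion.evalOneₐ I z)) : IsUnit z := by
  have hu (n : ℕ) : IsUnit (z.val n) := by
    rcases n with - | n
    · have : Subsingleton (A ⧸ (I ^ 0 • ⊤ : Ideal A)) :=
        Ideal.Quotient.subsingleton_iff.mpr (by simp)
      exact isUnit_of_subsingleton _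
    · obtain ⟨a, ha⟩ := Ideal.Quotient.mk_surjective (z.val (n + 1))
      rw [← ha]
      refine IsUnit.map (Ideal.Quotient.mk _) (isUnit_of_isUnit_mk (I := I) ?_)
      have h1 : z.val 1 = Ideal.Quotient.mk _ a := by
        rw [← z.property (Nat.le_add_left 1 n)]
        exact (congrArg (AdicCompletion.transitionMap I A _) ha).symm
      have h2 : AdicCompletion.evalOneₐ I z = Ideal.Quotient.mk I a := by
        have : AdicCompletion.evalₐ I 1 z = Ideal.Quotient.mk (I ^ 1) a := by
          rw [← AdicCompletion.factor_eval_eq_evalₐ I z (le_of_eq (Ideal.mul_top _)),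
            AdicCompletion.eval_apply]
          exact (congrArg _ h1).trans rfl
        rw [← AdicCompletion.factorₐ_evalₐ_one, this]
        rfl
      rwa [← h2]
  refine IsUnit.of_mul_eq_one ⟨fun n ↦ Ring.inverse (z.val n), fun {m n} hmn ↦ ?_⟩ ?_
  · have h1 : AdicCompletion.transitionMap I A hmn (z.val n) = z.val m := z.property hmn
    have h2 : AdicCompletion.transitionMapₐ I hmn (Ring.inverse (z.val n)) * z.val m = 1 := by
      rw [← h1]
      change AdicCompletion.transitionMapₐ I hmn _ * AdicCompletion.transitionMapₐ I hmn _ = 1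
      rw [← map_mul, Ring.inverse_mul_cancel _ (hu n), map_one]
    change AdicCompletion.transitionMapₐ I hmn (Ring.inverse (z.val n)) = _
    rw [← Ring.mul_inverse_cancel_right _ (AdicCompletion.transitionMapₐ I hmn _) (hu m), h2,
      one_mul]
  · ext n
    exact Ring.mul_inverse_cancel _ (hu n)

theorem ker_evalOneₐ_le_jacobson {A : Type*} [CommRing A] (I : Ideal A) [HenselianRing A I] :
    RingHom.ker (AdicCompletion.evalOneₐ I) ≤ Ideal.jacobson ⊥ := by
  intro x hx
  rw [Ideal.mem_jacobson_bot]
  intro y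
  refine isUnit_of_isUnit_evalOneₐ ?_
  rw [map_add, map_mul, hx]
  simp

theorem surjective_of_sub_mem_smul_top {R M : Type*} [CommRing R] [AddCommGroup M] [Module R M]
    [Module.Finite R M] {K : Ideal R} (hK : K ≤ Ideal.jacobson ⊥) (γ : M →ₗ[R] M)
    (h : ∀ x, γ x - x ∈ (K • ⊤ : Submodule R M)) : Function.Surjective γ := by
  rw [← LinearMap.range_eq_top, ← top_le_iff]
  refine Submodule.le_of_le_smul_of_le_jacobson_bot Module.Finite.fg_top hK fun x _ ↦ ?_
  rw [← sub_sub_cancel (γ x) x]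
  exact sub_mem (Submodule.mem_sup_left ⟨x, rfl⟩) (Submodule.mem_sup_right (h x))

/-- Maps between finite modules that are mutually inverse modulo an ideal in the Jacobson radical
are isomorphisms (though not necessarily inverse to each other): both composites are surjective by
Nakayama's lemma, hence injective. -/
theorem nonempty_linearEquiv_of_inverse_mod {R M M' : Type*} [CommRing R] [AddCommGroup M]
    [Module R M] [Module.Finite R M] [AddCommGroup M'] [Module R M'] [Module.Finite R M']
    {K : Ideal R} (hK : K ≤ Ideal.jacobson ⊥) (α : M →ₗ[R] M') (β : M' →ₗ[R] M)
    (h₁ : ∀ x, β (α x) - x ∈ (K • ⊤ : Submodule R M))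
    (h₂ : ∀ y, α (β y) - y ∈ (K • ⊤ : Submodule R M')) : Nonempty (M ≃ₗ[R] M') := by
  have hβα := surjective_of_sub_mem_smul_top hK (β ∘ₗ α) h₁
  have hαβ := surjective_of_sub_mem_smul_top hK (α ∘ₗ β) h₂
  exact ⟨LinearEquiv.ofBijective α
    ⟨.of_comp (OrzechProperty.injective_of_surjective_endomorphism _ hβα),
      .of_comp hαβ⟩⟩

theorem toLin'_mem_smul_top {R ι : Type*} [CommRing R] [Fintype ι] [DecidableEq ι] {K : Ideal R}
    (D : Matrix ι ι R) (hD : ∀ i j, D i j ∈ K) (w : ι → R) :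
    Matrix.toLin' D w ∈ (K • ⊤ : Submodule R (ι → R)) := by
  rw [pi_eq_sum_univ' (Matrix.toLin' D w)]
  refine sum_mem fun i _ ↦ Submodule.smul_mem_smul ?_ trivial
  rw [Matrix.toLin'_apply, Matrix.mulVec, dotProduct]
  exact sum_mem fun j _ ↦ K.mul_mem_right _ (hD i j)

theorem piScalarRight_baseChange_toLin' {A R ι : Type*} [CommRing A] [CommRing R] [Algebra A R]
    [Fintype ι] [DecidableEq ι] (e : Matrix ι ι A) (t : R ⊗[A] (ι → A)) :
    TensorProduct.piScalarRight A R R ι ((Matrix.toLin' e).baseChange R t) =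
      Matrix.toLin' (e.map (algebraMap A R)) (TensorProduct.piScalarRight A R R ι t) := by
  induction t with
  | zero => simp
  | add x y hx hy => simp only [map_add, hx, hy]
  | tmul r w =>
    ext i
    simp [Matrix.mulVec, dotProduct, Algebra.smul_def, Finset.sum_mul, mul_assoc]

end HenselianDescent

/-- Lemma 4.14 of the paper: if `(A, I)` is a Henselian pair and `M` is a finitely generated
projective module over the `I`-adic completion `Â` of `A`, then `M` descends: there is a finitely
generated projective `A`-module `N` with `M ≅ Â ⊗[A] N` as `Â`-modules. -/
theorem stmt_5 {A : Type u} [CommRing A] (I : Ideal A) [HenselianRing A I]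
    (M : Type v) [AddCommGroup M] [Module (AdicCompletion I A) M]
    [Module.Finite (AdicCompletion I A) M] [Module.Projective (AdicCompletion I A) M] :
    ∃ (N : Type u) (_ : AddCommGroup N) (_ : Module A N),
      Module.Finite A N ∧ Module.Projective A N ∧
      Nonempty (M ≃ₗ[AdicCompletion I A] (AdicCompletion I A ⊗[A] N)) := by
  set R := AdicCompletion I A with hR
  obtain ⟨n, f, s, -, -, hfs⟩ := Module.Finite.exists_comp_eq_id_of_projective R M
  have hfs' (x : M) : f (s x) = x := LinearMap.congr_fun hfs x
  let e := LinearMap.toMatrix' (s ∘ₗ f)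
  have he (w : Fin n → R) : Matrix.toLin' e w = s (f w) := by simp [e]
  have hee : IsIdempotentElem e := by
    change e * e = e
    rw [← LinearMap.toMatrix'_comp]
    exact congrArg _ (LinearMap.ext fun w ↦ congrArg s (hfs' (f w)))
  -- Lift the reduction of `e` modulo `I` to an idempotent matrix `e₀` over `A`.
  choose E hE using fun i j ↦ Ideal.Quotient.mk_surjective (AdicCompletion.evalOneₐ I (e i j))
  have hEe : (Ideal.Quotient.mk I).mapMatrix (Matrix.of E) =
      (AdicCompletion.evalOneₐ I : R →+* A ⧸ I).mapMatrix e := by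
    ext i j
    exact hE i j
  obtain ⟨e₀, he₀, he₀E⟩ := HenselianDescent.exists_isIdempotentElem_matrix_lift I (Matrix.of E)
    (by rw [hEe]; exact hee.map _)
  have hmem (i j : Fin n) : (e₀.map (algebraMap A R) - e) i j ∈
      RingHom.ker (AdicCompletion.evalOneₐ I) := by
    have h1 := congrFun (congrFun (he₀E.trans hEe) i) j
    rw [RingHom.mem_ker, Matrix.sub_apply, map_sub, Matrix.map_apply, AlgHom.commutes, sub_eq_zero]
    exact h1
  let N := LinearMap.range (Matrix.toLin' e₀)
  let i : N →ₗ[A] Fin n → A := N.subtype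
  let p : (Fin n → A) →ₗ[A] N := (Matrix.toLin' e₀).rangeRestrict
  have hip : i ∘ₗ p = Matrix.toLin' e₀ := rfl
  have hpi : p ∘ₗ i = LinearMap.id := by
    ext1 ⟨_, w, rfl⟩
    apply Subtype.ext
    change Matrix.toLin' e₀ (Matrix.toLin' e₀ w) = Matrix.toLin' e₀ w
    rw [← LinearMap.comp_apply, ← Matrix.toLin'_mul, he₀.eq]
  -- `i'` and `p'` exhibit `R ⊗[A] N` as the image of the idempotent `e₀` on `R ^ n`.
  let φ := TensorProduct.piScalarRight A R R (Fin n)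
  let i' : R ⊗[A] N →ₗ[R] Fin n → R := φ.toLinearMap ∘ₗ i.baseChange R
  let p' : (Fin n → R) →ₗ[R] R ⊗[A] N := p.baseChange R ∘ₗ φ.symm.toLinearMap
  have hp'i' (y : R ⊗[A] N) : p' (i' y) = y := by
    have := LinearMap.congr_fun (congrArg (LinearMap.baseChange R) hpi) y
    rw [LinearMap.baseChange_comp, LinearMap.baseChange_id] at this
    simpa [p', i'] using this
  have hi'p' (w : Fin n → R) : i' (p' w) = Matrix.toLin' (e₀.map (algebraMap A R)) w := by
    have := HenselianDescent.piScalarRight_baseChange_toLin' (R := R) e₀ (φ.symm w)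
    rw [← hip, LinearMap.baseChange_comp, LinearEquiv.apply_symm_apply] at this
    exact this
  have hdiff (w : Fin n → R) : i' (p' w) - s (f w) ∈
      (RingHom.ker (AdicCompletion.evalOneₐ I) • ⊤ : Submodule R (Fin n → R)) := by
    rw [hi'p', ← he, ← LinearMap.sub_apply, ← map_sub]
    exact HenselianDescent.toLin'_mem_smul_top _ hmem w
  refine ⟨N, inferInstance, inferInstance, inferInstance, .of_split i p hpi,
    HenselianDescent.nonempty_linearEquiv_of_inverse_mod
      (HenselianDescent.ker_evalOneₐ_le_jacobson I) (p' ∘ₗ s) (f ∘ₗ i')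
      (fun x ↦ ?_) fun y ↦ ?_⟩
  · have := HenselianDescent.map_mem_smul_top f (hdiff (s x))
    rw [map_sub, hfs', hfs'] at this
    exact this
  · have := neg_mem (HenselianDescent.map_mem_smul_top p' (hdiff (i' y)))
    rw [map_sub, hp'i', hp'i', neg_sub] at this
    exact this
end

section
/- Let A be a commutative ring with π ∈ A such that A is π-adically complete and separated and π is a nonzerodivisor on A. Let B be an A-algebra which is finitely generated and projective as an A-module and such that B[1/π] is an étale A[1/π]-algebra. Then there exists an integer N with the following property: for every A-algebra C that is π-adically complete and separated and on which π is a nonzerodivisor, and for any two A-algebra homomorphisms f₁, f₂ : B → C satisfying f₁(b) − f₂(b) ∈ π^N C for all b ∈ B, one has f₁ = f₂. -/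
/-!
Let `I` be the kernel of the multiplication map `B ⊗[A] B → B`, so that `Ω[B⁄A] = I / I²`.
Since `B[1/π]` is unramified over `A[1/π]`, the localization of `Ω[B⁄A]` away from `π` vanishes, and
as `Ω[B⁄A]` is a finite module some power `π ^ n` kills it, i.e. `π ^ n • I ⊆ I²`
(`exists_pow_smul_ideal_le_sq`).

A pair `f₁, f₂ : B → C` gives a map `φ : B ⊗[A] B → C`, `a ⊗ b ↦ f₁ a * f₂ b`, and `I` is generated by
the elements `1 ⊗ b - b ⊗ 1`, so congruence modulo `π ^ k` means `φ(I) ⊆ π ^ k C`. In that case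
`π ^ n φ(I) ⊆ φ(I)² ⊆ π ^ (2k) C`, and as `π` is a nonzerodivisor on `C`,
`φ(I) ⊆ π ^ (2k - n) C`. For `k ≥ n + 1` this improves the congruence, so starting
from `N = n + 1` it holds modulo every power of `π`, and `C` is `π`-adically separated.
-/

open scoped TensorProduct

universe u v

open KaehlerDifferential in
/-- Some power of `π` kills `Ω[B⁄A]`, because `Ω[B⁄A]` is finite and vanishes after inverting `π`. -/
theorem exists_pow_smul_kaehler_eq_zero {A B : Type u} [CommRing A] (π : A) [CommRing B]
    [Algebra A B] [Algebra.FiniteType A B]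
    [Algebra.FormallyUnramified (Localization.Away π) ((Localization.Away π) ⊗[A] B)] :
    ∃ n : ℕ, ∀ w : Ω[B⁄A], π ^ n • w = 0 := by
  -- `B → A[1/π] ⊗[A] B` is the right inclusion
  let : Algebra B ((Localization.Away π) ⊗[A] B) := Algebra.TensorProduct.rightAlgebra
  have hloc := (isLocalizedModule_iff_isBaseChange (Submonoid.powers π) (Localization.Away π) _).mpr
    (KaehlerDifferential.isBaseChange A (Localization.Away π) B ((Localization.Away π) ⊗[A] B))
  have hsub := (IsLocalizedModule.subsingleton_iff (Submonoid.powers π)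
    ((KaehlerDifferential.map A (Localization.Away π) B
      ((Localization.Away π) ⊗[A] B)).restrictScalars A)).mp
    (inferInstance : Subsingleton Ω[(Localization.Away π) ⊗[A] B⁄Localization.Away π])
  have hpow : ∀ w : Ω[B⁄A], ∃ n : ℕ, π ^ n • w = 0 := by
    intro w
    obtain ⟨_, ⟨n, rfl⟩, h⟩ := hsub w
    exact ⟨n, h⟩
  choose e he using hpow
  obtain ⟨s, hs⟩ := (Module.Finite.fg_top : (⊤ : Submodule B Ω[B⁄A]).FG)
  refine ⟨s.sup e, fun w ↦ ?_⟩
  have hw : w ∈ Submodule.span B (s : Set Ω[B⁄A]) := hs ▸ Submodule.mem_top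
  induction hw using Submodule.span_induction with
  | mem x hx =>
    obtain ⟨d, hd⟩ := Nat.exists_eq_add_of_le' (Finset.le_sup (f := e) hx)
    rw [hd, pow_add, mul_smul, he, smul_zero]
  | zero => exact smul_zero _
  | add x y _ _ hx hy => rw [smul_add, hx, hy, add_zero]
  | smul b x _ hx => rw [smul_comm, hx, smul_zero]

/-- The vanishing of `π ^ n • Ω[B⁄A]`, read in `B ⊗[A] B` through `Ω[B⁄A] = I / I²`. -/
theorem exists_pow_smul_ideal_le_sq {A B : Type u} [CommRing A] (π : A) [CommRing B]
    [Algebra A B] [Algebra.FiniteType A B]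
    [Algebra.FormallyUnramified (Localization.Away π) ((Localization.Away π) ⊗[A] B)] :
    ∃ n : ℕ, ∀ x ∈ KaehlerDifferential.ideal A B,
      algebraMap A (B ⊗[A] B) (π ^ n) * x ∈ KaehlerDifferential.ideal A B ^ 2 := by
  obtain ⟨n, hn⟩ := exists_pow_smul_kaehler_eq_zero (B := B) π
  refine ⟨n, fun x hx ↦ ?_⟩
  have h : KaehlerDifferential.fromIdeal A B (algebraMap A (B ⊗[A] B) (π ^ n) • ⟨x, hx⟩) = 0 := by
    rw [map_smul, algebraMap_smul, hn]
  exact (Ideal.toCotangent_eq_zero _ _).mp h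

/-- The affine case of Proposition 4.12 of the paper (rigidity, after Fujiwara): if `A` is
`π`-adically complete and separated with `π` a nonzerodivisor and `B` is a finite projective
`A`-algebra with `B[1/π]` étale over `A[1/π]`, then there is an `N` such that any two `A`-algebra
maps from `B` to a `π`-adically complete and separated `π`-torsion-free `A`-algebra `C` which
are congruent modulo `π^N` are equal. -/
theorem stmt_9 {A : Type u} [CommRing A] (π : A)
    (hA : IsAdicComplete (Ideal.span {π}) A) (hreg : π ∈ nonZeroDivisors A)
    (B : Type u) [CommRing B] [Algebra A B]
    [Module.Finite A B] [Module.Projective A B]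
    (hEt : Algebra.Etale (Localization.Away π) ((Localization.Away π) ⊗[A] B)) :
    ∃ N : ℕ, ∀ (C : Type v) [CommRing C] [Algebra A C],
      IsAdicComplete (Ideal.span {algebraMap A C π}) C →
      algebraMap A C π ∈ nonZeroDivisors C →
      ∀ f₁ f₂ : B →ₐ[A] C,
        (∀ b : B, f₁ b - f₂ b ∈ Ideal.span {algebraMap A C π ^ N}) →
        f₁ = f₂ := by
  have : Algebra.FiniteType A B := inferInstance
  obtain ⟨n, hn⟩ := exists_pow_smul_ideal_le_sq (B := B) π
  refine ⟨n + 1, fun C _ _ hC hπ f₁ f₂ hf ↦ ?_⟩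
  set p : C := algebraMap A C π with hp
  let φ : B ⊗[A] B →ₐ[A] C := Algebra.TensorProduct.lift f₁ f₂ fun _ _ ↦ Commute.all _ _
  have key : ∀ m : ℕ, (KaehlerDifferential.ideal A B).map φ ≤ Ideal.span {p ^ (n + 1 + m)} := by
    intro m
    induction m with
    | zero =>
      rw [← KaehlerDifferential.span_range_eq_ideal, Ideal.map_span, Ideal.span_le]
      rintro _ ⟨_, ⟨b, rfl⟩, rfl⟩
      have := neg_mem (hf b)
      simpa [φ] using this
    | succ m ih =>
      rw [Ideal.map_le_iff_le_comap]
      intro x hx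
      have h1 : φ (algebraMap A (B ⊗[A] B) (π ^ n) * x) ∈ Ideal.span {p ^ (n + 1 + m)} ^ 2 := by
        have := Ideal.mem_map_of_mem φ (hn x hx)
        rw [Ideal.map_pow] at this
        exact Ideal.pow_right_mono ih 2 this
      rw [Ideal.span_singleton_pow, Ideal.mem_span_singleton, map_mul, AlgHom.commutes, map_pow,
        ← hp, ← pow_mul,
        show (n + 1 + m) * 2 = n + (n + 1 + (m + 1) + m) by ring, pow_add] at h1
      obtain ⟨c, hc⟩ := h1
      rw [mul_assoc, mul_cancel_left_mem_nonZeroDivisors (pow_mem hπ n)] at hc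
      rw [Ideal.mem_comap, Ideal.mem_span_singleton, hc]
      exact Dvd.dvd.mul_right (pow_dvd_pow p (Nat.le_add_right _ m)) c
  refine AlgHom.ext fun b ↦ (sub_eq_zero.mp (hC.toIsHausdorff.haus _ fun k ↦ ?_)).symm
  have h := key k (Ideal.mem_map_of_mem φ
    (KaehlerDifferential.one_smul_sub_smul_one_mem_ideal A b))
  rw [SModEq.zero, smul_eq_mul, Ideal.mul_top, Ideal.span_singleton_pow]
  refine Ideal.span_singleton_le_span_singleton.mpr (pow_dvd_pow p (Nat.le_add_left k (n + 1))) ?_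
  simpa [φ] using h
end

section
/- Let O be a commutative ring and π ∈ O. Let (I, ≤) be a nonempty directed set and (R_i)_{i ∈ I} a directed system of O-algebras with O-algebra transition maps, such that each R_i is π-adically complete and separated and π is a nonzerodivisor on each R_i (with respect to the image of π). Let R_∞ = colim_{i ∈ I} R_i and let R̂_∞ denote the π-adic completion of R_∞. Let B be an R̂_∞-algebra which is finitely generated and projective as an R̂_∞-module and such that B[1/π] is an étale R̂_∞[1/π]-algebra. Then there exist i₀ ∈ I and an R_{i₀}-algebra B₀, finitely generated and projective as an R_{i₀}-module with B₀[1/π] étale over R_{i₀}[1/π], together with an isomorphism of R̂_∞-algebras B ≅ R̂_∞ ⊗_{R_{i₀}} B₀. -/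
/-!
Write `S` for the `π`-adic completion of the colimit.  A finite projective module over `S` is a
direct summand of some `S ^ n`, so `B` is described by finitely many structure constants in `S`: an
idempotent matrix, a multiplication table and the coordinates of `1`.  Because `B[1/π]` is étale over
`S[1/π]`, it has a separability idempotent; multiplied by a large power `π ^ c` it becomes an exact
Casimir element `∑ a j ⊗ b j` of `B` with `∑ a j * b j = π ^ c` (`exists_casimir`).  Its coordinates
are added to the structure constants.  That such constants describe a commutative algebra with a
Casimir element is a finite list of polynomial equations (`Consts.rel`).

Modulo `π ^ N` the completion agrees with the colimit.  The structure constants can therefore be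
approximated by elements of some stage `R j`, which satisfy the equations modulo `π ^ N`
(`exists_consts`).  Taking `N = 3 c + 1`, Newton-type iteration in the `π`-adically complete,
`π`-torsion-free ring `R j` produces an actual algebra `B₀` with nearby structure constants
(`exists_algebra_of_rel`):

* an almost idempotent matrix is corrected to an idempotent one;
* the approximate Casimir element contracts the Hochschild complex up to `π ^ c`, which removes the
  associator of the product (`exists_assoc`);
* an associative product that is commutative to high order is commutative, since the Casimir element
  forces derivations to be divisible by `π` (`comm_of_approx`);
* the Casimir element and Nakayama's lemma show that `π ^ c` kills `Ω[B₀⁄R j]`, so `B₀[1/π]` is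
  unramified, and it is flat, hence étale (`etale_of_casimir`).

Finally, the two algebras `B` and `S ⊗ B₀` have nearby structure constants, so there is an almost
multiplicative linear map `B → S ⊗ B₀` with an almost inverse.  The same homotopy, one degree lower,
corrects it to an algebra homomorphism (`exists_algHom`).  Its composites with the almost inverse are
congruent to the identity modulo `π`, hence bijective (`nonempty_algEquiv`).  In this way Elkik's
approximation theorem is replaced by an explicit deformation argument.
-/

open scoped TensorProduct

universe u u' v w

namespace RigEtale

/-! ### Torsion-free complete modules and successive approximation -/

section Basic

variable {R : Type*} [CommRing R] (π : R)

/-- The submodule `π ^ k • M` of an `R`-module `M`. -/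
def pw (k : ℕ) (M : Type*) [AddCommGroup M] [Module R M] : Submodule R M :=
  LinearMap.range (LinearMap.lsmul R M (π ^ k))

variable {M N : Type*} [AddCommGroup M] [Module R M] [AddCommGroup N] [Module R N]

variable {π}

lemma mem_pw {k : ℕ} {x : M} : x ∈ pw π k M ↔ ∃ t, π ^ k • t = x := Iff.rfl

lemma smul_mem_pw (k : ℕ) (x : M) : π ^ k • x ∈ pw π k M := ⟨x, rfl⟩

lemma pw_mono {k l : ℕ} (h : k ≤ l) {x : M} (hx : x ∈ pw π l M) : x ∈ pw π k M := by
  obtain ⟨t, rfl⟩ := mem_pw.1 hx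
  obtain ⟨d, rfl⟩ := Nat.exists_eq_add_of_le h
  exact ⟨π ^ d • t, by simp [smul_smul, pow_add, mul_comm]⟩

lemma pw_zero (x : M) : x ∈ pw π 0 M := ⟨x, by simp⟩

lemma smul_pw {k : ℕ} (l : ℕ) {x : M} (hx : x ∈ pw π k M) : π ^ l • x ∈ pw π (l + k) M := by
  obtain ⟨t, rfl⟩ := mem_pw.1 hx
  exact ⟨t, by simp [smul_smul, pow_add]⟩

lemma map_pw {k : ℕ} (f : M →ₗ[R] N) {x : M} (hx : x ∈ pw π k M) : f x ∈ pw π k N := by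
  obtain ⟨t, rfl⟩ := mem_pw.1 hx
  exact ⟨f t, by simp⟩

variable (π M) in
/-- `M` is `π`-torsion-free, `π`-adically separated and `π`-adically complete. -/
structure Cpl : Prop where
  tf : ∀ x : M, π • x = 0 → x = 0
  haus : ∀ x : M, (∀ k, x ∈ pw π k M) → x = 0
  prec : ∀ f : ℕ → M, (∀ k, f (k + 1) - f k ∈ pw π k M) → ∃ L, ∀ k, L - f k ∈ pw π k M

lemma tf_pow (tf : ∀ x : M, π • x = 0 → x = 0) (k : ℕ) {x : M} (h : π ^ k • x = 0) : x = 0 := by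
  induction k with
  | zero => simpa using h
  | succ k ih => exact ih (tf _ (by rwa [smul_smul, ← pow_succ']))

lemma tf_cancel (tf : ∀ x : M, π • x = 0 → x = 0) (k : ℕ) {x y : M}
    (h : π ^ k • x = π ^ k • y) : x = y :=
  sub_eq_zero.1 (tf_pow tf k (by rw [smul_sub, h, sub_self]))

lemma tf_hom (tf : ∀ x : N, π • x = 0 → x = 0) (f : M →ₗ[R] N) (h : π • f = 0) : f = 0 := by
  ext x
  exact tf _ (by simpa using LinearMap.congr_fun h x)

lemma pw_cancel (tf : ∀ x : M, π • x = 0 → x = 0) (k l : ℕ) {x : M}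
    (h : π ^ k • x ∈ pw π (k + l) M) : x ∈ pw π l M := by
  obtain ⟨t, ht⟩ := mem_pw.1 h
  exact ⟨t, tf_cancel tf k (by simpa [smul_smul, pow_add] using ht)⟩

/-- A linear map with values in `π ^ k N` is divisible by `π ^ k`, when `N` is torsion-free. -/
lemma hom_mem_pw (tf : ∀ x : N, π • x = 0 → x = 0) (k : ℕ) {f : M →ₗ[R] N}
    (h : ∀ x, f x ∈ pw π k N) : f ∈ pw π k (M →ₗ[R] N) := by
  choose t ht using fun x => mem_pw.1 (h x)
  refine ⟨{ toFun := t, map_add' := fun x y => ?_, map_smul' := fun r x => ?_ }, ?_⟩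
  · exact tf_cancel tf k (by simp [ht])
  · exact tf_cancel tf k (by rw [ht]; simp [smul_comm _ r, ht])
  · ext x; simpa using ht x

lemma apply_mem_pw {k : ℕ} {f : M →ₗ[R] N} (h : f ∈ pw π k (M →ₗ[R] N)) (x : M) :
    f x ∈ pw π k N :=
  map_pw (LinearMap.applyₗ x) h

lemma Cpl.hom (hN : Cpl π N) : Cpl π (M →ₗ[R] N) where
  tf := tf_hom hN.tf
  haus f hf := by
    ext x
    exact hN.haus _ fun k => apply_mem_pw (hf k) x
  prec f hf := by
    choose L hL using fun x => hN.prec (fun k => f k x) fun k => apply_mem_pw (hf k) x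
    have uniq : ∀ x y : N, (∀ k, x - y ∈ pw π k N) → x = y := fun x y h =>
      sub_eq_zero.1 (hN.haus _ h)
    refine ⟨{ toFun := L, map_add' := fun x y => ?_, map_smul' := fun r x => ?_ }, fun k => ?_⟩
    · refine uniq _ _ fun k => ?_
      have := sub_mem (sub_mem (hL (x + y) k) (hL x k)) (hL y k)
      rw [map_add] at this
      convert this using 1
      abel
    · refine uniq _ _ fun k => ?_
      have := sub_mem (hL (r • x) k) ((pw π k N).smul_mem r (hL x k))
      rw [map_smul] at this
      convert this using 1
      simp only [RingHom.id_apply, smul_sub]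
      abel
    · exact hom_mem_pw hN.tf k fun x => hL x k

lemma Cpl.pi {n : Type*} (hM : Cpl π M) : Cpl π (n → M) where
  tf x hx := by
    ext i
    exact hM.tf _ (congrFun hx i)
  haus x hx := by
    ext i
    exact hM.haus _ fun k => map_pw (LinearMap.proj (R := R) (φ := fun _ : n => M) i) (hx k)
  prec f hf := by
    choose L hL using fun i => hM.prec (fun k => f k i) fun k =>
      map_pw (LinearMap.proj (R := R) (φ := fun _ : n => M) i) (hf k)
    refine ⟨L, fun k => ?_⟩
    choose t ht using fun i => mem_pw.1 (hL i k)
    exact ⟨t, by ext i; simpa using ht i⟩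

lemma Cpl.retract (hM : Cpl π M) (s : N →ₗ[R] M) (p : M →ₗ[R] N) (hps : ∀ x, p (s x) = x) :
    Cpl π N where
  tf x hx := by rw [← hps x, hM.tf (s x) (by rw [← map_smul, hx, map_zero]), map_zero]
  haus x hx := by rw [← hps x, hM.haus (s x) fun k => map_pw s (hx k), map_zero]
  prec f hf := by
    obtain ⟨L, hL⟩ := hM.prec (fun k => s (f k)) fun k => by
      rw [← map_sub]; exact map_pw s (hf k)
    refine ⟨p L, fun k => ?_⟩
    have := map_pw p (hL k)
    rwa [map_sub, hps] at this

lemma Cpl.of_projective (hR : Cpl π R) [Module.Finite R M] [Module.Projective R M] :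
    Cpl π M := by
  obtain ⟨n, p, s, -, -, hps⟩ := Module.Finite.exists_comp_eq_id_of_projective R M
  exact (hR.pi (n := Fin n)).retract s p (LinearMap.congr_fun hps)

/-- Comparison of `pw` with the filtration used in the definition of `IsAdicComplete`. -/
lemma span_pow_smul_top (k : ℕ) :
    (Ideal.span {π} ^ k • ⊤ : Submodule R M) = pw π k M := by
  rw [Ideal.span_singleton_pow]
  ext x
  simp [mem_pw, Submodule.ideal_span_singleton_smul,
    Submodule.mem_smul_pointwise_iff_exists]

lemma Cpl.of_isAdicComplete [IsAdicComplete (Ideal.span {π}) M]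
    (tf : ∀ x : M, π • x = 0 → x = 0) : Cpl π M where
  tf := tf
  haus x hx := IsHausdorff.haus (I := Ideal.span {π}) inferInstance x fun n => by
    rw [SModEq.zero, span_pow_smul_top]; exact hx n
  prec f hf := by
    obtain ⟨L, hL⟩ := IsPrecomplete.prec (I := Ideal.span {π}) inferInstance (f := f)
      fun {m n} hmn => by
        rw [SModEq.sub_mem, span_pow_smul_top]
        induction n, hmn using Nat.le_induction with
        | base => simp
        | succ n hmn ih =>
          have := sub_mem ih (pw_mono hmn (hf n))
          convert this using 1
          abel
    refine ⟨L, fun k => ?_⟩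
    have := hL k
    rwa [SModEq.comm, SModEq.sub_mem, span_pow_smul_top] at this

/-- Successive approximation: if every approximate solution `x` of level `n` can be moved by an
element of `π ^ (k₀ + n) M` to one of level `n + 1`, the resulting sequence converges. -/
lemma Cpl.newton (hM : Cpl π M) (Z : ℕ → M → Prop) (k₀ : ℕ) (x₀ : M) (h₀ : Z 0 x₀)
    (step : ∀ n x, Z n x → ∃ x', Z (n + 1) x' ∧ x' - x ∈ pw π (k₀ + n) M) :
    ∃ L, L - x₀ ∈ pw π k₀ M ∧ ∀ n, ∃ x, Z n x ∧ L - x ∈ pw π (k₀ + n) M := by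
  choose! F hF1 hF2 using step
  let f : ℕ → M := fun n => Nat.rec x₀ (fun n x => F n x) n
  have hfZ : ∀ n, Z n (f n) := fun n => by
    induction n with
    | zero => exact h₀
    | succ n ih => exact hF1 n _ ih
  have hf : ∀ n, f (n + 1) - f n ∈ pw π (k₀ + n) M := fun n => hF2 n _ (hfZ n)
  have hf' : ∀ n d, f (d + n) - f n ∈ pw π (k₀ + n) M := fun n d => by
    induction d with
    | zero => simp
    | succ d ih =>
      have := add_mem ih (pw_mono (by lia : k₀ + n ≤ k₀ + (d + n)) (hf (d + n)))
      convert this using 1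
      rw [show d + 1 + n = d + n + 1 by lia]
      abel
  obtain ⟨L, hL⟩ := hM.prec f fun n => pw_mono (by lia) (hf n)
  have key : ∀ n, L - f n ∈ pw π (k₀ + n) M := fun n => by
    have := add_mem (hL (k₀ + n)) (hf' n k₀)
    convert this using 1
    abel
  exact ⟨L, by simpa using! key 0, fun n => ⟨f n, hfZ n, key n⟩⟩

/-- An endomorphism congruent to the identity modulo `π` is bijective. -/
lemma Cpl.bijective (hM : Cpl π M) (T : M →ₗ[R] M) (hT : ∀ x, T x - x ∈ pw π 1 M) :
    Function.Bijective T := by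
  have hT' : ∀ k x, x ∈ pw π k M → x - T x ∈ pw π (k + 1) M := fun k x hx => by
    obtain ⟨t, rfl⟩ := mem_pw.1 hx
    rw [map_smul, ← smul_sub, ← neg_sub, smul_neg]
    exact neg_mem (smul_pw k (hT t))
  constructor
  · rw [injective_iff_map_eq_zero]
    intro x hx
    refine hM.haus x fun k => ?_
    induction k with
    | zero => exact pw_zero x
    | succ k ih => simpa [hx] using hT' k x ih
  · intro y
    obtain ⟨L, -, hL⟩ := hM.newton (fun n x => y - T x ∈ pw π n M) 0 0 (pw_zero _)
      fun n x hx => ⟨x + (y - T x), by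
        have := hT' n _ hx
        convert this using 1
        rw [map_add]; abel, by simpa using hx⟩
    refine ⟨L, (sub_eq_zero.1 (hM.haus _ fun n => ?_)).symm⟩
    obtain ⟨x, hx, hLx⟩ := hL n
    have := sub_mem hx (map_pw T (pw_mono (by lia : n ≤ 0 + n) hLx))
    convert this using 1
    rw [map_sub]; abel

/-- An idempotent modulo `π` lifts to an idempotent endomorphism. -/
lemma Cpl.exists_idempotent (hM : Cpl π M) (k : ℕ) (hk : 1 ≤ k) (E : M →ₗ[R] M)
    (hE : ∀ x, E (E x) - E x ∈ pw π k M) :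
    ∃ E' : M →ₗ[R] M, (∀ x, E' (E' x) = E' x) ∧ ∀ x, E' x - E x ∈ pw π k M := by
  obtain ⟨L, hL0, hL⟩ := hM.hom.newton
    (fun n (T : Module.End R M) => T * T - T ∈ pw π (k + n) (Module.End R M)) k E
    (hom_mem_pw hM.tf _ hE) fun n T hT => by
      -- the Newton step for the equation `T ^ 2 = T`
      refine ⟨3 * T * T - 2 * T * T * T, ?_, ?_⟩
      · obtain ⟨t, ht⟩ := mem_pw.1 hT
        have h1 : (3 * T * T - 2 * T * T * T) * (3 * T * T - 2 * T * T * T)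
            - (3 * T * T - 2 * T * T * T) = (T * T - T) * (T * T - T) * (4 * T * T - 4 * T - 3) := by
          noncomm_ring
        refine pw_mono (by lia : k + (n + 1) ≤ (k + n) + (k + n)) ?_
        rw [h1, ← ht]
        refine ⟨t * t * (4 * T * T - 4 * T - 3), ?_⟩
        simp [smul_smul, pow_add]
      · obtain ⟨t, ht⟩ := mem_pw.1 hT
        have h1 : 3 * T * T - 2 * T * T * T - T = (T * T - T) * (1 - 2 * T) := by noncomm_ring
        rw [h1, ← ht]
        exact ⟨t * (1 - 2 * T), by simp⟩
  have hLi : L * L - L = (0 : Module.End R M) := by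
    refine hM.hom.haus _ fun n => ?_
    obtain ⟨T, hT, hLT⟩ := hL n
    obtain ⟨t, ht⟩ := mem_pw.1 hLT
    refine pw_mono (by lia : n ≤ k + n) ?_
    have h1 : (L * L - L : Module.End R M) = (T * T - T) + ((L - T) * L + T * (L - T) - (L - T)) := by
      noncomm_ring
    rw [h1, ← ht]
    refine add_mem hT ⟨t * L + T * t - t, ?_⟩
    simp [smul_sub, smul_add]
  exact ⟨L, fun x => sub_eq_zero.1 (LinearMap.congr_fun hLi x), fun x => apply_mem_pw hL0 x⟩

end Basic

/-! ### Correcting an almost associative product -/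

section Assoc

variable {R : Type*} [CommRing R] {π : R}
variable {P : Type*} [AddCommGroup P] [Module R P]

/-- The associator `(xy)z - x(yz)` of a bilinear product, as a trilinear map. -/
def assoc (μ : P →ₗ[R] P →ₗ[R] P) : P →ₗ[R] P →ₗ[R] P →ₗ[R] P :=
  LinearMap.mk₂ R (fun x y => μ (μ x y) - (μ x).comp (μ y))
    (fun x x' y => by ext z; simp; abel) (fun r x y => by ext z; simp [smul_sub])
    (fun x y y' => by ext z; simp; abel) (fun r x y => by ext z; simp [smul_sub])

lemma assoc_apply (μ : P →ₗ[R] P →ₗ[R] P) (x y z : P) :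
    assoc μ x y z = μ (μ x y) z - μ x (μ y z) := rfl

/-- The Teichmüller identity: the associator is a Hochschild `3`-cocycle. -/
lemma assoc_cocycle (μ : P →ₗ[R] P →ₗ[R] P) (w x y z : P) :
    μ w (assoc μ x y z) - assoc μ (μ w x) y z + assoc μ w (μ x y) z - assoc μ w x (μ y z)
      + μ (assoc μ w x y) z = 0 := by
  simp only [assoc_apply, map_sub, LinearMap.sub_apply]
  abel

variable {J : Type*} [Fintype J]

variable (π) in
/-- `∑ a j ⊗ b j` is, modulo `π ^ (c + 1)`, a Casimir element for the (not necessarily associative)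
product `μ`, of trace `π ^ c`: this is the approximate form of `π ^ c` times a separability
idempotent. -/
structure Casimir (c : ℕ) (a b : J → P) (μ : P →ₗ[R] P →ₗ[R] P) : Prop where
  trace : ∀ x, ∑ j, μ (a j) (μ (b j) x) - π ^ c • x ∈ pw π (c + 1) P
  comm : ∀ x, ∑ j, (μ x (a j)) ⊗ₜ[R] b j - ∑ j, a j ⊗ₜ[R] μ (b j) x ∈ pw π (c + 1) (P ⊗[R] P)

lemma Casimir.apply {c : ℕ} {a b : J → P} {μ : P →ₗ[R] P →ₗ[R] P} (h : Casimir π c a b μ)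
    {X : Type*} [AddCommGroup X] [Module R X] (T : P →ₗ[R] P →ₗ[R] X) (x : P) :
    ∑ j, T (μ x (a j)) (b j) - ∑ j, T (a j) (μ (b j) x) ∈ pw π (c + 1) X := by
  simpa using map_pw (TensorProduct.lift T) (h.comm x)

/-- The condition only involves the product modulo `π ^ (c + 1)`. -/
lemma Casimir.congr {c : ℕ} {a b : J → P} {μ μ' : P →ₗ[R] P →ₗ[R] P} (h : Casimir π c a b μ)
    (hμ : ∀ x y, μ' x y - μ x y ∈ pw π (c + 1) P) : Casimir π c a b μ' where
  trace x := by
    have h1 : ∑ j, (μ' (a j) (μ' (b j) x) - μ (a j) (μ' (b j) x)) ∈ pw π (c + 1) P :=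
      sum_mem fun j _ => hμ _ _
    have h2 : ∑ j, μ (a j) (μ' (b j) x - μ (b j) x) ∈ pw π (c + 1) P :=
      sum_mem fun j _ => map_pw _ (hμ _ _)
    have := add_mem (add_mem h1 h2) (h.trace x)
    convert this using 1
    simp only [map_sub, Finset.sum_sub_distrib]
    abel
  comm x := by
    have h1 : ∑ j, (μ' x (a j) - μ x (a j)) ⊗ₜ[R] b j ∈ pw π (c + 1) (P ⊗[R] P) :=
      sum_mem fun j _ => map_pw ((TensorProduct.mk R P P).flip (b j)) (hμ _ _)
    have h2 : ∑ j, a j ⊗ₜ[R] (μ' (b j) x - μ (b j) x) ∈ pw π (c + 1) (P ⊗[R] P) :=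
      sum_mem fun j _ => map_pw (TensorProduct.mk R P P (a j)) (hμ _ _)
    have := add_mem (sub_mem h1 h2) (h.comm x)
    convert this using 1
    simp only [TensorProduct.sub_tmul, TensorProduct.tmul_sub, Finset.sum_sub_distrib]
    abel

/-- One step of the correction of an almost associative product.  Writing the associator as
`π ^ (c + K) φ`, the correction is `π ^ K ν` with `ν (x, y) = ∑ a j φ (b j, x, y)`: the Casimir
element provides a contracting homotopy, up to `π ^ c`, of the Hochschild complex. -/
lemma assoc_step (tf : ∀ x : P, π • x = 0 → x = 0) {c K : ℕ} (hK : c + 1 ≤ K) {a b : J → P}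
    {μ : P →ₗ[R] P →ₗ[R] P} (hC : Casimir π c a b μ)
    (hA : ∀ x y z, assoc μ x y z ∈ pw π (c + K) P) :
    ∃ μ' : P →ₗ[R] P →ₗ[R] P, μ' - μ ∈ pw π K (P →ₗ[R] P →ₗ[R] P) ∧
      ∀ x y z, assoc μ' x y z ∈ pw π (c + (K + 1)) P := by
  obtain ⟨φ, hφ⟩ := mem_pw.1 <| hom_mem_pw (tf_hom (tf_hom tf)) (c + K) (f := assoc μ) fun x =>
    hom_mem_pw (tf_hom tf) (c + K) fun y => hom_mem_pw tf (c + K) fun z => hA x y z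
  have hφ' : ∀ x y z, π ^ (c + K) • φ x y z = assoc μ x y z := fun x y z => by
    rw [← hφ]; rfl
  have cocycle : ∀ w x y z, μ w (φ x y z) - φ (μ w x) y z + φ w (μ x y) z - φ w x (μ y z)
      + μ (φ w x y) z = 0 := fun w x y z => tf_pow tf (c + K) <| by
    have := assoc_cocycle μ w x y z
    simp only [← hφ', map_smul, LinearMap.smul_apply] at this
    simpa only [smul_add, smul_sub] using this
  let ν : P →ₗ[R] P →ₗ[R] P := ∑ j, (φ (b j)).compr₂ (μ (a j))
  have hν : ∀ x y, ν x y = ∑ j, μ (a j) (φ (b j) x y) := fun x y => by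
    simp [ν, LinearMap.sum_apply]
  have hN : ∀ x y z, assoc μ x y z ∈ pw π (c + 1) P := fun x y z => pw_mono (by lia) (hA x y z)
  -- up to sign, the Hochschild coboundary of `ν` is `π ^ c φ` modulo `π ^ (c + 1)`
  have key : ∀ x y z, ν (μ x y) z + μ (ν x y) z - μ x (ν y z) - ν x (μ y z) + π ^ c • φ x y z
      ∈ pw π (c + 1) P := fun x y z => by
    have e0 : ∑ j, μ (a j) (μ (b j) (φ x y z) - φ (μ (b j) x) y z + φ (b j) (μ x y) z
        - φ (b j) x (μ y z) + μ (φ (b j) x y) z) = 0 :=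
      Finset.sum_eq_zero fun j _ => by rw [cocycle, map_zero]
    have e1 := hC.trace (φ x y z)
    have e2 := hC.apply (LinearMap.mk₂ R (fun p q => μ p (φ q y z)) (by simp) (by simp)
      (by simp) (by simp)) x
    simp only [LinearMap.mk₂_apply] at e2
    have e3 : ∑ j, assoc μ x (a j) (φ (b j) y z) ∈ pw π (c + 1) P := sum_mem fun j _ => hN _ _ _
    have e4 : ∑ j, assoc μ (a j) (φ (b j) x y) z ∈ pw π (c + 1) P := sum_mem fun j _ => hN _ _ _
    have e5 := (pw π (c + 1) P).zero_mem
    rw [← e0] at e5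
    have := add_mem (add_mem (sub_mem (sub_mem e3 e1) e2) e4) e5
    convert this using 1
    simp only [hν, assoc_apply, map_sub, map_add, map_sum, LinearMap.sum_apply,
      Finset.sum_sub_distrib, Finset.sum_add_distrib]
    abel
  refine ⟨μ + π ^ K • ν, ⟨ν, by simp⟩, fun x y z => ?_⟩
  have e1 := pw_mono (by lia : c + (K + 1) ≤ K + (c + 1)) (smul_pw K (key x y z))
  have e2 := pw_mono (by lia : c + (K + 1) ≤ K + K)
    (smul_pw K (smul_mem_pw (π := π) K (ν (ν x y) z - ν x (ν y z))))
  have := add_mem e1 e2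
  convert this using 1
  have h0 := hφ' x y z
  rw [pow_add, mul_comm, mul_smul, assoc_apply] at h0
  rw [assoc_apply, smul_add, h0]
  simp only [LinearMap.add_apply, LinearMap.smul_apply, map_add, map_smul, smul_add, smul_sub]
  abel

/-- An almost associative product with an approximate Casimir element is close to an associative
one. -/
lemma exists_assoc (hP : Cpl π P) {c K : ℕ} (hK : c + 1 ≤ K) {a b : J → P}
    {μ : P →ₗ[R] P →ₗ[R] P} (hC : Casimir π c a b μ)
    (hA : ∀ x y z, assoc μ x y z ∈ pw π (c + K) P) :
    ∃ μ' : P →ₗ[R] P →ₗ[R] P, (∀ x y, μ' x y - μ x y ∈ pw π K P) ∧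
      ∀ x y z, assoc μ' x y z = 0 := by
  have app : ∀ {k : ℕ} {ν : P →ₗ[R] P →ₗ[R] P}, ν ∈ pw π k _ → ∀ x y, ν x y ∈ pw π k P :=
    fun h x y => apply_mem_pw (apply_mem_pw h x) y
  obtain ⟨L, hL0, hL⟩ := hP.hom.hom.newton
    (fun n (ν : P →ₗ[R] P →ₗ[R] P) => Casimir π c a b ν ∧
      ∀ x y z, assoc ν x y z ∈ pw π (c + (K + n)) P) K μ ⟨hC, hA⟩ fun n ν hν => by
      obtain ⟨ν', h1, h2⟩ := assoc_step hP.tf (by lia : c + 1 ≤ K + n) hν.1 hν.2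
      exact ⟨ν', ⟨hν.1.congr fun x y => pw_mono (by lia) (app h1 x y), h2⟩, h1⟩
  refine ⟨L, app hL0, fun x y z => hP.haus _ fun n => ?_⟩
  obtain ⟨ν, ⟨-, hν⟩, hLν⟩ := hL n
  have e1 := app hLν (L x y) z
  have e2 := map_pw (ν.flip z) (app hLν x y)
  have e3 := app hLν x (L y z)
  have e4 := map_pw (ν x) (app hLν y z)
  have := add_mem (add_mem (sub_mem e1 e3) (sub_mem e2 e4)) (pw_mono (by lia) (hν x y z))
  refine pw_mono (by lia : n ≤ K + n) ?_
  convert this using 1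
  simp only [assoc_apply, LinearMap.sub_apply, map_sub, LinearMap.flip_apply]
  abel

end Assoc

/-! ### Commutativity and unit -/

section Ring

variable {R : Type*} [CommRing R] {π : R}
variable {P : Type w} [AddCommGroup P] [Module R P] {J : Type*} [Fintype J]

/-- An associative product with an approximate Casimir element which is commutative to sufficiently
high order is commutative: if `[·, y]` is divisible by `π ^ k`, the quotient is a derivation, and
the Casimir element shows that it is again divisible by `π`. -/
lemma comm_of_approx (hP : Cpl π P) {c : ℕ} {a b : J → P} {μ : P →ₗ[R] P →ₗ[R] P}
    (hC : Casimir π c a b μ) (hA : ∀ x y z, μ (μ x y) z = μ x (μ y z))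
    (hcomm : ∀ x y, μ x y - μ y x ∈ pw π (c + 1) P) (x y : P) : μ x y = μ y x := by
  refine sub_eq_zero.1 (hP.haus _ fun k => ?_)
  induction k generalizing x with
  | zero => exact pw_zero _
  | succ k ih =>
    obtain ⟨D, hD⟩ := mem_pw.1 <| hom_mem_pw hP.tf k (f := μ.flip y - μ y) fun x => by
      simpa using ih x
    have hD' : ∀ x, π ^ k • D x = μ x y - μ y x := fun x => by
      rw [← LinearMap.smul_apply, hD]; simp
    have leib : ∀ x z, D (μ x z) = μ (D x) z + μ x (D z) := fun x z => tf_cancel hP.tf k <| by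
      have e1 : π ^ k • μ (D x) z = μ (μ x y - μ y x) z := by rw [← hD']; simp
      rw [smul_add, e1, ← map_smul (μ x), hD', hD']
      simp [hA]
    have h1 := hC.apply (μ.comp D) x
    have h2 : ∑ j, (μ (D x) (μ (a j) (b j)) - μ (μ (a j) (b j)) (D x)) ∈ pw π (c + 1) P :=
      sum_mem fun j _ => hcomm _ _
    have h3 := hC.trace (D x)
    have h4 := hcomm x (∑ j, μ (D (a j)) (b j))
    have h5 : π ^ c • D x ∈ pw π (c + 1) P := by
      have := sub_mem (sub_mem (sub_mem h1 h4) h2) h3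
      convert this using 1
      simp only [LinearMap.comp_apply, leib, map_add, map_sum, LinearMap.add_apply,
        LinearMap.sum_apply, hA, Finset.sum_add_distrib, Finset.sum_sub_distrib]
      abel
    rw [← hD']
    exact smul_pw k (pw_cancel hP.tf c 1 h5)

/-- A commutative associative product with an approximate unit comes from a commutative algebra. -/
lemma exists_algebra (hP : Cpl π P) {μ : P →ₗ[R] P →ₗ[R] P}
    (hA : ∀ x y z, μ (μ x y) z = μ x (μ y z)) (hcomm : ∀ x y, μ x y = μ y x)
    (u : P) (hu : ∀ x, μ u x - x ∈ pw π 1 P) :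
    ∃ (B₀ : Type w) (_ : CommRing B₀) (_ : Algebra R B₀) (e : P ≃ₗ[R] B₀),
      ∀ x y, e (μ x y) = e x * e y := by
  obtain ⟨hinj, hsurj⟩ := hP.bijective (μ u) hu
  obtain ⟨e, he⟩ := hsurj u
  have e_mul : ∀ x, μ e x = x := fun x => hinj (by rw [← hA, he])
  let _ : CommRing P :=
    { (inferInstance : AddCommGroup P) with
      mul := fun x y => μ x y
      one := e
      mul_assoc := hA
      mul_comm := hcomm
      one_mul := e_mul
      mul_one := fun x => (hcomm x e).trans (e_mul x)
      left_distrib := fun x y z => map_add (μ x) y z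
      right_distrib := fun x y z => by
        change μ (x + y) z = μ x z + μ y z
        simp
      zero_mul := fun x => by
        change μ 0 x = 0
        simp
      mul_zero := fun x => map_zero (μ x) }
  let _ : Algebra R P := Algebra.ofModule
    (fun r x y => by change μ (r • x) y = r • μ x y; simp)
    (fun r x y => by change μ x (r • y) = r • μ x y; simp)
  exact ⟨P, inferInstance, inferInstance, LinearEquiv.refl R P, fun _ _ => rfl⟩

end Ring

/-! ### Correcting an almost multiplicative map -/

section Hom

variable {S : Type*} [CommRing S] {π : S}
variable {B B' : Type*} [CommRing B] [Algebra S B] [CommRing B'] [Algebra S B']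
variable {J : Type*} [Fintype J]

lemma mul_pw {k : ℕ} {x : B'} (hx : x ∈ pw π k B') (y : B') : x * y ∈ pw π k B' := by
  simpa using map_pw (LinearMap.mulRight S y) hx

lemma mul_pw' {k : ℕ} {x : B'} (hx : x ∈ pw π k B') (y : B') : y * x ∈ pw π k B' := by
  simpa using map_pw (LinearMap.mulLeft S y) hx

/-- The failure of multiplicativity of a linear map, as a bilinear map. -/
def defect (h : B →ₗ[S] B') : B →ₗ[S] B →ₗ[S] B' :=
  (LinearMap.mul S B).compr₂ h - (LinearMap.mul S B').compl₁₂ h h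

lemma defect_apply (h : B →ₗ[S] B') (x y : B) : defect h x y = h (x * y) - h x * h y := rfl

/-- The analogue of `assoc_step` one degree lower in the Hochschild complex: one step of the
correction of an almost multiplicative linear map out of an algebra with a Casimir element of trace
`π ^ c`. -/
lemma hom_step (tf : ∀ x : B', π • x = 0 → x = 0) {c K : ℕ} (hK : c + 1 ≤ K) {a b : J → B}
    (htr : ∑ j, a j * b j = algebraMap S B (π ^ c))
    (hcas : ∀ x, ∑ j, (x * a j) ⊗ₜ[S] b j = ∑ j, a j ⊗ₜ[S] (b j * x))
    {h : B →ₗ[S] B'} (h1 : h 1 - 1 ∈ pw π 1 B') (hA : ∀ x y, defect h x y ∈ pw π (c + K) B') :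
    ∃ h' : B →ₗ[S] B', h' - h ∈ pw π K (B →ₗ[S] B') ∧
      ∀ x y, defect h' x y ∈ pw π (c + (K + 1)) B' := by
  obtain ⟨φ, hφ⟩ := mem_pw.1 <| hom_mem_pw (tf_hom tf) (c + K) (f := defect h) fun x =>
    hom_mem_pw tf (c + K) fun y => hA x y
  have hφ' : ∀ x y, π ^ (c + K) • φ x y = defect h x y := fun x y => by
    rw [← hφ]; rfl
  have cocycle : ∀ w x y, h w * φ x y - φ (w * x) y + φ w (x * y) - φ w x * h y = 0 :=
    fun w x y => by
      refine tf_pow (R := S) (π := π) (M := B') tf (c + K) ?_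
      rw [smul_sub, smul_add, smul_sub, ← mul_smul_comm, ← smul_mul_assoc, hφ', hφ', hφ', hφ']
      simp only [defect_apply, mul_assoc]
      ring
  let ν : B →ₗ[S] B' := ∑ j, LinearMap.mulLeft S (h (a j)) ∘ₗ φ (b j)
  have hν : ∀ x, ν x = ∑ j, h (a j) * φ (b j) x := fun x => by
    simp [ν, LinearMap.sum_apply]
  have hN : ∀ x y, defect h x y ∈ pw π (c + 1) B' := fun x y => pw_mono (by lia) (hA x y)
  have key : ∀ x y, ν (x * y) - ν x * h y - h x * ν y + π ^ c • φ x y ∈ pw π (c + 1) B' :=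
    fun x y => by
    have e0 : ∑ j, h (a j) * (h (b j) * φ x y - φ (b j * x) y + φ (b j) (x * y)
        - φ (b j) x * h y) = 0 :=
      Finset.sum_eq_zero fun j _ => by rw [cocycle, mul_zero]
    have e1 : ∑ j, defect h (a j) (b j) * φ x y ∈ pw π (c + 1) B' :=
      sum_mem fun j _ => mul_pw (hN _ _) _
    have e2 : ∑ j, h (x * a j) * φ (b j) y = ∑ j, h (a j) * φ (b j * x) y := by
      simpa using congrArg (TensorProduct.lift (((LinearMap.mul S B').compl₁₂ h (φ.flip y))))
        (hcas x)
    have e3 : ∑ j, defect h x (a j) * φ (b j) y ∈ pw π (c + 1) B' :=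
      sum_mem fun j _ => mul_pw (hN _ _) _
    have e4 : (π ^ c • (h 1 - 1)) * φ x y ∈ pw π (c + 1) B' := mul_pw (smul_pw c h1) _
    have e5 : ∑ j, h (a j * b j) = π ^ c • h 1 := by
      rw [← map_sum, htr, Algebra.algebraMap_eq_smul_one, map_smul]
    have := add_mem (sub_mem e1 e4) e3
    convert this using 1
    simp only [defect_apply, sub_mul, Finset.sum_sub_distrib, ← Finset.sum_mul, e5, e2, smul_sub,
      smul_mul_assoc, one_mul]
    simp only [mul_sub, mul_add, Finset.sum_sub_distrib, Finset.sum_add_distrib] at e0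
    simp only [hν, Finset.mul_sum, Finset.sum_mul, mul_assoc] at e0 ⊢
    linear_combination e0
  refine ⟨h + π ^ K • ν, ⟨ν, by simp⟩, fun x y => ?_⟩
  have e1 := pw_mono (by lia : c + (K + 1) ≤ K + (c + 1)) (smul_pw K (key x y))
  have e2 := pw_mono (by lia : c + (K + 1) ≤ K + K)
    (smul_pw K (smul_mem_pw (π := π) K (ν x * ν y)))
  have := sub_mem e1 e2
  convert this using 1
  have h0 := hφ' x y
  rw [pow_add, mul_comm, mul_smul, defect_apply] at h0
  rw [defect_apply, smul_add, h0]
  simp only [LinearMap.add_apply, LinearMap.smul_apply, add_mul, mul_add, smul_add, smul_sub,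
    mul_smul_comm, smul_mul_assoc]
  abel

/-- An almost multiplicative linear map out of an algebra with a Casimir element is close to an
algebra homomorphism. -/
lemma exists_algHom (hB' : Cpl π B') {c K : ℕ} (hK : c + 1 ≤ K) {a b : J → B}
    (htr : ∑ j, a j * b j = algebraMap S B (π ^ c))
    (hcas : ∀ x, ∑ j, (x * a j) ⊗ₜ[S] b j = ∑ j, a j ⊗ₜ[S] (b j * x))
    {h : B →ₗ[S] B'} (h1 : h 1 - 1 ∈ pw π 1 B')
    (hA : ∀ x y, h (x * y) - h x * h y ∈ pw π (c + K) B') :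
    ∃ h' : B →ₐ[S] B', ∀ x, h' x - h x ∈ pw π 1 B' := by
  obtain ⟨L, hL0, hL⟩ := hB'.hom.newton
    (fun n (ν : B →ₗ[S] B') => ν 1 - 1 ∈ pw π 1 B' ∧
      ∀ x y, defect ν x y ∈ pw π (c + (K + n)) B') K h ⟨h1, hA⟩ fun n ν hν => by
      obtain ⟨ν', h1, h2⟩ := hom_step hB'.tf (by lia : c + 1 ≤ K + n) htr hcas hν.1 hν.2
      refine ⟨ν', ⟨?_, h2⟩, h1⟩
      have := add_mem (pw_mono (by lia : 1 ≤ K + n) (apply_mem_pw h1 1)) hν.1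
      convert this using 1
      simp
  have hL0' : ∀ x, L x - h x ∈ pw π 1 B' := fun x => pw_mono (by lia) (apply_mem_pw hL0 x)
  have Lmul : ∀ x y, L (x * y) = L x * L y := fun x y => sub_eq_zero.1 <| hB'.haus _ fun n => by
    obtain ⟨ν, ⟨-, hν⟩, hLν⟩ := hL n
    have e1 := apply_mem_pw hLν (x * y)
    have e2 := mul_pw (apply_mem_pw hLν x) (L y)
    have e3 := mul_pw' (apply_mem_pw hLν y) (ν x)
    have := add_mem (sub_mem (sub_mem e1 e2) e3) (pw_mono (by lia) (hν x y))
    refine pw_mono (by lia : n ≤ K + n) ?_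
    convert this using 1
    simp only [defect_apply, LinearMap.sub_apply]
    ring
  -- `1 - L 1` is an idempotent divisible by `π`, hence by all powers of `π`
  have Lone : L 1 = 1 := by
    have e1 : L 1 - 1 ∈ pw π 1 B' := by
      have := add_mem (hL0' 1) h1
      convert this using 1
      ring
    have e2 : (1 - L 1) * (1 - L 1) = 1 - L 1 := by
      have := Lmul 1 1
      rw [mul_one] at this
      linear_combination -this
    refine sub_eq_zero.1 (hB'.haus _ fun k => ?_)
    induction k with
    | zero => exact pw_zero _
    | succ k ih =>
      obtain ⟨s, hs⟩ := mem_pw.1 ih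
      obtain ⟨t, ht⟩ := mem_pw.1 e1
      refine ⟨-(s * t), ?_⟩
      have : (π ^ k • s) * (π ^ 1 • t) = (1 - L 1) * (1 - L 1) := by rw [hs, ht]; ring
      rw [e2, smul_mul_smul_comm, ← pow_add] at this
      simp [this]
  exact ⟨AlgHom.ofLinearMap L Lone Lmul, hL0'⟩

end Hom

/-! ### Étaleness from a Casimir element -/

section Unramified

variable {R : Type*} [CommRing R] {π : R}
variable {B₀ : Type*} [CommRing B₀] [Algebra R B₀] {J : Type*} [Fintype J]

/-- An approximate Casimir element of trace `π ^ c` shows that `π ^ c` kills the differentials: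
it gives `π ^ c Ω ⊆ π ^ (c + 1) Ω`, and Nakayama's lemma applies to `π ^ c Ω`. -/
lemma smul_kaehler_eq_zero (hJ : π ∈ (⊥ : Ideal R).jacobson) [Module.Finite R B₀] {c : ℕ}
    {a b : J → B₀} (hC : Casimir π c a b (LinearMap.mul R B₀)) (ω : Ω[B₀⁄R]) : π ^ c • ω = 0 := by
  let d := KaehlerDifferential.D R B₀
  have h1 : ∀ x, π ^ c • d x ∈ pw π (c + 1) (Ω[B₀⁄R]) := fun x => by
    let T : B₀ →ₗ[R] B₀ →ₗ[R] Ω[B₀⁄R] := LinearMap.mk₂ R (fun p q => q • d p)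
      (by simp) (fun r p q => by rw [d.map_smul, smul_comm]) (by simp [add_smul]) (by simp)
    have h2 := hC.apply T x
    have h3 := map_pw (LinearMap.toSpanSingleton B₀ (Ω[B₀⁄R]) (d x) |>.restrictScalars R)
      (hC.trace 1)
    have h4 := sub_mem h2 h3
    convert h4 using 1
    simp only [T, LinearMap.mk₂_apply, LinearMap.mul_apply', Derivation.leibniz, mul_smul,
      smul_add, Finset.sum_add_distrib, mul_one, LinearMap.coe_restrictScalars,
      LinearMap.toSpanSingleton_apply, sub_smul, Finset.sum_smul, smul_assoc, one_smul]
    simp only [smul_smul, mul_comm]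
    abel
  have h2 : ∀ ω : Ω[B₀⁄R], π ^ c • ω ∈ pw π (c + 1) (Ω[B₀⁄R]) := fun ω => by
    have : ω ∈ Submodule.span B₀ (Set.range d) := by
      rw [KaehlerDifferential.span_range_derivation]; trivial
    induction this using Submodule.span_induction with
    | mem x hx => obtain ⟨x, rfl⟩ := hx; exact h1 x
    | zero => simp
    | add x y _ _ hx hy => rw [smul_add]; exact add_mem hx hy
    | smul r x _ hx =>
      rw [smul_comm]
      exact map_pw ((LinearMap.lsmul B₀ (Ω[B₀⁄R]) r).restrictScalars R) hx
  have fin : Module.Finite R (Ω[B₀⁄R]) := Module.Finite.trans B₀ _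
  have h3 : pw π c (Ω[B₀⁄R]) = ⊥ := by
    refine Submodule.eq_bot_of_le_smul_of_le_jacobson_bot (Ideal.span {π}) _ ?_ ?_
      ((Ideal.span_singleton_le_iff_mem _).2 hJ)
    · rw [pw, LinearMap.range_eq_map]
      exact (Module.Finite.fg_top).map _
    · intro x hx
      obtain ⟨t, rfl⟩ := mem_pw.1 hx
      obtain ⟨s, hs⟩ := mem_pw.1 (h2 t)
      rw [← hs, pow_succ', mul_smul]
      exact Submodule.smul_mem_smul (Ideal.mem_span_singleton_self π) (smul_mem_pw c s)
  exact (Submodule.mem_bot R).1 (h3 ▸ smul_mem_pw c ω)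

/-- A finite projective algebra with an approximate Casimir element of trace `π ^ c` is étale after
inverting `π`: it is unramified because `π ^ c` kills the differentials, and it is flat. -/
lemma etale_of_casimir (hJ : π ∈ (⊥ : Ideal R).jacobson) [Module.Finite R B₀]
    [Module.Projective R B₀] {c : ℕ} {a b : J → B₀}
    (hC : Casimir π c a b (LinearMap.mul R B₀)) :
    Algebra.Etale (Localization.Away π) (Localization.Away π ⊗[R] B₀) := by
  have : Algebra.FinitePresentation R B₀ := by
    have : Module.FinitePresentation R B₀ := Module.finitePresentation_of_projective R B₀
    infer_instance
  have : Algebra.FormallyUnramified (Localization.Away π) (Localization.Away π ⊗[R] B₀) := by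
    let _ : Algebra B₀ (Localization.Away π ⊗[R] B₀) := Algebra.TensorProduct.rightAlgebra
    refine ⟨?_⟩
    refine (KaehlerDifferential.tensorKaehlerEquivBase R (Localization.Away π) B₀
      (Localization.Away π ⊗[R] B₀)).symm.toEquiv.subsingleton_congr.2 ⟨fun x y => ?_⟩
    have : ∀ x : Localization.Away π ⊗[R] Ω[B₀⁄R], x = 0 := fun x => by
      have hu := (IsLocalization.Away.algebraMap_isUnit (S := Localization.Away π) π).pow c
      rw [← map_pow] at hu
      refine (hu.smul_eq_zero).1 ?_
      rw [algebraMap_smul]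
      induction x with
      | zero => simp
      | add x y hx hy => rw [smul_add, hx, hy, add_zero]
      | tmul l ω => rw [← TensorProduct.tmul_smul, smul_kaehler_eq_zero hJ hC, TensorProduct.tmul_zero]
    rw [this x, this y]
  exact .of_formallyUnramified_of_flat

end Unramified

/-! ### Algebras from approximate structure constants -/

/-- Structure constants, in a ring `T`, of an algebra presented as a retract of `T ^ n`: the
idempotent matrix `E`, the multiplication table `M`, the coordinates `u` of the unit and the
coordinates `σ` of a Casimir element. -/
structure Consts (n : ℕ) (T : Type*) where
  /-- the idempotent matrix, row `i` being the image of the `i`-th basis vector -/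
  E : Fin n → Fin n → T
  /-- the multiplication table: `M i j` is the product of the `i`-th and `j`-th generators -/
  M : Fin n → Fin n → Fin n → T
  /-- the coordinates of the unit -/
  u : Fin n → T
  /-- the coordinates of the Casimir element -/
  σ : Fin n → Fin n → T

namespace Consts

variable {n : ℕ} {T T' : Type*} [CommRing T] [CommRing T']

/-- Transport of structure constants along a ring homomorphism. -/
def map (φ : T →+* T') (C : Consts n T) : Consts n T' where
  E i j := φ (C.E i j)
  M i j k := φ (C.M i j k)
  u i := φ (C.u i)
  σ i j := φ (C.σ i j)

/-- The polynomial expressions in the structure constants whose vanishing says that they define a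
commutative, associative and unital algebra with a Casimir element of trace `π ^ c`.  Some of them
do not depend on all four indices.  In order: `E` is idempotent; the products lie in the image of
`E`; the product is unchanged when `E` is applied to its first or its second factor; commutativity;
associativity; unit; trace of the Casimir element; invariance of the Casimir element. -/
def rel (π : T) (c : ℕ) (C : Consts n T) : Fin 9 → Fin n → Fin n → Fin n → Fin n → T :=
  ![fun _ _ j l => ∑ k, C.E j k * C.E k l - C.E j l,
    fun _ j k l => ∑ i, C.M j k i * C.E i l - C.M j k l,
    fun _ j k l => ∑ i, C.E j i * C.M i k l - C.M j k l,
    fun _ j k l => ∑ i, C.E k i * C.M j i l - C.M j k l,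
    fun _ j k l => C.M j k l - C.M k j l,
    fun i j k l => ∑ p, C.M i j p * C.M p k l - ∑ p, C.M j k p * C.M i p l,
    fun _ _ j l => ∑ k, C.u k * C.M k j l - C.E j l,
    fun _ _ i l => ∑ j, ∑ k, C.σ j k * ∑ p, C.M k i p * C.M j p l - π ^ c * C.E i l,
    fun _ i p q => ∑ j, C.σ j q * C.M i j p - ∑ k, C.σ p k * C.M k i q]

lemma map_rel (φ : T →+* T') (π : T) (c : ℕ) (C : Consts n T) (r : Fin 9) (i j k l : Fin n) :
    φ (C.rel π c r i j k l) = (C.map φ).rel (φ π) c r i j k l := by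
  fin_cases r <;> simp [rel, map]

end Consts

section Core

variable {R : Type*} [CommRing R] {π : R} {n : ℕ}

lemma pi_mem_pw {ι : Type*} {k : ℕ} {z : ι → R} (h : ∀ l, z l ∈ pw π k R) :
    z ∈ pw π k (ι → R) := by
  choose t ht using fun l => mem_pw.1 (h l)
  exact ⟨t, funext ht⟩

variable {X : Type*} [AddCommGroup X] [Module R X]

lemma pw_of_basis {k : ℕ} (L : (Fin n → R) →ₗ[R] X) (h : ∀ j, L (Pi.single j 1) ∈ pw π k X)
    (x : Fin n → R) : L x ∈ pw π k X := by
  rw [L.pi_apply_eq_sum_univ]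
  refine sum_mem fun j _ => Submodule.smul_mem _ _ ?_
  convert h j using 2
  ext i
  simp [Pi.single_apply, eq_comm]

lemma pw_of_basis₂ {k : ℕ} (L : (Fin n → R) →ₗ[R] (Fin n → R) →ₗ[R] X)
    (h : ∀ i j, L (Pi.single i 1) (Pi.single j 1) ∈ pw π k X) (x y : Fin n → R) :
    L x y ∈ pw π k X :=
  pw_of_basis (L x) (fun j => pw_of_basis (L.flip (Pi.single j 1)) (fun i => h i j) x) y

/-- The endomorphism of `R ^ n` given by the constants `E`. -/
def Consts.lin (C : Consts n R) : (Fin n → R) →ₗ[R] (Fin n → R) :=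
  Fintype.linearCombination R C.E

/-- The product on `R ^ n` given by the multiplication table `M`. -/
def Consts.bil (C : Consts n R) : (Fin n → R) →ₗ[R] (Fin n → R) →ₗ[R] (Fin n → R) :=
  Fintype.linearCombination R fun j => Fintype.linearCombination R (C.M j)

@[simp] lemma Consts.lin_single (C : Consts n R) (j : Fin n) :
    C.lin (Pi.single j 1) = C.E j := by
  simp [Consts.lin]

@[simp] lemma Consts.bil_single (C : Consts n R) (j k : Fin n) :
    C.bil (Pi.single j 1) (Pi.single k 1) = C.M j k := by
  simp [Consts.bil]

lemma Consts.lin_apply (C : Consts n R) (x : Fin n → R) (l : Fin n) :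
    C.lin x l = ∑ i, x i * C.E i l := by
  simp [Consts.lin, Fintype.linearCombination_apply]

lemma Consts.bil_single_left (C : Consts n R) (j : Fin n) (x : Fin n → R) (l : Fin n) :
    C.bil (Pi.single j 1) x l = ∑ i, x i * C.M j i l := by
  simp [Consts.bil, Fintype.linearCombination_apply]

lemma Consts.bil_single_right (C : Consts n R) (j : Fin n) (x : Fin n → R) (l : Fin n) :
    C.bil x (Pi.single j 1) l = ∑ i, x i * C.M i j l := by
  simp [Consts.bil, Fintype.linearCombination_apply, LinearMap.sum_apply]

lemma sum_swap (σ A B : Fin n → Fin n → R) (v : Fin n → Fin n → X) :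
    ∑ j, ∑ k, ∑ p, (σ j k * A j p) • v p k - ∑ j, ∑ k, ∑ q, (σ j k * B k q) • v j q =
      ∑ p, ∑ q, (∑ j, σ j q * A j p - ∑ k, σ p k * B k q) • v p q := by
  simp only [sub_smul, Finset.sum_sub_distrib, Finset.sum_smul]
  congr 1
  · rw [Finset.sum_congr rfl fun j _ => Finset.sum_comm, Finset.sum_comm]
    exact Finset.sum_congr rfl fun p _ => Finset.sum_comm
  · exact Finset.sum_congr rfl fun j _ => Finset.sum_comm

lemma Casimir.map_equiv {P B : Type*} [AddCommGroup P] [Module R P] [CommRing B] [Algebra R B]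
    {J : Type*} [Fintype J] {c : ℕ} {a b : J → P} {μ : P →ₗ[R] P →ₗ[R] P} (h : Casimir π c a b μ)
    (e : P ≃ₗ[R] B) (he : ∀ x y, e (μ x y) = e x * e y) :
    Casimir π c (fun j => e (a j)) (fun j => e (b j)) (LinearMap.mul R B) where
  trace x := by
    have := map_pw e.toLinearMap (h.trace (e.symm x))
    simpa [he] using this
  comm x := by
    have := map_pw (TensorProduct.map e.toLinearMap e.toLinearMap) (h.comm (e.symm x))
    simpa [he] using this

/-- The last relation, rewritten as the approximate invariance of `∑ σ j k • (e j ⊗ e k)`. -/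
lemma Consts.casimir_mem {π : R} {c N : ℕ} (C : Consts n R)
    (hC : ∀ i p q, C.rel π c 8 i i p q ∈ pw π N R) (x : Fin n → R) :
    ∑ jk : Fin n × Fin n, C.σ jk.1 jk.2 •
      (C.bil x (Pi.single jk.1 1) ⊗ₜ[R] (Pi.single jk.2 1 : Fin n → R)) - ∑ jk : Fin n × Fin n,
        C.σ jk.1 jk.2 • ((Pi.single jk.1 1 : Fin n → R) ⊗ₜ[R] C.bil (Pi.single jk.2 1) x)
      ∈ pw π N ((Fin n → R) ⊗[R] (Fin n → R)) := by
  let m := C.bil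
  let L : (Fin n → R) →ₗ[R] (Fin n → R) ⊗[R] (Fin n → R) := ∑ jk : Fin n × Fin n, C.σ jk.1 jk.2 •
    ((TensorProduct.mk R (Fin n → R) (Fin n → R)).flip (Pi.single jk.2 1) ∘ₗ m.flip (Pi.single jk.1 1)) -
    ∑ jk : Fin n × Fin n, C.σ jk.1 jk.2 •
      (TensorProduct.mk R (Fin n → R) (Fin n → R) (Pi.single jk.1 1) ∘ₗ m (Pi.single jk.2 1))
  have hL : ∀ x, L x = ∑ jk : Fin n × Fin n, C.σ jk.1 jk.2 •
    (m x (Pi.single jk.1 1) ⊗ₜ[R] (Pi.single jk.2 1 : Fin n → R)) - ∑ jk : Fin n × Fin n,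
      C.σ jk.1 jk.2 • ((Pi.single jk.1 1 : Fin n → R) ⊗ₜ[R] m (Pi.single jk.2 1) x) := fun x => by
    simp [L, LinearMap.sum_apply]
  rw [← hL]
  refine pw_of_basis L (fun i => ?_) x
  have expand : ∀ z : Fin n → R, z = ∑ p, z p • (Pi.single p 1 : Fin n → R) := fun z => by
    ext l; simp [Pi.single_apply]
  have : L (Pi.single i 1) = ∑ p, ∑ q, C.rel π c 8 i i p q •
      ((Pi.single p 1 : Fin n → R) ⊗ₜ[R] (Pi.single q 1 : Fin n → R)) := by
    rw [hL]
    simp only [m, Consts.bil_single, Fintype.sum_prod_type]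
    have e1 : ∀ j k, C.σ j k • (C.M i j ⊗ₜ[R] (Pi.single k 1 : Fin n → R)) =
        ∑ p, (C.σ j k * C.M i j p) • ((Pi.single p 1 : Fin n → R) ⊗ₜ[R] (Pi.single k 1 : Fin n → R)) :=
      fun j k => by
        conv_lhs => rw [expand (C.M i j)]
        simp only [TensorProduct.sum_tmul, Finset.smul_sum, mul_smul, TensorProduct.smul_tmul']
    have e2 : ∀ j k, C.σ j k • ((Pi.single j 1 : Fin n → R) ⊗ₜ[R] C.M k i) =
        ∑ q, (C.σ j k * C.M k i q) • ((Pi.single j 1 : Fin n → R) ⊗ₜ[R] (Pi.single q 1 : Fin n → R)) :=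
      fun j k => by
        conv_lhs => rw [expand (C.M k i)]
        simp only [TensorProduct.tmul_sum, Finset.smul_sum, mul_smul, TensorProduct.tmul_smul]
    simp only [e1, e2]
    have e3 : ∀ p q, C.rel π c 8 i i p q =
      ∑ j, C.σ j q * C.M i j p - ∑ k, C.σ p k * C.M k i q := fun p q => rfl
    simp only [e3]
    exact sum_swap C.σ (C.M i) (fun k => C.M k i)
      fun p q => (Pi.single p 1 : Fin n → R) ⊗ₜ[R] (Pi.single q 1 : Fin n → R)
  rw [this]
  exact sum_mem fun p _ => sum_mem fun q _ => by
    obtain ⟨t, ht⟩ := mem_pw.1 (hC i p q)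
    rw [← ht, smul_assoc]
    exact smul_mem_pw _ _

/-- The main part of `exists_algebra_of_rel`, once a retract `P` of `R ^ n` is given whose
idempotent `s ∘ p` is close to `C.lin`: the product induced on `P` is corrected to an associative
one, which is then commutative and unital. -/
lemma exists_algebra_of_retract {R : Type w} [CommRing R] {π : R} (hR : Cpl π R)
    (hJ : π ∈ (⊥ : Ideal R).jacobson) (c : ℕ) (C : Consts n R)
    (hC : ∀ r i j k l, C.rel π c r i j k l ∈ pw π (c + (2 * c + 1)) R)
    {P : Type w} [AddCommGroup P] [Module R P] (s : P →ₗ[R] (Fin n → R)) (p : (Fin n → R) →ₗ[R] P)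
    (hps : ∀ x, p (s x) = x) (hsp : ∀ x, s (p x) - C.lin x ∈ pw π (c + (2 * c + 1)) (Fin n → R)) :
    ∃ (B₀ : Type w) (_ : CommRing B₀) (_ : Algebra R B₀) (p : (Fin n → R) →ₗ[R] B₀)
      (s : B₀ →ₗ[R] (Fin n → R)), Module.Finite R B₀ ∧ Module.Projective R B₀ ∧
      Algebra.Etale (Localization.Away π) (Localization.Away π ⊗[R] B₀) ∧
      (∀ x, p (s x) = x) ∧ (∀ x, s (p x) - C.lin x ∈ pw π (2 * c + 1) (Fin n → R)) ∧
      (∀ x y, p (C.bil x y) - p x * p y ∈ pw π (2 * c + 1) B₀) ∧ p C.u - 1 ∈ pw π 1 B₀ := by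
  set N := c + (2 * c + 1) with hN
  let m := C.bil
  have hF : Cpl π (Fin n → R) := hR.pi
  -- the relations, in terms of vectors
  have r2 : ∀ x y, m (C.lin x) y - m x y ∈ pw π N (Fin n → R) :=
    pw_of_basis₂ (m ∘ₗ C.lin - m) fun j k => pi_mem_pw fun l => by
      simpa [Consts.rel, m, Consts.bil_single_right] using hC 2 l j k l
  have r3 : ∀ x y, m x (C.lin y) - m x y ∈ pw π N (Fin n → R) :=
    pw_of_basis₂ (m.compl₂ C.lin - m) fun j k => pi_mem_pw fun l => by
      simpa [Consts.rel, m, Consts.bil_single_left] using hC 3 l j k l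
  have r4 : ∀ x y, m x y - m y x ∈ pw π N (Fin n → R) :=
    pw_of_basis₂ (m - m.flip) fun j k => pi_mem_pw fun l => by
      simpa [Consts.rel, m] using hC 4 l j k l
  have r5 : ∀ x y z, assoc m x y z ∈ pw π N (Fin n → R) := fun x y z =>
    pw_of_basis₂ (assoc m x) (fun j k => pw_of_basis (((assoc m).flip (Pi.single j 1)).flip
      (Pi.single k 1)) (fun i => pi_mem_pw fun l => by
        simpa [Consts.rel, m, assoc_apply, Consts.bil_single_left, Consts.bil_single_right]
          using hC 5 i j k l) x) y z
  have r6 : ∀ x, m C.u x - C.lin x ∈ pw π N (Fin n → R) :=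
    pw_of_basis (m C.u - C.lin) fun j => pi_mem_pw fun l => by
      simpa [Consts.rel, m, Consts.bil_single_right] using hC 6 l l j l
  have r7 : ∀ x, ∑ jk : Fin n × Fin n, C.σ jk.1 jk.2 •
      m (Pi.single jk.1 1) (m (Pi.single jk.2 1) x) - π ^ c • C.lin x ∈ pw π N (Fin n → R) := fun x => by
    have := pw_of_basis (π := π) (k := N) ((∑ jk : Fin n × Fin n, C.σ jk.1 jk.2 •
      (m (Pi.single jk.1 1) ∘ₗ m (Pi.single jk.2 1))) - π ^ c • C.lin)
      (fun i => pi_mem_pw fun l => by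
        simpa [Consts.rel, m, LinearMap.sum_apply, Consts.bil_single_left, Fintype.sum_prod_type]
          using hC 7 l l i l) x
    simpa [LinearMap.sum_apply] using this
  have r8 := C.casimir_mem fun i p q => hC 8 i i p q
  have hP : Cpl π P := hF.retract s p hps
  have projP : Module.Projective R P := .of_split s p (LinearMap.ext hps)
  have finP : Module.Finite R P := .of_surjective p fun x => ⟨s x, hps x⟩
  have ml : ∀ x y, m (s (p x)) y - m x y ∈ pw π N (Fin n → R) := fun x y => by
    have := add_mem (map_pw (m.flip y) (hsp x)) (r2 x y)
    simpa using this
  have mr : ∀ x y, m x (s (p y)) - m x y ∈ pw π N (Fin n → R) := fun x y => by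
    have := add_mem (map_pw (m x) (hsp y)) (r3 x y)
    simpa using this
  have mlr : ∀ x y, m (s (p x)) (s (p y)) - m x y ∈ pw π N (Fin n → R) := fun x y => by
    simpa using add_mem (ml x (s (p y))) (mr x y)
  have pE : ∀ x, p (C.lin x) - p x ∈ pw π N P := fun x => by
    have := neg_mem (map_pw p (hsp x))
    rwa [map_sub, hps, neg_sub] at this
  let μ : P →ₗ[R] P →ₗ[R] P := (m.compl₁₂ s s).compr₂ p
  have hμ : ∀ x y, μ x y = p (m (s x) (s y)) := fun x y => rfl
  let a : Fin n × Fin n → P := fun jk => C.σ jk.1 jk.2 • p (Pi.single jk.1 1)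
  let b : Fin n × Fin n → P := fun jk => p (Pi.single jk.2 1)
  have hCas : Casimir π c a b μ := by
    constructor
    · intro x
      refine pw_mono (by lia : c + 1 ≤ N) ?_
      have e1 : ∑ jk : Fin n × Fin n, C.σ jk.1 jk.2 • (μ (p (Pi.single jk.1 1)) (μ (b jk) x) -
          p (m (Pi.single jk.1 1) (m (Pi.single jk.2 1) (s x)))) ∈ pw π N P :=
        sum_mem fun jk _ => Submodule.smul_mem _ _ <| by
          have h1 := map_pw p (mlr (Pi.single jk.1 1) (m (s (b jk)) (s x)))
          have h2 := map_pw (p ∘ₗ m (Pi.single jk.1 1)) (ml (Pi.single jk.2 1) (s x))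
          simpa [hμ, b] using add_mem h1 h2
      have e2 := map_pw p (r7 (s x))
      have e3 := (pw π N P).smul_mem (π ^ c) (pE (s x))
      have := add_mem (add_mem e1 e2) e3
      convert this using 1
      simp only [a, smul_sub, Finset.sum_sub_distrib, map_sub, map_sum, map_smul,
        LinearMap.smul_apply, hps]
      abel
    · intro x
      refine pw_mono (by lia : c + 1 ≤ N) ?_
      have e1 : ∑ jk : Fin n × Fin n, C.σ jk.1 jk.2 • ((μ x (p (Pi.single jk.1 1)) -
          p (m (s x) (Pi.single jk.1 1))) ⊗ₜ[R] b jk) ∈ pw π N (P ⊗[R] P) :=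
        sum_mem fun jk _ => Submodule.smul_mem _ _ <| by
          have := map_pw p (mr (s x) (Pi.single jk.1 1))
          rw [map_sub, ← hμ] at this
          exact map_pw ((TensorProduct.mk R P P).flip (b jk)) this
      have e2 : ∑ jk : Fin n × Fin n, C.σ jk.1 jk.2 • (p (Pi.single jk.1 1) ⊗ₜ[R]
          (μ (b jk) x - p (m (Pi.single jk.2 1) (s x)))) ∈ pw π N (P ⊗[R] P) :=
        sum_mem fun jk _ => Submodule.smul_mem _ _ <| by
          have := map_pw p (ml (Pi.single jk.2 1) (s x))
          rw [map_sub, ← hμ] at this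
          exact map_pw (TensorProduct.mk R P P (p (Pi.single jk.1 1))) this
      have e3 := map_pw (TensorProduct.map p p) (r8 (s x))
      have := add_mem (sub_mem e1 e2) e3
      convert this using 1
      simp only [a, b, smul_sub, Finset.sum_sub_distrib, map_sub, map_sum, map_smul,
        TensorProduct.sub_tmul, TensorProduct.tmul_sub, TensorProduct.map_tmul,
        TensorProduct.smul_tmul']
      abel
  have hA : ∀ x y z, assoc μ x y z ∈ pw π N P := fun x y z => by
    have h1 := map_pw p (ml (m (s x) (s y)) (s z))
    have h2 := map_pw p (mr (s x) (m (s y) (s z)))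
    have h3 := map_pw p (r5 (s x) (s y) (s z))
    have := add_mem (sub_mem h1 h2) h3
    convert this using 1
    simp only [assoc_apply, hμ, map_sub]
    abel
  obtain ⟨μ', hμ', hA'⟩ := exists_assoc hP (by lia : c + 1 ≤ 2 * c + 1) hCas hA
  have hCas' := hCas.congr fun x y => pw_mono (by lia : c + 1 ≤ 2 * c + 1) (hμ' x y)
  have hA'' : ∀ x y z, μ' (μ' x y) z = μ' x (μ' y z) := fun x y z => sub_eq_zero.1 (hA' x y z)
  have hcomm : ∀ x y, μ' x y = μ' y x := comm_of_approx hP hCas' hA'' fun x y => by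
    have h1 := map_pw p (r4 (s x) (s y))
    have := add_mem (sub_mem (hμ' x y) (hμ' y x)) (pw_mono (by lia) h1)
    refine pw_mono (by lia : c + 1 ≤ 2 * c + 1) ?_
    convert this using 1
    rw [hμ, hμ, map_sub]
    abel
  have hu : ∀ x, μ' (p C.u) x - x ∈ pw π 1 P := fun x => by
    have h1 := map_pw p (ml C.u (s x))
    have h2 := map_pw p (r6 (s x))
    have h3 := pE (s x)
    have := add_mem (hμ' (p C.u) x) (pw_mono (by lia) (add_mem (add_mem h1 h2) h3))
    refine pw_mono (by lia : 1 ≤ 2 * c + 1) ?_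
    convert this using 1
    rw [hμ, map_sub, map_sub, hps]
    abel
  obtain ⟨B₀, _, _, e, he⟩ := exists_algebra hP hA'' hcomm (p C.u) hu
  have projB : Module.Projective R B₀ := .of_equiv e
  have finB : Module.Finite R B₀ := .equiv e
  have hCasB := hCas'.map_equiv e he
  refine ⟨B₀, _, _, e.toLinearMap ∘ₗ p, s ∘ₗ e.symm.toLinearMap, finB, projB,
    etale_of_casimir hJ hCasB, ?_, ?_, ?_, ?_⟩
  · intro x; simp [hps]
  · intro x; simpa using pw_mono (by lia) (hsp x)
  · intro x y
    have h1 := neg_mem (map_pw p (mlr x y))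
    have h2 := neg_mem (hμ' (p x) (p y))
    have := map_pw e.toLinearMap (add_mem (pw_mono (by lia) h1) h2)
    convert this using 1
    rw [hμ]
    simp [he]
    rfl
  · have := map_pw e.toLinearMap (hu (e.symm 1))
    simpa [he] using this

/-- Structure constants satisfying the relations of a commutative algebra with a Casimir element
modulo a high power of `π` are close to the structure constants of an actual algebra. -/
theorem exists_algebra_of_rel {R : Type w} [CommRing R] {π : R} (hR : Cpl π R)
    (hJ : π ∈ (⊥ : Ideal R).jacobson) (c : ℕ) (C : Consts n R)
    (hC : ∀ r i j k l, C.rel π c r i j k l ∈ pw π (c + (2 * c + 1)) R) :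
    ∃ (B₀ : Type w) (_ : CommRing B₀) (_ : Algebra R B₀) (p : (Fin n → R) →ₗ[R] B₀)
      (s : B₀ →ₗ[R] (Fin n → R)), Module.Finite R B₀ ∧ Module.Projective R B₀ ∧
      Algebra.Etale (Localization.Away π) (Localization.Away π ⊗[R] B₀) ∧
      (∀ x, p (s x) = x) ∧ (∀ x, s (p x) - C.lin x ∈ pw π (2 * c + 1) (Fin n → R)) ∧
      (∀ x y, p (C.bil x y) - p x * p y ∈ pw π (2 * c + 1) B₀) ∧ p C.u - 1 ∈ pw π 1 B₀ := by
  have r0 : ∀ x, C.lin (C.lin x) - C.lin x ∈ pw π (c + (2 * c + 1)) (Fin n → R) :=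
    pw_of_basis (C.lin ∘ₗ C.lin - C.lin) fun j => pi_mem_pw fun l => by
      simpa [Consts.rel, Consts.lin_apply] using hC 0 l l j l
  obtain ⟨E', hE'i, hE'⟩ := hR.pi.exists_idempotent _ (by lia) C.lin r0
  exact exists_algebra_of_retract hR hJ c C hC (LinearMap.range E').subtype E'.rangeRestrict
    (by rintro ⟨_, x, rfl⟩; exact Subtype.ext (hE'i x)) hE'

end Core

/-! ### Comparison with the base change -/

section Compare

variable {R S : Type*} [CommRing R] [CommRing S] [Algebra R S] {π : R} {n : ℕ}

lemma tmul_pw {M : Type*} [AddCommGroup M] [Module R M] {k : ℕ} {x : M} (hx : x ∈ pw π k M) :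
    (1 : S) ⊗ₜ[R] x ∈ pw (algebraMap R S π) k (S ⊗[R] M) := by
  obtain ⟨t, rfl⟩ := mem_pw.1 hx
  refine ⟨1 ⊗ₜ[R] t, ?_⟩
  rw [LinearMap.lsmul_apply, ← map_pow, algebraMap_smul, TensorProduct.tmul_smul]

/-- Let `B` be a finite projective `S`-algebra with a Casimir element and `B₀` an `R`-algebra whose
structure constants are close to those of `B`.  Then `B` is the base change of `B₀`. -/
theorem nonempty_algEquiv {B B₀ : Type*} [CommRing B] [Algebra S B] [CommRing B₀] [Algebra R B₀]
    (hS : Cpl (algebraMap R S π) S) [Module.Finite S B] [Module.Projective S B]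
    [Module.Finite R B₀] [Module.Projective R B₀]
    {J : Type*} [Fintype J] {c : ℕ} {a b : J → B}
    (htr : ∑ j, a j * b j = algebraMap S B (algebraMap R S π ^ c))
    (hcas : ∀ x, ∑ j, (x * a j) ⊗ₜ[S] b j = ∑ j, a j ⊗ₜ[S] (b j * x))
    (C : Consts n R) (pB : (Fin n → S) →ₗ[S] B) (sB : B →ₗ[S] (Fin n → S))
    (hB : ∀ x, pB (sB x) = x)
    (hE : ∀ i l, sB (pB (Pi.single i 1)) l - algebraMap R S (C.E i l) ∈
      pw (algebraMap R S π) (2 * c + 1) S)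
    (hM : ∀ i j l, sB (pB (Pi.single i 1) * pB (Pi.single j 1)) l - algebraMap R S (C.M i j l) ∈
      pw (algebraMap R S π) (2 * c + 1) S)
    (hu : ∀ l, sB 1 l - algebraMap R S (C.u l) ∈ pw (algebraMap R S π) (2 * c + 1) S)
    (p : (Fin n → R) →ₗ[R] B₀) (s : B₀ →ₗ[R] (Fin n → R)) (hps : ∀ x, p (s x) = x)
    (hsp : ∀ x, s (p x) - C.lin x ∈ pw π (2 * c + 1) (Fin n → R))
    (hmul : ∀ x y, p (C.bil x y) - p x * p y ∈ pw π (2 * c + 1) B₀)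
    (hone : p C.u - 1 ∈ pw π 1 B₀) :
    Nonempty (B ≃ₐ[S] S ⊗[R] B₀) := by
  set ϖ := algebraMap R S π with hϖ
  have hBc : Cpl ϖ B := hS.of_projective
  have hBc' : Cpl ϖ (S ⊗[R] B₀) := hS.of_projective
  let ps := TensorProduct.piScalarRight R S S (Fin n)
  let P : (Fin n → S) →ₗ[S] S ⊗[R] B₀ := p.baseChange S ∘ₗ ps.symm.toLinearMap
  let Q : S ⊗[R] B₀ →ₗ[S] (Fin n → S) := ps.toLinearMap ∘ₗ s.baseChange S
  have hps1 : ∀ x : Fin n → R, ps (1 ⊗ₜ[R] x) = fun l => algebraMap R S (x l) := fun x => by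
    ext l; simp [ps, Algebra.smul_def]
  have hP : ∀ x : Fin n → R, P (fun l => algebraMap R S (x l)) = 1 ⊗ₜ[R] p x := fun x => by
    simp [P, ← hps1]
  have hP1 : ∀ j, P (Pi.single j 1) = 1 ⊗ₜ[R] p (Pi.single j 1) := fun j => by
    rw [← hP]
    congr 1
    ext l
    by_cases h : l = j
    · subst h; simp
    · simp [h]
  have hQ : ∀ x, Q (1 ⊗ₜ[R] x) = fun l => algebraMap R S (s x l) := fun x => by
    simp [Q, hps1]
  have hPQ : ∀ x, P (Q x) = x := fun x => by
    simp only [P, Q, LinearMap.comp_apply, LinearEquiv.coe_coe, LinearEquiv.symm_apply_apply]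
    rw [← LinearMap.comp_apply, ← LinearMap.baseChange_comp,
      show p ∘ₗ s = LinearMap.id from LinearMap.ext hps]
    simp
  -- `P` and `sB` almost factor the identity through each other
  have hPE : ∀ z, P (sB (pB z)) - P z ∈ pw ϖ (2 * c + 1) (S ⊗[R] B₀) :=
    pw_of_basis (P ∘ₗ sB ∘ₗ pB - P) fun i => by
      have h1 := map_pw P (pi_mem_pw (hE i))
      have h2 := tmul_pw (S := S) (map_pw p (hsp (Pi.single i 1)))
      have := sub_mem h1 h2
      convert this using 1
      have h3 : (fun l => sB (pB (Pi.single i 1)) l - algebraMap R S (C.E i l)) =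
        sB (pB (Pi.single i 1)) - fun l => algebraMap R S (C.E i l) := rfl
      rw [h3, map_sub, hP, map_sub, hps, C.lin_single, TensorProduct.tmul_sub, ← hP1]
      simp
  have hQE : ∀ z, pB (Q (P z)) - pB z ∈ pw ϖ (2 * c + 1) B :=
    pw_of_basis (pB ∘ₗ Q ∘ₗ P - pB) fun i => by
      have h1 := map_pw pB (pi_mem_pw (hE i))
      have h2 := map_pw (pB ∘ₗ ps.toLinearMap) (tmul_pw (S := S) (hsp (Pi.single i 1)))
      have := sub_mem h2 h1
      convert this using 1
      have h3 : (fun l => sB (pB (Pi.single i 1)) l - algebraMap R S (C.E i l)) =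
        sB (pB (Pi.single i 1)) - fun l => algebraMap R S (C.E i l) := rfl
      rw [h3, map_sub, hB, TensorProduct.tmul_sub, map_sub, C.lin_single]
      simp only [LinearMap.sub_apply, LinearMap.comp_apply, LinearEquiv.coe_coe, hps1, hP1, hQ]
      abel
  let h : B →ₗ[S] S ⊗[R] B₀ := P ∘ₗ sB
  have hmul' : ∀ x y, h (x * y) - h x * h y ∈ pw ϖ (c + (c + 1)) (S ⊗[R] B₀) := fun x y => by
    have := pw_of_basis₂ (π := ϖ) (k := 2 * c + 1) (((LinearMap.mul S B).compl₁₂ pB pB).compr₂ h -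
      (LinearMap.mul S (S ⊗[R] B₀)).compl₁₂ P P) (fun i j => by
        have h1 := map_pw P (pi_mem_pw (hM i j))
        have h2 := tmul_pw (S := S) (hmul (Pi.single i 1) (Pi.single j 1))
        have := add_mem h1 h2
        convert this using 1
        have h3 : (fun l => sB (pB (Pi.single i 1) * pB (Pi.single j 1)) l -
            algebraMap R S (C.M i j l)) =
          sB (pB (Pi.single i 1) * pB (Pi.single j 1)) - fun l => algebraMap R S (C.M i j l) := rfl
        rw [h3, map_sub, hP, C.bil_single, TensorProduct.tmul_sub]
        simp [h, hP1]) (sB x) (sB y)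
    rw [show c + (c + 1) = 2 * c + 1 by ring]
    simpa [hB, h] using this
  have hone' : h 1 - 1 ∈ pw ϖ 1 (S ⊗[R] B₀) := by
    have h1 := map_pw P (pi_mem_pw hu)
    have h2 := tmul_pw (S := S) hone
    have := add_mem (pw_mono (by lia) h1) h2
    convert this using 1
    have h3 : (fun l => sB 1 l - algebraMap R S (C.u l)) =
      sB 1 - fun l => algebraMap R S (C.u l) := rfl
    rw [h3, map_sub, hP, TensorProduct.tmul_sub, ← Algebra.TensorProduct.one_def]
    simp [h]
  obtain ⟨h', hh'⟩ := exists_algHom hBc' le_rfl htr hcas hone' hmul'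
  let k : S ⊗[R] B₀ →ₗ[S] B := pB ∘ₗ Q
  have b1 := hBc.bijective (k ∘ₗ h'.toLinearMap) fun x => by
    have h1 := map_pw k (hh' x)
    have h2 := hQE (sB x)
    have := add_mem h1 (pw_mono (by lia) h2)
    convert this using 1
    rw [map_sub, hB]
    simp [k, h]
  have b2 := hBc'.bijective (h'.toLinearMap ∘ₗ k) fun x => by
    have h1 := hh' (k x)
    have h2 := hPE (Q x)
    have := add_mem h1 (pw_mono (by lia) h2)
    convert this using 1
    rw [hPQ]
    simp [k, h]
  exact ⟨AlgEquiv.ofBijective h' ⟨Function.Injective.of_comp (f := k) b1.1,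
    Function.Surjective.of_comp (g := k) b2.2⟩⟩

/-- The structure constants of a finite projective algebra with a Casimir element satisfy the
relations. -/
lemma rel_eq_zero {B : Type*} [CommRing B] [Algebra S B] (ϖ : S)
    {J : Type*} [Fintype J] {c : ℕ} {a b : J → B}
    (htr : ∑ j, a j * b j = algebraMap S B (ϖ ^ c))
    (hcas : ∀ x, ∑ j, (x * a j) ⊗ₜ[S] b j = ∑ j, a j ⊗ₜ[S] (b j * x))
    (pB : (Fin n → S) →ₗ[S] B) (sB : B →ₗ[S] (Fin n → S)) (hB : ∀ x, pB (sB x) = x)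
    (r : Fin 9) (i j k l : Fin n) :
    Consts.rel ϖ c
      { E := fun j => sB (pB (Pi.single j 1))
        M := fun j k => sB (pB (Pi.single j 1) * pB (Pi.single k 1))
        u := sB 1
        σ := fun j k => ∑ α, sB (a α) j * sB (b α) k } r i j k l = 0 := by
  -- evaluation of a linear map through coordinates
  have ev : ∀ (L : B →ₗ[S] S) (x : B), ∑ i, sB x i * L (pB (Pi.single i 1)) = L x := fun L x => by
    conv_rhs => rw [← hB x]
    rw [← LinearMap.comp_apply, (L ∘ₗ pB).pi_apply_eq_sum_univ]
    refine Finset.sum_congr rfl fun i _ => ?_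
    rw [smul_eq_mul, LinearMap.comp_apply]
    congr 3
    ext l
    simp [Pi.single_apply, eq_comm]
  have e1 : ∀ x l, ∑ i, sB x i * sB (pB (Pi.single i 1)) l = sB x l := fun x l =>
    ev (LinearMap.proj l ∘ₗ sB) x
  have e2 : ∀ x y l, ∑ i, sB x i * sB (pB (Pi.single i 1) * y) l = sB (x * y) l := fun x y l =>
    ev (LinearMap.proj l ∘ₗ sB ∘ₗ LinearMap.mulRight S y) x
  have e3 : ∀ x y l, ∑ i, sB x i * sB (y * pB (Pi.single i 1)) l = sB (y * x) l := fun x y l =>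
    ev (LinearMap.proj l ∘ₗ sB ∘ₗ LinearMap.mulLeft S y) x
  fin_cases r
  · simp [Consts.rel, e1]
  · simp [Consts.rel, e1]
  · simp [Consts.rel, e2]
  · simp [Consts.rel, e3]
  · simp [Consts.rel, mul_comm (pB (Pi.single k 1))]
  · simp [Consts.rel, e2, e3, mul_assoc]
  · simp [Consts.rel, e2]
  · have : ∑ x, ∑ y, (∑ α, sB (a α) x * sB (b α) y) *
        sB (pB (Pi.single x 1) * (pB (Pi.single y 1) * pB (Pi.single k 1))) l =
        ϖ ^ c * sB (pB (Pi.single k 1)) l := by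
      have h1 : ∀ α, ∑ x, ∑ y, (sB (a α) x * sB (b α) y) *
        sB (pB (Pi.single x 1) * (pB (Pi.single y 1) * pB (Pi.single k 1))) l =
          sB (a α * b α * pB (Pi.single k 1)) l := fun α => by
        rw [mul_assoc, ← e2]
        refine Finset.sum_congr rfl fun x _ => ?_
        rw [mul_left_comm, ← e2, Finset.mul_sum]
        exact Finset.sum_congr rfl fun y _ => by rw [mul_assoc, mul_left_comm (pB _)]
      simp only [Finset.sum_mul]
      rw [Finset.sum_congr rfl fun x _ => Finset.sum_comm, Finset.sum_comm]
      rw [Finset.sum_congr rfl fun α _ => h1 α, ← Finset.sum_apply, ← map_sum, ← Finset.sum_mul,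
        htr, ← Algebra.smul_def]
      simp
    simp [Consts.rel, e3, this]
  · have h1 : ∑ x, (∑ α, sB (a α) x * sB (b α) l) * sB (pB (Pi.single j 1) * pB (Pi.single x 1)) k
        = ∑ α, sB (pB (Pi.single j 1) * a α) k * sB (b α) l := by
      simp only [Finset.sum_mul]
      rw [Finset.sum_comm]
      refine Finset.sum_congr rfl fun α _ => ?_
      rw [← e3, Finset.sum_mul]
      exact Finset.sum_congr rfl fun x _ => by ring
    have h2 : ∑ y, (∑ α, sB (a α) k * sB (b α) y) * sB (pB (Pi.single y 1) * pB (Pi.single j 1)) l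
        = ∑ α, sB (a α) k * sB (b α * pB (Pi.single j 1)) l := by
      simp only [Finset.sum_mul]
      rw [Finset.sum_comm]
      refine Finset.sum_congr rfl fun α _ => ?_
      rw [← e2, Finset.mul_sum]
      exact Finset.sum_congr rfl fun x _ => by ring
    have h3 := congrArg (TensorProduct.lift ((LinearMap.mul S S).compl₁₂
      (LinearMap.proj k ∘ₗ sB) (LinearMap.proj l ∘ₗ sB))) (hcas (pB (Pi.single j 1)))
    have h4 : ∑ α, sB (pB (Pi.single j 1) * a α) k * sB (b α) l =
      ∑ α, sB (a α) k * sB (b α * pB (Pi.single j 1)) l := by simpa using h3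
    simp [Consts.rel, h1, h2, h4]

end Compare

/-! ### The Casimir element of a rig-étale algebra -/

section FromEtale

variable {S : Type*} [CommRing S] {ϖ : S}

lemma mk_injective {M : Type*} [AddCommGroup M] [Module S M] (tf : ∀ x : M, ϖ • x = 0 → x = 0) :
    Function.Injective (TensorProduct.mk S (Localization.Away ϖ) M 1) := fun x y h => by
  obtain ⟨⟨_, k, rfl⟩, hk⟩ :=
    (IsLocalizedModule.eq_iff_exists (Submonoid.powers ϖ) (TensorProduct.mk S _ M 1)).1 h
  exact tf_cancel tf k hk

/-- The separability idempotent of `B[1/ϖ]`, multiplied by a large power of `ϖ`, is an exact Casimir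
element of `B`. -/
theorem exists_casimir (hS : Cpl ϖ S) {B : Type*} [CommRing B] [Algebra S B] [Module.Finite S B]
    [Module.Projective S B]
    (hEt : Algebra.Etale (Localization.Away ϖ) (Localization.Away ϖ ⊗[S] B)) :
    ∃ (c m : ℕ) (a b : Fin m → B), ∑ j, a j * b j = algebraMap S B (ϖ ^ c) ∧
      ∀ x, ∑ j, (x * a j) ⊗ₜ[S] b j = ∑ j, a j ⊗ₜ[S] (b j * x) := by
  let L := Localization.Away ϖ
  let T := (L ⊗[S] B) ⊗[L] (L ⊗[S] B)
  obtain ⟨t, ht, ht1⟩ :=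
    (Algebra.FormallyUnramified.iff_exists_tensorProduct (R := L) (S := L ⊗[S] B)).1 inferInstance
  let ψ := TensorProduct.AlgebraTensorModule.distribBaseChange S L B B
  let ι : B →ₐ[S] L ⊗[S] B := Algebra.TensorProduct.includeRight
  let i₁ : L ⊗[S] B →ₐ[S] T := (Algebra.TensorProduct.includeLeft : L ⊗[S] B →ₐ[L] T).restrictScalars S
  let i₂ : L ⊗[S] B →ₐ[S] T :=
    (Algebra.TensorProduct.includeRight : L ⊗[S] B →ₐ[L] T).restrictScalars S
  let Φ : B ⊗[S] B →ₐ[S] T :=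
    Algebra.TensorProduct.lift (i₁.comp ι) (i₂.comp ι) fun x y => mul_comm (i₁ (ι x)) (i₂ (ι y))
  have hΦt : ∀ x y : B, Φ (x ⊗ₜ y) = ((1 : L) ⊗ₜ[S] x) ⊗ₜ[L] ((1 : L) ⊗ₜ[S] y) := fun x y => by
    have h1 : Φ (x ⊗ₜ y) = i₁ (ι x) * i₂ (ι y) := Algebra.TensorProduct.lift_tmul _ _ _ x y
    have h2 : i₁ (ι x) = ((1 : L) ⊗ₜ[S] x) ⊗ₜ[L] 1 := rfl
    have h3 : i₂ (ι y) = 1 ⊗ₜ[L] ((1 : L) ⊗ₜ[S] y) := rfl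
    rw [h1, h2, h3, Algebra.TensorProduct.tmul_mul_tmul, one_mul, mul_one]
  have hΦ : ∀ z, Φ z = ψ (1 ⊗ₜ[S] z) := fun z => by
    induction z with
    | zero => simp
    | add x y hx hy => rw [map_add, hx, hy, TensorProduct.tmul_add, map_add]
    | tmul x y => rw [hΦt]; simp [ψ]
  have tfA : ∀ x : B ⊗[S] B, ϖ • x = 0 → x = 0 := (hS.of_projective (M := B ⊗[S] B)).tf
  have tfB : ∀ x : B, ϖ • x = 0 → x = 0 := (hS.of_projective (M := B)).tf
  -- `B ⊗ B` is finite projective, so torsion-free, and embeds into its localization `T`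
  have Φinj : Function.Injective Φ := fun x y h => by
    rw [hΦ, hΦ] at h
    exact mk_injective (S := S) (M := B ⊗[S] B) (ϖ := ϖ) tfA (ψ.injective h)
  obtain ⟨⟨σ, _, c, rfl⟩, hσ⟩ := IsLocalizedModule.surj (Submonoid.powers ϖ)
    (TensorProduct.mk S L (B ⊗[S] B) 1) (ψ.symm t)
  have hσ' : Φ σ = ϖ ^ c • t := by
    rw [hΦ]
    have := congrArg ψ hσ
    rw [Submonoid.smul_def] at this
    have h2 : ψ (ϖ ^ c • ψ.symm t) = ϖ ^ c • t := by
      rw [← algebraMap_smul L (ϖ ^ c) (ψ.symm t), map_smul, ψ.apply_symm_apply, algebraMap_smul]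
    exact this.symm.trans h2
  have hcas : ∀ x : B, (x ⊗ₜ[S] 1) * σ = (1 ⊗ₜ[S] x) * σ := fun x => Φinj <| by
    rw [map_mul, map_mul, hσ', mul_smul_comm, mul_smul_comm]
    congr 1
    have := ht (1 ⊗ₜ x)
    rw [sub_mul, sub_eq_zero] at this
    rw [hΦt, hΦt]
    exact this.symm
  have htr : Algebra.TensorProduct.lmul' S σ = algebraMap S B (ϖ ^ c) := by
    refine mk_injective (S := S) (M := B) (ϖ := ϖ) tfB ?_
    have h1 : ∀ z : B ⊗[S] B, Algebra.TensorProduct.lmul' L (Φ z) =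
        (1 : L) ⊗ₜ[S] (Algebra.TensorProduct.lmul' S z) := fun z => by
      induction z with
      | zero => simp
      | add x y hx hy => rw [map_add, map_add, hx, hy, map_add, TensorProduct.tmul_add]
      | tmul x y => rw [hΦt]; simp
    have h2 := h1 σ
    have h3 : Algebra.TensorProduct.lmul' L (ϖ ^ c • t) = ϖ ^ c • (1 : L ⊗[S] B) := by
      rw [← algebraMap_smul L (ϖ ^ c) t, map_smul, ht1, algebraMap_smul]
    rw [hσ', h3] at h2
    rw [TensorProduct.mk_apply, TensorProduct.mk_apply, ← h2, Algebra.algebraMap_eq_smul_one,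
      TensorProduct.tmul_smul, Algebra.TensorProduct.one_def]
  obtain ⟨m, a, b, rfl⟩ := TensorProduct.exists_sum_tmul_eq σ
  refine ⟨c, m, a, b, by simpa using htr, fun x => ?_⟩
  have := hcas x
  simpa [Finset.mul_sum, mul_comm x] using this

end FromEtale

/-! ### The adic completion with respect to a regular element -/

section Completion

variable {A : Type*} [CommRing A] {a : A}

/-- The `a`-adic completion of `A`. -/
abbrev Hat (a : A) : Type _ := AdicCompletion (Ideal.span {a}) A

lemma mem_pw_completion {N : ℕ} {x : Hat a} :
    x ∈ pw (algebraMap A (Hat a) a) N (Hat a) ↔ AdicCompletion.eval (Ideal.span {a}) A N x = 0 := by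
  rw [← LinearMap.mem_ker, ← AdicCompletion.pow_smul_top_eq_ker_eval
    (Submodule.fg_span_singleton a), span_pow_smul_top, mem_pw, mem_pw]
  simp only [← map_pow, algebraMap_smul]

lemma exists_approx (s : Hat a) (N : ℕ) :
    ∃ x : A, algebraMap A (Hat a) x - s ∈ pw (algebraMap A (Hat a) a) N (Hat a) := by
  obtain ⟨x, hx⟩ := Submodule.mkQ_surjective _ (AdicCompletion.eval (Ideal.span {a}) A N s)
  refine ⟨x, mem_pw_completion.2 ?_⟩
  rw [map_sub, sub_eq_zero, ← hx, AdicCompletion.algebraMap_apply, AdicCompletion.eval_of]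
  rfl

lemma mem_of_completion {N : ℕ} {x : A}
    (hx : algebraMap A (Hat a) x ∈ pw (algebraMap A (Hat a) a) N (Hat a)) :
    x ∈ pw a N A := by
  rw [mem_pw_completion, AdicCompletion.algebraMap_apply, AdicCompletion.eval_of] at hx
  rw [← span_pow_smul_top]
  exact (Submodule.Quotient.mk_eq_zero _).1 hx

/-- The completion of a torsion-free ring is complete and torsion-free: if `a x = 0` and `y`
approximates `x` modulo `a ^ (1 + k)`, then `a y` is divisible by `a ^ (1 + k)`, so `y` is divisible
by `a ^ k`, and so is `x`. -/
lemma cpl_completion (tf : ∀ x : A, a • x = 0 → x = 0) : Cpl (algebraMap A (Hat a) a) (Hat a) := by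
  have h1 : IsAdicComplete (Ideal.span {a}) (Hat a) :=
    AdicCompletion.isAdicComplete (Submodule.fg_span_singleton a)
  have h2 : IsAdicComplete (Ideal.span {algebraMap A (Hat a) a}) (Hat a) := by
    rw [← Set.image_singleton, ← Ideal.map_span]
    exact (IsAdicComplete.map_algebraMap_iff _ _).2 h1
  have haus : ∀ x : (Hat a), (∀ k, x ∈ pw (algebraMap A (Hat a) a) k (Hat a)) → x = 0 := fun x hx =>
    IsHausdorff.haus (I := Ideal.span {algebraMap A (Hat a) a}) inferInstance x fun n => by
      rw [SModEq.zero, span_pow_smul_top]; exact hx n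
  refine Cpl.of_isAdicComplete fun x hx => haus x fun k => ?_
  obtain ⟨y, hy⟩ := exists_approx x (1 + k)
  have h3 : algebraMap A (Hat a) (a * y) ∈ pw (algebraMap A (Hat a) a) (1 + k) (Hat a) := by
    have := (pw (algebraMap A (Hat a) a) (1 + k) (Hat a)).smul_mem (algebraMap A (Hat a) a) hy
    rwa [smul_sub, hx, sub_zero, smul_eq_mul, ← map_mul] at this
  have h4 : y ∈ pw a k A := pw_cancel tf 1 k (by simpa using mem_of_completion h3)
  obtain ⟨z, rfl⟩ := mem_pw.1 h4
  have h5 : algebraMap A (Hat a) (a ^ k • z) ∈ pw (algebraMap A (Hat a) a) k (Hat a) :=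
    ⟨algebraMap A (Hat a) z, by simp⟩
  have := sub_mem h5 (pw_mono (by lia : k ≤ 1 + k) hy)
  rwa [sub_sub_cancel] at this

end Completion

/-! ### Approximation at a finite stage -/

section Descent

lemma rel_sub_mem {T : Type*} [CommRing T] {π : T} {n c N : ℕ} (C D : Consts n T)
    (hE : ∀ i j, D.E i j - C.E i j ∈ pw π N T) (hM : ∀ i j k, D.M i j k - C.M i j k ∈ pw π N T)
    (hu : ∀ i, D.u i - C.u i ∈ pw π N T) (hσ : ∀ i j, D.σ i j - C.σ i j ∈ pw π N T)
    (r : Fin 9) (i j k l : Fin n) : D.rel π c r i j k l - C.rel π c r i j k l ∈ pw π N T := by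
  have hmem : ∀ x y : T, x - y ∈ pw π N T ↔
      Ideal.Quotient.mk (Ideal.span {π ^ N}) x = Ideal.Quotient.mk (Ideal.span {π ^ N}) y :=
    fun x y => by
      rw [Ideal.Quotient.eq, Ideal.mem_span_singleton', mem_pw]
      simp [mul_comm]
  rw [hmem, Consts.map_rel, Consts.map_rel]
  congr 1
  simp only [Consts.map, Consts.mk.injEq]
  simp only [hmem] at hE hM hu hσ
  simp [hE, hM, hu, hσ]

variable {O : Type u} [CommRing O] {π : O}
  {ι : Type u'} [Preorder ι] [IsDirected ι (· ≤ ·)] [Nonempty ι]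
  {R : ι → Type v} [∀ i, CommRing (R i)] [∀ i, Algebra O (R i)]
  {f : ∀ i j, i ≤ j → (R i →ₐ[O] R j)}
  {A : Type w} [CommRing A] [Algebra O A] {g : ∀ i, R i →ₐ[O] A}
  {S : Type*} [CommRing S] [Algebra A S]

lemma eventually_pw
    (hf_comp : ∀ i j k (hij : i ≤ j) (hjk : j ≤ k),
      (f j k hjk).comp (f i j hij) = f i k (hij.trans hjk))
    (hg : ∀ i j (h : i ≤ j), (g j).comp (f i j h) = g i)
    (hsurj : ∀ x : A, ∃ i, x ∈ Set.range (g i))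
    (hker : ∀ i (x y : R i), g i x = g i y → ∃ j, ∃ h : i ≤ j, f i j h x = f i j h y)
    {N : ℕ} {i : ι} {z : R i} (hz : g i z ∈ pw (algebraMap O A π) N A) :
    ∀ᶠ j in Filter.atTop, ∀ h : i ≤ j, f i j h z ∈ pw (algebraMap O (R j) π) N (R j) := by
  obtain ⟨y, hy⟩ := mem_pw.1 hz
  obtain ⟨k, y, rfl⟩ := hsurj y
  obtain ⟨l, hil, hkl⟩ := exists_ge_ge i k
  have hg' : ∀ i j (h : i ≤ j) x, g j (f i j h x) = g i x := fun i j h x =>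
    DFunLike.congr_fun (hg i j h) x
  obtain ⟨m, hlm, hm⟩ := hker l (f i l hil z) (algebraMap O (R l) π ^ N * f k l hkl y) <| by
    simp [hg', ← hy]
  filter_upwards [Filter.eventually_ge_atTop m] with j hj h
  have hf' : f i j h z = f m j hj (f l m hlm (f i l hil z)) := by
    rw [← hf_comp i l j hil (hlm.trans hj), ← hf_comp l m j hlm hj]
    rfl
  exact ⟨f m j hj (f l m hlm (f k l hkl y)), by simp [hf', hm]⟩

/-- The ring map from a finite stage to the completion. -/
def toCompl (S : Type*) [CommRing S] [Algebra A S] (g : ∀ i, R i →ₐ[O] A) (i : ι) : R i →+* S :=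
  (algebraMap A S).comp (g i).toRingHom

lemma eventually_approx
    (hg : ∀ i j (h : i ≤ j), (g j).comp (f i j h) = g i)
    (hsurj : ∀ x : A, ∃ i, x ∈ Set.range (g i)) {ϖ : S} {N : ℕ} (s : S)
    (happ : ∃ x : A, algebraMap A S x - s ∈ pw ϖ N S) :
    ∀ᶠ j in Filter.atTop, ∃ r : R j, s - toCompl S g j r ∈ pw ϖ N S := by
  obtain ⟨x, hx⟩ := happ
  obtain ⟨i, r, rfl⟩ := hsurj x
  filter_upwards [Filter.eventually_ge_atTop i] with j hj
  refine ⟨f i j hj r, ?_⟩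
  have : toCompl S g j (f i j hj r) = algebraMap A S (g i r) := by
    rw [← hg i j hj]; rfl
  rw [this, ← neg_sub]
  exact neg_mem hx

/-- Structure constants over the completion satisfying the relations can be approximated by
structure constants, over some stage, satisfying the relations to the same order. -/
theorem exists_consts
    (hf_comp : ∀ i j k (hij : i ≤ j) (hjk : j ≤ k),
      (f j k hjk).comp (f i j hij) = f i k (hij.trans hjk))
    (hg : ∀ i j (h : i ≤ j), (g j).comp (f i j h) = g i)
    (hsurj : ∀ x : A, ∃ i, x ∈ Set.range (g i))
    (hker : ∀ i (x y : R i), g i x = g i y → ∃ j, ∃ h : i ≤ j, f i j h x = f i j h y)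
    {ϖ : S} (hϖ : algebraMap A S (algebraMap O A π) = ϖ) (N : ℕ)
    (happ : ∀ s : S, ∃ x : A, algebraMap A S x - s ∈ pw ϖ N S)
    (hmem : ∀ x : A, algebraMap A S x ∈ pw ϖ N S → x ∈ pw (algebraMap O A π) N A)
    {n c : ℕ} (D : Consts n S) (hD : ∀ r i j k l, D.rel ϖ c r i j k l = 0) :
    ∃ (j : ι) (C : Consts n (R j)),
      (∀ r i' j' k' l', C.rel (algebraMap O (R j) π) c r i' j' k' l' ∈
        pw (algebraMap O (R j) π) N (R j)) ∧
      (∀ i l, D.E i l - toCompl S g j (C.E i l) ∈ pw ϖ N S) ∧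
      (∀ i k l, D.M i k l - toCompl S g j (C.M i k l) ∈ pw ϖ N S) ∧
      (∀ l, D.u l - toCompl S g j (C.u l) ∈ pw ϖ N S) := by
  have app := fun s => eventually_approx (g := g) hg hsurj (ϖ := ϖ) (N := N) s (happ s)
  obtain ⟨i, hE, hM, hu, hσ⟩ := (((Filter.eventually_all.2 fun i => Filter.eventually_all.2 fun j =>
    app (D.E i j)).and ((Filter.eventually_all.2 fun i => Filter.eventually_all.2 fun j =>
      Filter.eventually_all.2 fun k => app (D.M i j k)).and ((Filter.eventually_all.2 fun i =>
        app (D.u i)).and (Filter.eventually_all.2 fun i => Filter.eventually_all.2 fun j =>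
          app (D.σ i j))))).exists)
  choose E hE using hE
  choose M hM using hM
  choose u hu using hu
  choose σ hσ using hσ
  let C : Consts n (R i) := ⟨E, M, u, σ⟩
  have hπ : ∀ i, toCompl S g i (algebraMap O (R i) π) = ϖ := fun i => by
    simp [toCompl, ← hϖ]
  have hC : ∀ r i' j' k' l', g i (C.rel (algebraMap O (R i) π) c r i' j' k' l') ∈
      pw (algebraMap O A π) N A := fun r i' j' k' l' => hmem _ <| by
    have h1 := rel_sub_mem (c := c) (C.map (toCompl S g i)) D hE hM hu hσ r i' j' k' l'
    rw [hD, zero_sub, neg_mem_iff, ← hπ i, ← Consts.map_rel, hπ] at h1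
    exact h1
  obtain ⟨j, hj, hij⟩ := ((Filter.eventually_all.2 fun r => Filter.eventually_all.2 fun i' =>
    Filter.eventually_all.2 fun j' => Filter.eventually_all.2 fun k' =>
      Filter.eventually_all.2 fun l' => eventually_pw hf_comp hg hsurj hker
        (hC r i' j' k' l')).and (Filter.eventually_ge_atTop i)).exists
  have hto : ∀ x, toCompl S g j (f i j hij x) = toCompl S g i x := fun x => by
    have : g j (f i j hij x) = g i x := DFunLike.congr_fun (hg i j hij) x
    simp [toCompl, this]
  refine ⟨j, C.map (f i j hij).toRingHom, fun r i' j' k' l' => ?_, fun i' l => ?_,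
    fun i' k l => ?_, fun l => ?_⟩
  · have := hj r i' j' k' l' hij
    have h2 := Consts.map_rel (f i j hij).toRingHom (algebraMap O (R i) π) c C r i' j' k' l'
    have h3 : (f i j hij).toRingHom (algebraMap O (R i) π) = algebraMap O (R j) π :=
      (f i j hij).commutes π
    rw [h3] at h2
    rw [← h2]
    exact this
  · simpa [Consts.map, hto] using hE i' l
  · simpa [Consts.map, hto] using hM i' k l
  · simpa [Consts.map, hto] using hu l

end Descent

end RigEtale

/-! ### Descent to a finite stage -/

/-- Proposition 4.16 of the paper (decompletion of finite locally free rig-étale algebras).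
Let `(R i)` be a directed system of `π`-adically complete and separated `π`-torsion-free
`O`-algebras, `Rinf` its colimit (characterized concretely by the compatible maps `g i` being
jointly surjective with the usual equality-detection property) and `Rhat` the `π`-adic completion
of `Rinf`.  Then every finite projective `Rhat`-algebra `B` with `B[1/π]` étale over `Rhat[1/π]`
descends to some finite level: it is the base change of a finite projective `R i₀`-algebra `B₀`
with `B₀[1/π]` étale over `R i₀[1/π]`. -/
theorem stmt_11 {O : Type u} [CommRing O] (π : O)
    {ι : Type u'} [Preorder ι] [IsDirected ι (· ≤ ·)] [Nonempty ι]
    (R : ι → Type v) [∀ i, CommRing (R i)] [∀ i, Algebra O (R i)]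
    (f : ∀ i j, i ≤ j → (R i →ₐ[O] R j))
    (hf_id : ∀ i, f i i le_rfl = AlgHom.id O (R i))
    (hf_comp : ∀ i j k (hij : i ≤ j) (hjk : j ≤ k),
      (f j k hjk).comp (f i j hij) = f i k (hij.trans hjk))
    (hcpl : ∀ i, IsAdicComplete (Ideal.span {algebraMap O (R i) π}) (R i))
    (hreg : ∀ i, algebraMap O (R i) π ∈ nonZeroDivisors (R i))
    (Rinf : Type v) [CommRing Rinf] [Algebra O Rinf]
    (g : ∀ i, R i →ₐ[O] Rinf)
    (hg : ∀ i j (h : i ≤ j), (g j).comp (f i j h) = g i)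
    (hsurj : ∀ x : Rinf, ∃ i, x ∈ Set.range (g i))
    (hker : ∀ i (x y : R i), g i x = g i y → ∃ j, ∃ h : i ≤ j, f i j h x = f i j h y)
    (B : Type v) [CommRing B]
    [Algebra (AdicCompletion (Ideal.span {algebraMap O Rinf π}) Rinf) B]
    [Module.Finite (AdicCompletion (Ideal.span {algebraMap O Rinf π}) Rinf) B]
    [Module.Projective (AdicCompletion (Ideal.span {algebraMap O Rinf π}) Rinf) B]
    (hEt : Algebra.Etale
      (Localization.Away
        (algebraMap Rinf (AdicCompletion (Ideal.span {algebraMap O Rinf π}) Rinf)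
          (algebraMap O Rinf π)))
      ((Localization.Away
        (algebraMap Rinf (AdicCompletion (Ideal.span {algebraMap O Rinf π}) Rinf)
          (algebraMap O Rinf π))) ⊗[AdicCompletion (Ideal.span {algebraMap O Rinf π}) Rinf] B)) :
    ∃ (i₀ : ι) (B₀ : Type v) (_ : CommRing B₀) (_ : Algebra (R i₀) B₀),
      Module.Finite (R i₀) B₀ ∧ Module.Projective (R i₀) B₀ ∧
      Algebra.Etale (Localization.Away (algebraMap O (R i₀) π))
        ((Localization.Away (algebraMap O (R i₀) π)) ⊗[R i₀] B₀) ∧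
      ∃ _ : Algebra (R i₀) (AdicCompletion (Ideal.span {algebraMap O Rinf π}) Rinf),
        algebraMap (R i₀) (AdicCompletion (Ideal.span {algebraMap O Rinf π}) Rinf) =
          (algebraMap Rinf (AdicCompletion (Ideal.span {algebraMap O Rinf π}) Rinf)).comp
            (g i₀).toRingHom ∧
        Nonempty (B ≃ₐ[AdicCompletion (Ideal.span {algebraMap O Rinf π}) Rinf]
          ((AdicCompletion (Ideal.span {algebraMap O Rinf π}) Rinf) ⊗[R i₀] B₀)) := by
  open RigEtale in
  set S := AdicCompletion (Ideal.span {algebraMap O Rinf π}) Rinf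
  -- `π` is a nonzerodivisor on the colimit
  have tf : ∀ x : Rinf, algebraMap O Rinf π • x = 0 → x = 0 := fun x hx => by
    obtain ⟨i, y, rfl⟩ := hsurj x
    obtain ⟨j, hij, hj⟩ := hker i (algebraMap O (R i) π * y) 0 <| by
      simpa using hx
    rw [map_mul, map_zero, AlgHom.commutes] at hj
    have h0 : f i j hij y = 0 := ((mem_nonZeroDivisors_iff.1 (hreg j)).1 _ hj)
    rw [← hg i j hij, AlgHom.comp_apply, h0, map_zero]
  have hS := cpl_completion tf
  obtain ⟨c, m, a, b, htr, hcas⟩ := exists_casimir hS hEt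
  obtain ⟨n, pB, sB, -, -, hps⟩ := Module.Finite.exists_comp_eq_id_of_projective S B
  have hB : ∀ x, pB (sB x) = x := fun x => DFunLike.congr_fun hps x
  obtain ⟨j, C, hC, hE, hM, hu⟩ := exists_consts hf_comp hg hsurj hker rfl (c + (2 * c + 1))
    (fun s => exists_approx s _) (fun x => mem_of_completion) _
    (rel_eq_zero _ htr hcas pB sB hB)
  have hRj : Cpl (algebraMap O (R j) π) (R j) := by
    have := hcpl j
    exact Cpl.of_isAdicComplete fun x hx => (mem_nonZeroDivisors_iff.1 (hreg j)).1 _ hx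
  have hJ : algebraMap O (R j) π ∈ (⊥ : Ideal (R j)).jacobson := by
    have := hcpl j
    exact IsAdicComplete.le_jacobson_bot (Ideal.span {algebraMap O (R j) π})
      (Ideal.mem_span_singleton_self _)
  obtain ⟨B₀, _, _, p, s, hfin, hproj, het, hps', hsp, hmul, hone⟩ :=
    exists_algebra_of_rel hRj hJ c C hC
  let : Algebra (R j) S := (toCompl S g j).toAlgebra
  have hϖ : algebraMap (R j) S (algebraMap O (R j) π) =
      algebraMap Rinf S (algebraMap O Rinf π) :=
    congrArg (algebraMap Rinf S) ((g j).commutes π)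
  have hle : 2 * c + 1 ≤ c + (2 * c + 1) := by lia
  refine ⟨j, B₀, _, _, hfin, hproj, het, inferInstance, rfl, ?_⟩
  rw [← hϖ] at hS htr hE hM hu
  exact nonempty_algEquiv hS htr hcas C pB sB hB (fun i l => pw_mono hle (hE i l))
    (fun i k l => pw_mono hle (hM i k l)) (fun l => pw_mono hle (hu l)) p s hps' hsp hmul hone
end
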